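/- arXiv:math/0104075 — 2 statements merged into one kernel-verified Lean document; each statement's English description precedes it below -/
import Mathlib

section
/- Let k be a commutative ring, A an associative unital k-algebra, H a Hopf k-algebra with a weak action (h,a) ↦ a^h on A, and f : H⊗H → A a k-linear map. Define a product on A⊗H by (a⊗h)(b⊗l) = a b^{h^{(1)}} f(h^{(2)}, l^{(1)}) ⊗ h^{(3)} l^{(2)}. Then this product is associative with 1⊗1 as two-sided identity if and only if: (i) f is normal, i.e. f(h,1) = f(1,h) = ε(h)1_A for all h ∈ H; (ii) f satisfies the cocycle condition f(l^{(1)},m^{(1)})^{h^{(1)}} f(h^{(2)}, l^{(2)}m^{(2)}) = f(h^{(1)},l^{(1)}) f(h^{(2)}l^{(2)}, m) for all h,l,m ∈ H; and (iii) the twisted module condition (a^{l^{(1)}})^{h^{(1)}} f(h^{(2)}, l^{(2)}) = f(h^{(1)},l^{(1)}) a^{h^{(2)}l^{(2)}} holds for all h,l ∈ H and a ∈ A. -/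
open TensorProduct

noncomputable section

namespace HopfCrossed

variable (k : Type) [CommRing k]

def TpowCat (V : ModuleCat k) : ℕ → ModuleCat k
  | 0 => ModuleCat.of k k
  | n + 1 => ModuleCat.of k (V ⊗[k] (TpowCat V n))

abbrev Tpow (V : Type) [AddCommGroup V] [Module k V] (n : ℕ) : Type :=
  TpowCat k (ModuleCat.of k V) n

def tp {V : Type} [AddCommGroup V] [Module k V] : ∀ {n : ℕ}, (Fin n → V) → Tpow k V n
  | 0, _ => (1 : k)
  | _ + 1, v => (v 0) ⊗ₜ[k] (tp fun i => v i.succ)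

section Coalg
variable {H : Type} [AddCommGroup H] [Module k H]

def itComul [Coalgebra k H] : ∀ n : ℕ, H →ₗ[k] Tpow k H (n + 1)
  | 0 => (TensorProduct.rid k H).symm.toLinearMap
  | n + 1 =>
      (TensorProduct.map LinearMap.id (itComul n)) ∘ₗ (Coalgebra.comul (R := k))

def SRep [Coalgebra k H] (n : ℕ) (h : H) (N : ℕ) (u : Fin N → Fin (n + 1) → H) : Prop :=
  itComul k n h = ∑ i, tp k (u i)

def iterAct {A : Type} [AddCommGroup A] [Module k A]
    (act : H →ₗ[k] A →ₗ[k] A) : ∀ {s : ℕ}, (Fin s → H) → A → A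
  | 0, _, a => a
  | _ + 1, h, a => act (h 0) (iterAct act (fun i => h i.succ) a)

end Coalg

/-- A weak action of a Hopf algebra `H` on a `k`-algebra `A` (Blattner–Cohen–Montgomery,
Doi–Takeuchi), written `act h a = a^h`. -/
structure WeakAction (k A H : Type) [CommRing k] [Ring A] [Algebra k A] [Ring H] [HopfAlgebra k H] : Type where
  act : H →ₗ[k] A →ₗ[k] A
  act_mul : ∀ (h : H) (a b : A) (N : ℕ) (u : Fin N → Fin 2 → H), SRep k 1 h N u →
    act h (a * b) = ∑ i, act (u i 0) a * act (u i 1) b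
  act_one : ∀ h : H, act h 1 = Coalgebra.counit (R := k) h • (1 : A)
  one_act : ∀ a : A, act 1 a = a

variable {A H : Type} [Ring A] [Algebra k A] [Ring H] [HopfAlgebra k H]
variable {k}

/-- Normality of the cocycle `f`. -/
def IsNormal (f : H →ₗ[k] H →ₗ[k] A) : Prop :=
  ∀ h : H, f h 1 = Coalgebra.counit (R := k) h • (1 : A) ∧
    f 1 h = Coalgebra.counit (R := k) h • (1 : A)

/-- The cocycle condition
`f(l⁽¹⁾,m⁽¹⁾)^{h⁽¹⁾} f(h⁽²⁾, l⁽²⁾m⁽²⁾) = f(h⁽¹⁾,l⁽¹⁾) f(h⁽²⁾l⁽²⁾, m)`. -/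
def IsCocycle (W : WeakAction k A H) (f : H →ₗ[k] H →ₗ[k] A) : Prop :=
  ∀ (h l m : H) (N₁ N₂ N₃ : ℕ) (u : Fin N₁ → Fin 2 → H) (v : Fin N₂ → Fin 2 → H)
    (w : Fin N₃ → Fin 2 → H),
    SRep k 1 h N₁ u → SRep k 1 l N₂ v → SRep k 1 m N₃ w →
    (∑ i, ∑ j, ∑ p, W.act (u i 0) (f (v j 0) (w p 0)) * f (u i 1) (v j 1 * w p 1)) =
      ∑ i, ∑ j, f (u i 0) (v j 0) * f (u i 1 * v j 1) m

/-- The twisted module condition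
`(a^{l⁽¹⁾})^{h⁽¹⁾} f(h⁽²⁾,l⁽²⁾) = f(h⁽¹⁾,l⁽¹⁾) a^{h⁽²⁾l⁽²⁾}`. -/
def IsTwistedModule (W : WeakAction k A H) (f : H →ₗ[k] H →ₗ[k] A) : Prop :=
  ∀ (h l : H) (a : A) (N₁ N₂ : ℕ) (u : Fin N₁ → Fin 2 → H) (v : Fin N₂ → Fin 2 → H),
    SRep k 1 h N₁ u → SRep k 1 l N₂ v →
    (∑ i, ∑ j, W.act (u i 0) (W.act (v j 0) a) * f (u i 1) (v j 1)) =
      ∑ i, ∑ j, f (u i 0) (v j 0) * W.act (u i 1 * v j 1) a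


/-- `IsCrossedMul W f mul` says that the bilinear map `mul` on `A ⊗ H` is given by the
crossed product formula `(a ⊗ h)(b ⊗ l) = a b^{h⁽¹⁾} f(h⁽²⁾, l⁽¹⁾) ⊗ h⁽³⁾ l⁽²⁾`. -/
def IsCrossedMul (W : WeakAction k A H) (f : H →ₗ[k] H →ₗ[k] A)
    (mul : (A ⊗[k] H) →ₗ[k] (A ⊗[k] H) →ₗ[k] (A ⊗[k] H)) : Prop :=
  ∀ (a b : A) (h l : H) (N M : ℕ) (u : Fin N → Fin 3 → H) (v : Fin M → Fin 2 → H),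
    SRep k 2 h N u → SRep k 1 l M v →
    mul (a ⊗ₜ[k] h) (b ⊗ₜ[k] l) =
      ∑ i, ∑ j, (a * W.act (u i 0) b * f (u i 1) (v j 0)) ⊗ₜ[k] (u i 2 * v j 1)

/-!
For a coalgebra `C`, the convolution algebra `Hom(C, A)` acts on `Hom(C, A ⊗ H)`, and the Sweedler
identities of the theorem become identities between convolution products. Every product of
generators `1 ⊗ h` has the form `g ⋆ (1 ⊗ φ)` with `φ : C → H` a coalgebra map, and `id ⊗ ε`
recovers the coefficient `g`. Hence comparing coefficients turns normality into the unit laws on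
generators, the cocycle condition into associativity on the triples `1 ⊗ h, 1 ⊗ l, 1 ⊗ m`, and the
twisted module condition into associativity on the triples `1 ⊗ h, 1 ⊗ l, a ⊗ 1`. Conversely, these
cases give associativity in general, because the product is `A`-linear in its left factor and
`(1 ⊗ h)(b • y) = b^{h⁽¹⁾} • ((1 ⊗ h⁽²⁾) y)`.
-/

open Coalgebra

section ConvolutionAction

variable {R A C D X Y : Type*} [CommSemiring R] [Semiring A] [Algebra R A]
variable [AddCommMonoid C] [Module R C] [Coalgebra R C]
variable [AddCommMonoid D] [Module R D] [Coalgebra R D]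
variable [AddCommMonoid X] [Module R X] [Module A X] [IsScalarTower R A X]
variable [AddCommMonoid Y] [Module R Y] [Module A Y] [IsScalarTower R A Y]

/-- The action `(g ⋆ L)(c) = g(c⁽¹⁾) • L(c⁽²⁾)` of the convolution algebra `Hom(C, A)` on
`Hom(C, X)`, for `C` a coalgebra and `X` an `A`-module. For `X = A` it is the convolution product;
a single operation is used for both so that `X = A ⊗ H` can be treated before `A ⊗ H` is known
to be an algebra. -/
def convSMul (g : C →ₗ[R] A) (L : C →ₗ[R] X) : C →ₗ[R] X :=
  TensorProduct.lift ((Algebra.lsmul R R X).toLinearMap.compl₁₂ g L) ∘ₗ comul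

local infixr:75 " ⋆ " => convSMul

variable (R A C) in
/-- The unit `c ↦ ε(c) 1` of the convolution algebra `Hom(C, A)`. -/
def convUnit : C →ₗ[R] A := Algebra.linearMap R A ∘ₗ counit

lemma convSMul_apply (g : C →ₗ[R] A) (L : C →ₗ[R] X) {c : C} {ι : Type*} (r : Repr R c ι) :
    (g ⋆ L) c = ∑ i ∈ r.index, g (r.left i) • L (r.right i) := by
  simp [convSMul, ← r.eq]

lemma convSMul_tmul_apply (g : C ⊗[R] D →ₗ[R] A) (L : C ⊗[R] D →ₗ[R] X) {c : C} {d : D}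
    {ι κ : Type*} (r : Repr R c ι) (s : Repr R d κ) :
    (g ⋆ L) (c ⊗ₜ d) = ∑ i ∈ r.index, ∑ j ∈ s.index,
      g (r.left i ⊗ₜ s.left j) • L (r.right i ⊗ₜ s.right j) := by
  simp [convSMul, TensorProduct.comul_tmul, ← r.eq, ← s.eq, TensorProduct.sum_tmul,
    TensorProduct.tmul_sum, Finset.sum_comm (s := s.index)]

lemma convSMul_assoc (g g' : C →ₗ[R] A) (L : C →ₗ[R] X) : (g ⋆ g') ⋆ L = g ⋆ g' ⋆ L := by
  ext c
  let r := ℛ R c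
  have coassoc := congrArg (TensorProduct.lift ((Algebra.lsmul R R X).toLinearMap.compl₁₂ g
      (TensorProduct.lift ((Algebra.lsmul R R X).toLinearMap.compl₁₂ g' L))))
    (sum_tmul_tmul_eq r (fun i => ℛ R (r.left i)) (fun i => ℛ R (r.right i)))
  simpa [convSMul_apply _ _ r, convSMul_apply _ _ (ℛ R (r.left _)),
    convSMul_apply _ _ (ℛ R (r.right _)), Finset.sum_smul, Finset.smul_sum, mul_smul] using coassoc

lemma convSMul_convUnit (g : C →ₗ[R] A) : g ⋆ convUnit R A C = g := by
  ext c
  have counit_right := congrArg (TensorProduct.rid R A) (sum_map_tmul_counit_eq g c (repr := ℛ R c))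
  simp only [map_sum, TensorProduct.rid_tmul, one_smul] at counit_right
  simpa [convSMul_apply _ _ (ℛ R c), convUnit, Algebra.smul_def, Algebra.commutes]
    using counit_right

lemma convUnit_convSMul (L : C →ₗ[R] X) : convUnit R A C ⋆ L = L := by
  ext c
  have counit_left := congrArg (TensorProduct.lid R X) (sum_counit_tmul_map_eq L c (repr := ℛ R c))
  simp only [map_sum, TensorProduct.lid_tmul, one_smul] at counit_left
  simpa [convSMul_apply _ _ (ℛ R c), convUnit] using counit_left

lemma convSMul_convSMul_apply (g g' : C →ₗ[R] A) (L : C →ₗ[R] X) {c : C} {ι : Type*}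
    {s : Finset ι} {x y z : ι → C}
    (hc : comul.lTensor C (comul (R := R) c) = ∑ i ∈ s, x i ⊗ₜ (y i ⊗ₜ z i)) :
    (g ⋆ g' ⋆ L) c = ∑ i ∈ s, g (x i) • g' (y i) • L (z i) := by
  let r := ℛ R c
  have expand := congrArg (TensorProduct.lift ((Algebra.lsmul R R X).toLinearMap.compl₁₂ g
      (TensorProduct.lift ((Algebra.lsmul R R X).toLinearMap.compl₁₂ g' L)))) hc
  rw [← r.eq] at expand
  rw [convSMul_apply g _ r]
  simpa [convSMul] using expand

lemma convSMul_comp (φ : D →ₗc[R] C) (g : C →ₗ[R] A) (L : C →ₗ[R] X) :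
    (g ⋆ L) ∘ₗ φ.toLinearMap = (g ∘ₗ φ.toLinearMap) ⋆ (L ∘ₗ φ.toLinearMap) := by
  ext d
  exact (convSMul_apply g L ((ℛ R d).induced φ)).trans
    (convSMul_apply (g ∘ₗ φ.toLinearMap) (L ∘ₗ φ.toLinearMap) (ℛ R d)).symm

lemma convUnit_comp (φ : D →ₗc[R] C) : convUnit R A C ∘ₗ φ.toLinearMap = convUnit R A D := by
  rw [convUnit, LinearMap.comp_assoc, φ.counit_comp, convUnit]

lemma comp_convSMul (E : X →ₗ[A] Y) (g : C →ₗ[R] A) (L : C →ₗ[R] X) :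
    E.restrictScalars R ∘ₗ (g ⋆ L) = g ⋆ (E.restrictScalars R ∘ₗ L) := by
  ext c
  simp [convSMul_apply _ _ (ℛ R c)]

lemma convSMul_apply_one {B : Type*} [Semiring B] [Bialgebra R B] (g : B →ₗ[R] A)
    (L : B →ₗ[R] X) : (g ⋆ L) 1 = g 1 • L 1 := by
  simp [convSMul, Algebra.TensorProduct.one_def]

lemma rid_map_counit_convSMul_tmul (g : C →ₗ[R] A) (L : C ⊗[R] D →ₗ[R] X) (c : C) (d : D) :
    (((TensorProduct.rid R A).toLinearMap ∘ₗ TensorProduct.map g counit) ⋆ L) (c ⊗ₜ d) =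
      (g ⋆ (L ∘ₗ (TensorProduct.mk R C D).flip d)) c := by
  rw [convSMul_tmul_apply _ _ (ℛ R c) (ℛ R d), convSMul_apply _ _ (ℛ R c)]
  refine Finset.sum_congr rfl fun i _ => ?_
  have counit_left := congrArg (fun d' => g ((ℛ R c).left i) • L ((ℛ R c).right i ⊗ₜ d'))
    (sum_counit_smul (ℛ R d))
  simpa [TensorProduct.tmul_sum, Finset.smul_sum, smul_comm (g _)] using counit_left

variable (R A C X) in
/-- `convSMul` as a bilinear map. -/
def convSMulBilin : (C →ₗ[R] A) →ₗ[R] (C →ₗ[R] X) →ₗ[R] C →ₗ[R] X :=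
  LinearMap.mk₂ R convSMul
    (fun g g' L => by ext c; simp [convSMul_apply _ _ (ℛ R c), add_smul, Finset.sum_add_distrib])
    (fun t g L => by ext c; simp [convSMul_apply _ _ (ℛ R c), Finset.smul_sum])
    (fun g L L' => by ext c; simp [convSMul_apply _ _ (ℛ R c), Finset.sum_add_distrib])
    (fun t g L => by ext c; simp [convSMul_apply _ _ (ℛ R c), Finset.smul_sum, smul_comm t])

end ConvolutionAction

local infixr:75 " ⋆ " => convSMul

section CrossedProduct

variable {R A H : Type*} [CommSemiring R] [Semiring A] [Algebra R A] [Semiring H] [Bialgebra R H]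

variable (R A H) in
/-- The inclusion `h ↦ 1 ⊗ h` of `H` in `A ⊗ H`, which generates `A ⊗ H` as an `A`-module. -/
def gen : H →ₗ[R] A ⊗[R] H := TensorProduct.mk R A H 1

@[simp] lemma gen_apply (h : H) : gen R A H h = 1 ⊗ₜ h := rfl

lemma smul_gen (a : A) (h : H) : a • gen R A H h = a ⊗ₜ h := by
  simp [TensorProduct.smul_tmul']

variable (R A H) in
/-- The `A`-linear map `a ⊗ h ↦ ε(h) a`, which recovers `g : C → A` from `g ⋆ (gen ∘ φ)`. -/
def augment : A ⊗[R] H →ₗ[A] A :=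
  TensorProduct.AlgebraTensorModule.lift
    (LinearMap.toSpanSingleton A (H →ₗ[R] A) (convUnit R A H))

lemma augment_comp_gen : (augment R A H).restrictScalars R ∘ₗ gen R A H = convUnit R A H := by
  ext h; simp [augment]

lemma convSMul_gen_comp_inj {C : Type*} [AddCommMonoid C] [Module R C] [Coalgebra R C]
    (φ : C →ₗc[R] H) {g g' : C →ₗ[R] A} :
    g ⋆ (gen R A H ∘ₗ φ.toLinearMap) = g' ⋆ (gen R A H ∘ₗ φ.toLinearMap) ↔ g = g' := by
  have augment_convSMul (g : C →ₗ[R] A) :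
      (augment R A H).restrictScalars R ∘ₗ (g ⋆ (gen R A H ∘ₗ φ.toLinearMap)) = g := by
    rw [comp_convSMul, ← LinearMap.comp_assoc, augment_comp_gen, convUnit_comp, convSMul_convUnit]
  exact ⟨fun h => by rw [← augment_convSMul g, h, augment_convSMul], congrArg (· ⋆ _)⟩

lemma convSMul_gen_eq_gen_iff {g : H →ₗ[R] A} : g ⋆ gen R A H = gen R A H ↔ g = convUnit R A H := by
  have cancel_gen := convSMul_gen_comp_inj (CoalgHom.id R H) (g := g) (g' := convUnit R A H)
  rwa [convUnit_convSMul] at cancel_gen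

lemma linearMap_ext_gen {M : Type*} [AddCommMonoid M] [Module A M] {φ ψ : A ⊗[R] H →ₗ[A] M}
    (hφψ : ∀ h, φ (gen R A H h) = ψ (gen R A H h)) : φ = ψ := by
  ext x
  induction x with
  | zero => simp only [map_zero]
  | add x y hx hy => simp only [map_add, hx, hy]
  | tmul a h => rw [← smul_gen, map_smul, map_smul, hφψ]

/-- The weak action axioms for a linear map `act h a = a^h`, with
`(ab)^h = a^{h⁽¹⁾} b^{h⁽²⁾}` and `1^h = ε(h) 1` written in the convolution algebra `Hom(H, A)`. -/
structure IsWeakAction (act : H →ₗ[R] A →ₗ[R] A) : Prop where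
  flip_mul (a b : A) : act.flip (a * b) = act.flip a ⋆ act.flip b
  flip_one : act.flip 1 = convUnit R A H
  one_act (a : A) : act 1 a = a

/-- Normality of `σ : H ⊗ H → A`: `σ(h, 1) = σ(1, h) = ε(h) 1`. -/
def IsNormalMap (σ : H ⊗[R] H →ₗ[R] A) : Prop :=
  ∀ h : H, σ (h ⊗ₜ 1) = convUnit R A H h ∧ σ (1 ⊗ₜ h) = convUnit R A H h

variable (R H) in
/-- Triple multiplication `(h ⊗ l) ⊗ m ↦ hlm` as a coalgebra map. -/
def mulMulCoalgHom : (H ⊗[R] H) ⊗[R] H →ₗc[R] H :=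
  (Bialgebra.mulCoalgHom R H).comp
    (Coalgebra.TensorProduct.map (Bialgebra.mulCoalgHom R H) (CoalgHom.id R H))

/-- The side `σ(l⁽¹⁾,m⁽¹⁾)^{h⁽¹⁾} σ(h⁽²⁾, l⁽²⁾m⁽²⁾)` of the cocycle condition. -/
def cocycleLeft (act : H →ₗ[R] A →ₗ[R] A) (σ : H ⊗[R] H →ₗ[R] A) : H ⊗[R] (H ⊗[R] H) →ₗ[R] A :=
  (TensorProduct.lift act ∘ₗ LinearMap.lTensor H σ) ⋆
    (σ ∘ₗ LinearMap.lTensor H (LinearMap.mul' R H))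

/-- The side `σ(h⁽¹⁾,l⁽¹⁾) σ(h⁽²⁾l⁽²⁾, m)` of the cocycle condition, written as
`σ(h⁽¹⁾,l⁽¹⁾) ε(m⁽¹⁾) σ(h⁽²⁾l⁽²⁾, m⁽²⁾)` to make it a convolution product. -/
def cocycleRight (σ : H ⊗[R] H →ₗ[R] A) : (H ⊗[R] H) ⊗[R] H →ₗ[R] A :=
  ((TensorProduct.rid R A).toLinearMap ∘ₗ TensorProduct.map σ counit) ⋆
    (σ ∘ₗ LinearMap.rTensor H (LinearMap.mul' R H))

/-- The cocycle condition for `σ : H ⊗ H → A`. -/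
def IsCocycleMap (act : H →ₗ[R] A →ₗ[R] A) (σ : H ⊗[R] H →ₗ[R] A) : Prop :=
  cocycleLeft act σ ∘ₗ (TensorProduct.assoc R H H H).toLinearMap = cocycleRight σ

/-- The twisted module condition
`(a^{l⁽¹⁾})^{h⁽¹⁾} σ(h⁽²⁾,l⁽²⁾) = σ(h⁽¹⁾,l⁽¹⁾) a^{h⁽²⁾l⁽²⁾}`, in the convolution algebra
`Hom(H ⊗ H, A)`. -/
def IsTwistedModuleMap (act : H →ₗ[R] A →ₗ[R] A) (σ : H ⊗[R] H →ₗ[R] A) : Prop :=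
  ∀ a : A, (TensorProduct.lift act ∘ₗ LinearMap.lTensor H (act.flip a)) ⋆ σ =
    σ ⋆ (act.flip a ∘ₗ LinearMap.mul' R H)

/-- The product `h ⊗ l ↦ (1 ⊗ h)(1 ⊗ l) = σ(h⁽¹⁾, l⁽¹⁾) ⊗ h⁽²⁾l⁽²⁾` of two generators. -/
def genProd (σ : H ⊗[R] H →ₗ[R] A) : H ⊗[R] H →ₗ[R] A ⊗[R] H :=
  σ ⋆ (gen R A H ∘ₗ LinearMap.mul' R H)

/-- Left multiplication by generators, `h ↦ y ↦ (1 ⊗ h) y`, determined by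
`(1 ⊗ h)(b ⊗ l) = b^{h⁽¹⁾} • ((1 ⊗ h⁽²⁾)(1 ⊗ l))`. -/
def genMul (act : H →ₗ[R] A →ₗ[R] A) (σ : H ⊗[R] H →ₗ[R] A) :
    H →ₗ[R] A ⊗[R] H →ₗ[R] A ⊗[R] H :=
  (TensorProduct.lift ((convSMulBilin R A H (A ⊗[R] H)).compl₁₂ act.flip
    (TensorProduct.curry (genProd σ)).flip)).flip

/-- The crossed product multiplication
`(a ⊗ h)(b ⊗ l) = a b^{h⁽¹⁾} σ(h⁽²⁾, l⁽¹⁾) ⊗ h⁽³⁾ l⁽²⁾`, which is `A`-linear on the left. -/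
def crossedMul (act : H →ₗ[R] A →ₗ[R] A) (σ : H ⊗[R] H →ₗ[R] A) :
    A ⊗[R] H →ₗ[A] A ⊗[R] H →ₗ[R] A ⊗[R] H :=
  TensorProduct.AlgebraTensorModule.lift (LinearMap.toSpanSingleton A _ (genMul act σ))

variable {act : H →ₗ[R] A →ₗ[R] A} {σ : H ⊗[R] H →ₗ[R] A}

lemma crossedMul_gen (h : H) : crossedMul act σ (gen R A H h) = genMul act σ h := by
  ext; simp [crossedMul]

lemma flip_crossedMul_comp_gen (y : A ⊗[R] H) :
    ((crossedMul act σ).flip y).restrictScalars R ∘ₗ gen R A H = (genMul act σ).flip y :=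
  LinearMap.ext fun h => LinearMap.congr_fun (crossedMul_gen h) y

lemma crossedMul_smul (a : A) (x y : A ⊗[R] H) :
    crossedMul act σ (a • x) y = a • crossedMul act σ x y := by
  rw [map_smul, LinearMap.smul_apply]

lemma flip_genMul_tmul (b : A) (l : H) :
    (genMul act σ).flip (b ⊗ₜ l) = act.flip b ⋆ (TensorProduct.curry (genProd σ)).flip l := rfl

lemma crossedMul_convSMul {C : Type*} [AddCommMonoid C] [Module R C] [Coalgebra R C]
    (g : C →ₗ[R] A) (L : C →ₗ[R] A ⊗[R] H) (y : A ⊗[R] H) (c : C) :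
    crossedMul act σ ((g ⋆ L) c) y = (g ⋆ ((crossedMul act σ).flip y).restrictScalars R ∘ₗ L) c :=
  LinearMap.congr_fun (comp_convSMul ((crossedMul act σ).flip y) g L) c

lemma crossedMul_genProd (z : A ⊗[R] H) (x : H ⊗[R] H) :
    crossedMul act σ (genProd σ x) z =
      (σ ⋆ ((genMul act σ).flip z ∘ₗ LinearMap.mul' R H)) x := by
  rw [genProd, crossedMul_convSMul, ← LinearMap.comp_assoc, flip_crossedMul_comp_gen]

lemma genProd_comp_rTensor : genProd σ ∘ₗ LinearMap.rTensor H (LinearMap.mul' R H) =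
    (σ ∘ₗ LinearMap.rTensor H (LinearMap.mul' R H)) ⋆
      (gen R A H ∘ₗ (mulMulCoalgHom R H).toLinearMap) := by
  let φ : (H ⊗[R] H) ⊗[R] H →ₗc[R] H ⊗[R] H :=
    Coalgebra.TensorProduct.map (Bialgebra.mulCoalgHom R H) (CoalgHom.id R H)
  have hφ : φ.toLinearMap = LinearMap.rTensor H (LinearMap.mul' R H) := rfl
  have hφ' : (mulMulCoalgHom R H).toLinearMap = LinearMap.mul' R H ∘ₗ φ.toLinearMap := rfl
  rw [← hφ, hφ', genProd, convSMul_comp, LinearMap.comp_assoc]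

lemma genProd_comp_lTensor : genProd σ ∘ₗ LinearMap.lTensor H (LinearMap.mul' R H) =
    (σ ∘ₗ LinearMap.lTensor H (LinearMap.mul' R H)) ⋆
      (gen R A H ∘ₗ LinearMap.mul' R H ∘ₗ LinearMap.lTensor H (LinearMap.mul' R H)) := by
  let φ : H ⊗[R] (H ⊗[R] H) →ₗc[R] H ⊗[R] H :=
    Coalgebra.TensorProduct.map (CoalgHom.id R H) (Bialgebra.mulCoalgHom R H)
  have hφ : φ.toLinearMap = LinearMap.lTensor H (LinearMap.mul' R H) := rfl
  rw [← hφ, genProd, convSMul_comp, LinearMap.comp_assoc]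

lemma convSMul_comp_mul' {X : Type*} [AddCommMonoid X] [Module R X] [Module A X]
    [IsScalarTower R A X] (g : H →ₗ[R] A) (L : H →ₗ[R] X) :
    (g ⋆ L) ∘ₗ LinearMap.mul' R H = (g ∘ₗ LinearMap.mul' R H) ⋆ (L ∘ₗ LinearMap.mul' R H) :=
  convSMul_comp (Bialgebra.mulCoalgHom R H) g L

lemma cocycleLeft_tmul {ι κ τ : Type*} {h l m : H} (r : Repr R h ι) (s : Repr R l κ)
    (t : Repr R m τ) : cocycleLeft act σ (h ⊗ₜ (l ⊗ₜ m)) =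
      ∑ i ∈ r.index, ∑ j ∈ s.index, ∑ p ∈ t.index,
        act (r.left i) (σ (s.left j ⊗ₜ t.left p)) *
          σ (r.right i ⊗ₜ (s.right j * t.right p)) := by
  simp [cocycleLeft, convSMul_tmul_apply _ _ r (s.tmul t), Finset.sum_product]

lemma cocycleRight_tmul {ι κ : Type*} {h l : H} (r : Repr R h ι) (s : Repr R l κ) (m : H) :
    cocycleRight σ ((h ⊗ₜ l) ⊗ₜ m) = ∑ i ∈ r.index, ∑ j ∈ s.index,
      σ (r.left i ⊗ₜ s.left j) * σ ((r.right i * s.right j) ⊗ₜ m) := by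
  rw [cocycleRight, rid_map_counit_convSMul_tmul, convSMul_tmul_apply _ _ r s]
  rfl

lemma flip_curry_genProd {κ : Type*} {l : H} (s : Repr R l κ) :
    (TensorProduct.curry (genProd σ)).flip l = ∑ j ∈ s.index,
      (σ ∘ₗ (TensorProduct.mk R H H).flip (s.left j)) ⋆
        (gen R A H ∘ₗ LinearMap.mulRight R (s.right j)) := by
  ext h
  simp [genProd, convSMul_tmul_apply _ _ (ℛ R h) s, convSMul_apply _ _ (ℛ R h),
    Finset.sum_comm (s := (ℛ R h).index)]

lemma crossedMul_tmul_tmul {ι κ : Type*} (a b : A) {h l : H} {t : Finset ι} {x y z : ι → H}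
    (hh : comul.lTensor H (comul (R := R) h) = ∑ i ∈ t, x i ⊗ₜ (y i ⊗ₜ z i)) (s : Repr R l κ) :
    crossedMul act σ (a ⊗ₜ h) (b ⊗ₜ l) = ∑ i ∈ t, ∑ j ∈ s.index,
      (a * act (x i) b * σ (y i ⊗ₜ s.left j)) ⊗ₜ (z i * s.right j) := by
  have expand_right : act.flip b ⋆ (TensorProduct.curry (genProd σ)).flip l = ∑ j ∈ s.index,
      act.flip b ⋆ (σ ∘ₗ (TensorProduct.mk R H H).flip (s.left j)) ⋆
        (gen R A H ∘ₗ LinearMap.mulRight R (s.right j)) := by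
    rw [flip_curry_genProd s]
    exact map_sum (convSMulBilin R A H (A ⊗[R] H) (act.flip b)) _ _
  rw [← smul_gen, crossedMul_smul, crossedMul_gen, ← LinearMap.flip_apply, flip_genMul_tmul,
    expand_right, LinearMap.sum_apply]
  simp [convSMul_convSMul_apply _ _ _ hh, Finset.smul_sum, TensorProduct.smul_tmul', mul_assoc,
    Finset.sum_comm (s := t)]

variable (act σ) in
/-- Associativity `((1 ⊗ h)(1 ⊗ l)) z = (1 ⊗ h)((1 ⊗ l) z)` for the given third factor `z`. -/
def GenAssoc (z : A ⊗[R] H) : Prop :=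
  ∀ h l : H, crossedMul act σ (crossedMul act σ (gen R A H h) (gen R A H l)) z =
    crossedMul act σ (gen R A H h) (crossedMul act σ (gen R A H l) z)

lemma mul'_comp_lTensor_comp_assoc :
    LinearMap.mul' R H ∘ₗ LinearMap.lTensor H (LinearMap.mul' R H) ∘ₗ
      (TensorProduct.assoc R H H H).toLinearMap = (mulMulCoalgHom R H).toLinearMap :=
  TensorProduct.ext_threefold fun h l m => (mul_assoc h l m).symm

namespace IsWeakAction

lemma genMul_gen (hact : IsWeakAction act) (h l : H) :
    genMul act σ h (gen R A H l) = genProd σ (h ⊗ₜ l) := by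
  rw [← LinearMap.flip_apply, gen_apply, flip_genMul_tmul, hact.flip_one, convUnit_convSMul]
  rfl

lemma crossedMul_gen_gen (hact : IsWeakAction act) (h l : H) :
    crossedMul act σ (gen R A H h) (gen R A H l) = genProd σ (h ⊗ₜ l) := by
  rw [crossedMul_gen, hact.genMul_gen]

lemma flip_genMul_smul (hact : IsWeakAction act) (b : A) (y : A ⊗[R] H) :
    (genMul act σ).flip (b • y) = act.flip b ⋆ (genMul act σ).flip y := by
  induction y with
  | zero =>
    rw [smul_zero, map_zero]
    exact (map_zero (convSMulBilin R A H (A ⊗[R] H) (act.flip b))).symm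
  | add y y' hy hy' =>
    rw [smul_add, map_add, map_add, hy, hy']
    exact (map_add (convSMulBilin R A H (A ⊗[R] H) (act.flip b)) _ _).symm
  | tmul c l =>
    rw [TensorProduct.smul_tmul', flip_genMul_tmul, flip_genMul_tmul, smul_eq_mul, hact.flip_mul,
      convSMul_assoc]

lemma genMul_smul (hact : IsWeakAction act) (h : H) (b : A) (y : A ⊗[R] H) :
    genMul act σ h (b • y) = (act.flip b ⋆ (genMul act σ).flip y) h :=
  LinearMap.congr_fun (hact.flip_genMul_smul b y) h

lemma lift_genMul_comp_lTensor_convSMul (hact : IsWeakAction act) {C : Type*} [AddCommMonoid C]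
    [Module R C] [Coalgebra R C] (g : C →ₗ[R] A) (M : C →ₗ[R] A ⊗[R] H) :
    TensorProduct.lift (genMul act σ) ∘ₗ LinearMap.lTensor H (g ⋆ M) =
      (TensorProduct.lift act ∘ₗ LinearMap.lTensor H g) ⋆
        (TensorProduct.lift (genMul act σ) ∘ₗ LinearMap.lTensor H M) := by
  ext h c
  simp [convSMul_tmul_apply _ _ (ℛ R h) (ℛ R c), convSMul_apply _ _ (ℛ R c), hact.genMul_smul,
    convSMul_apply _ _ (ℛ R h), Finset.sum_comm (s := (ℛ R h).index)]

lemma flip_genMul_gen_one (hact : IsWeakAction act) :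
    (genMul act σ).flip (gen R A H 1) = (σ ∘ₗ (TensorProduct.mk R H H).flip 1) ⋆ gen R A H := by
  ext h
  rw [LinearMap.flip_apply, hact.genMul_gen]
  simp [genProd, convSMul, TensorProduct.comul_tmul, ← (ℛ R h).eq, TensorProduct.sum_tmul,
    Algebra.TensorProduct.one_def]

lemma genMul_one_comp_gen (hact : IsWeakAction act) :
    genMul act σ 1 ∘ₗ gen R A H = (σ ∘ₗ TensorProduct.mk R H H 1) ⋆ gen R A H := by
  ext h
  rw [LinearMap.comp_apply, hact.genMul_gen]
  simp [genProd, convSMul, TensorProduct.comul_tmul, ← (ℛ R h).eq, TensorProduct.tmul_sum,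
    Algebra.TensorProduct.one_def]

lemma crossedMul_one_iff (hact : IsWeakAction act) :
    (∀ x, crossedMul act σ x (gen R A H 1) = x) ↔
      σ ∘ₗ (TensorProduct.mk R H H).flip 1 = convUnit R A H := by
  rw [← convSMul_gen_eq_gen_iff, ← hact.flip_genMul_gen_one]
  constructor
  · intro mul_one
    ext h
    rw [LinearMap.flip_apply, ← crossedMul_gen, mul_one]
  · intro gen_mul_one
    refine LinearMap.congr_fun (f := (crossedMul act σ).flip (gen R A H 1)) (g := LinearMap.id)
      (linearMap_ext_gen fun h => ?_)
    rw [LinearMap.flip_apply, crossedMul_gen]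
    exact LinearMap.congr_fun gen_mul_one h

lemma one_crossedMul_iff (hact : IsWeakAction act) :
    (∀ x, crossedMul act σ (gen R A H 1) x = x) ↔
      σ ∘ₗ TensorProduct.mk R H H 1 = convUnit R A H := by
  rw [← convSMul_gen_eq_gen_iff, ← hact.genMul_one_comp_gen, crossedMul_gen]
  constructor
  · exact fun one_mul => LinearMap.ext fun h => one_mul (gen R A H h)
  · intro one_mul_gen
    refine LinearMap.congr_fun (g := LinearMap.id) (TensorProduct.ext' fun b l => ?_)
    rw [← smul_gen, hact.genMul_smul, convSMul_apply_one, LinearMap.flip_apply, hact.one_act]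
    exact congrArg (b • ·) (LinearMap.congr_fun one_mul_gen l)

lemma isNormalMap_iff (hact : IsWeakAction act) :
    IsNormalMap σ ↔ ∀ x, crossedMul act σ (1 ⊗ₜ 1) x = x ∧ crossedMul act σ x (1 ⊗ₜ 1) = x := by
  rw [IsNormalMap, forall_and, forall_and, ← gen_apply, hact.crossedMul_one_iff,
    hact.one_crossedMul_iff, and_comm, LinearMap.ext_iff, LinearMap.ext_iff]
  rfl

lemma crossedMul_genProd_gen (hact : IsWeakAction act) (x : H ⊗[R] H) (m : H) :
    crossedMul act σ (genProd σ x) (gen R A H m) =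
      (cocycleRight σ ⋆ (gen R A H ∘ₗ (mulMulCoalgHom R H).toLinearMap)) (x ⊗ₜ m) := by
  have genMul_comp : (genMul act σ).flip (gen R A H m) ∘ₗ LinearMap.mul' R H =
      (genProd σ ∘ₗ LinearMap.rTensor H (LinearMap.mul' R H)) ∘ₗ
        (TensorProduct.mk R (H ⊗[R] H) H).flip m :=
    LinearMap.ext fun y => hact.genMul_gen _ m
  rw [crossedMul_genProd, genMul_comp, ← rid_map_counit_convSMul_tmul, genProd_comp_rTensor,
    ← convSMul_assoc, cocycleRight]

lemma lift_genMul_comp_lTensor_genProd (hact : IsWeakAction act) :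
    TensorProduct.lift (genMul act σ) ∘ₗ LinearMap.lTensor H (genProd σ) =
      cocycleLeft act σ ⋆
        (gen R A H ∘ₗ LinearMap.mul' R H ∘ₗ LinearMap.lTensor H (LinearMap.mul' R H)) := by
  have lift_genMul_gen : TensorProduct.lift (genMul act σ) ∘ₗ
      LinearMap.lTensor H (gen R A H ∘ₗ LinearMap.mul' R H) =
        genProd σ ∘ₗ LinearMap.lTensor H (LinearMap.mul' R H) :=
    TensorProduct.ext' fun h x => hact.genMul_gen h (LinearMap.mul' R H x)
  rw [genProd, hact.lift_genMul_comp_lTensor_convSMul, lift_genMul_gen, genProd_comp_lTensor,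
    ← convSMul_assoc, cocycleLeft]

lemma crossedMul_gen_genProd (hact : IsWeakAction act) (h l m : H) :
    crossedMul act σ (gen R A H h) (genProd σ (l ⊗ₜ m)) =
      ((cocycleLeft act σ ∘ₗ (TensorProduct.assoc R H H H).toLinearMap) ⋆
        (gen R A H ∘ₗ (mulMulCoalgHom R H).toLinearMap)) ((h ⊗ₜ l) ⊗ₜ m) := by
  let α : (H ⊗[R] H) ⊗[R] H →ₗc[R] H ⊗[R] (H ⊗[R] H) := Coalgebra.TensorProduct.assoc R R H H H
  have hα : α.toLinearMap = (TensorProduct.assoc R H H H).toLinearMap := rfl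
  have convSMul_α := convSMul_comp α (cocycleLeft act σ)
    (gen R A H ∘ₗ LinearMap.mul' R H ∘ₗ LinearMap.lTensor H (LinearMap.mul' R H))
  rw [← hact.lift_genMul_comp_lTensor_genProd, LinearMap.comp_assoc, LinearMap.comp_assoc,
    LinearMap.comp_assoc, hα, mul'_comp_lTensor_comp_assoc] at convSMul_α
  rw [crossedMul_gen, ← convSMul_α]
  rfl

lemma isCocycleMap_iff (hact : IsWeakAction act) :
    IsCocycleMap act σ ↔ ∀ m, GenAssoc act σ (gen R A H m) := by
  rw [IsCocycleMap, ← convSMul_gen_comp_inj (mulMulCoalgHom R H)]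
  simp only [GenAssoc, hact.crossedMul_gen_gen, hact.crossedMul_genProd_gen,
    hact.crossedMul_gen_genProd]
  exact ⟨fun cocycle m h l => by rw [cocycle],
    fun assoc => TensorProduct.ext_threefold fun h l m => (assoc m h l).symm⟩

lemma genAssoc_iff (hact : IsWeakAction act) {z : A ⊗[R] H} :
    GenAssoc act σ z ↔ σ ⋆ ((genMul act σ).flip z ∘ₗ LinearMap.mul' R H) =
      TensorProduct.lift (genMul act σ) ∘ₗ LinearMap.lTensor H ((genMul act σ).flip z) := by
  simp only [GenAssoc, hact.crossedMul_gen_gen, crossedMul_genProd]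
  simp only [crossedMul_gen]
  exact ⟨fun assoc => TensorProduct.ext' assoc, fun assoc h l => LinearMap.congr_fun assoc (h ⊗ₜ l)⟩

lemma genAssoc_smul_iff (hact : IsWeakAction act) {z : A ⊗[R] H} (hz : GenAssoc act σ z) (a : A) :
    GenAssoc act σ (a • z) ↔
      (σ ⋆ (act.flip a ∘ₗ LinearMap.mul' R H)) ⋆ ((genMul act σ).flip z ∘ₗ LinearMap.mul' R H) =
        ((TensorProduct.lift act ∘ₗ LinearMap.lTensor H (act.flip a)) ⋆ σ) ⋆
          ((genMul act σ).flip z ∘ₗ LinearMap.mul' R H) := by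
  rw [hact.genAssoc_iff, hact.flip_genMul_smul, convSMul_comp_mul',
    hact.lift_genMul_comp_lTensor_convSMul, ← hact.genAssoc_iff.mp hz, convSMul_assoc,
    convSMul_assoc]

lemma isTwistedModuleMap_iff (hact : IsWeakAction act)
    (mul_one : ∀ x, crossedMul act σ x (gen R A H 1) = x) :
    IsTwistedModuleMap act σ ↔ ∀ a : A, GenAssoc act σ (a • gen R A H 1) := by
  have genAssoc_one : GenAssoc act σ (gen R A H 1) := fun h l => by rw [mul_one, mul_one]
  have gen_mul_one : (genMul act σ).flip (gen R A H 1) = gen R A H := by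
    ext h
    rw [LinearMap.flip_apply, ← crossedMul_gen, mul_one]
  refine forall_congr' fun a => ?_
  rw [hact.genAssoc_smul_iff genAssoc_one, gen_mul_one]
  exact eq_comm.trans (convSMul_gen_comp_inj (Bialgebra.mulCoalgHom R H)).symm

lemma genAssoc (hact : IsWeakAction act) (cocycle : IsCocycleMap act σ)
    (twisted : IsTwistedModuleMap act σ) (z : A ⊗[R] H) : GenAssoc act σ z := by
  induction z with
  | zero => intro h l; simp only [map_zero]
  | add z z' hz hz' => intro h l; simp only [map_add, hz h l, hz' h l]
  | tmul a m =>
    rw [← smul_gen, hact.genAssoc_smul_iff (hact.isCocycleMap_iff.mp cocycle m), twisted]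

lemma crossedMul_gen_assoc (hact : IsWeakAction act) (assoc : ∀ z, GenAssoc act σ z) (h : H)
    (y z : A ⊗[R] H) : crossedMul act σ (crossedMul act σ (gen R A H h) y) z =
      crossedMul act σ (gen R A H h) (crossedMul act σ y z) := by
  induction y with
  | zero => simp only [map_zero, LinearMap.zero_apply]
  | add y y' hy hy' => simp only [map_add, LinearMap.add_apply, hy, hy']
  | tmul b l =>
    have assoc_gen : ((crossedMul act σ).flip z).restrictScalars R ∘ₗ
        (genMul act σ).flip (gen R A H l) =
          (genMul act σ).flip (crossedMul act σ (gen R A H l) z) := by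
      ext h
      have assoc_h := assoc z h l
      rwa [crossedMul_gen h] at assoc_h
    rw [← smul_gen, crossedMul_smul, crossedMul_gen h, hact.genMul_smul, hact.genMul_smul,
      crossedMul_convSMul, assoc_gen]

lemma crossedMul_assoc (hact : IsWeakAction act) (cocycle : IsCocycleMap act σ)
    (twisted : IsTwistedModuleMap act σ) (x y z : A ⊗[R] H) :
    crossedMul act σ (crossedMul act σ x y) z = crossedMul act σ x (crossedMul act σ y z) :=
  LinearMap.congr_fun (f := (crossedMul act σ).flip z ∘ₗ (crossedMul act σ).flip y)
    (g := (crossedMul act σ).flip (crossedMul act σ y z))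
    (linearMap_ext_gen fun h => hact.crossedMul_gen_assoc (hact.genAssoc cocycle twisted) h y z) x

end IsWeakAction

theorem crossed_product_assoc_iff_general (hact : IsWeakAction act) :
    ((∀ x y z, crossedMul act σ (crossedMul act σ x y) z =
        crossedMul act σ x (crossedMul act σ y z)) ∧
      ∀ x, crossedMul act σ (1 ⊗ₜ 1) x = x ∧ crossedMul act σ x (1 ⊗ₜ 1) = x) ↔
    IsNormalMap σ ∧ IsCocycleMap act σ ∧ IsTwistedModuleMap act σ := by
  rw [hact.isNormalMap_iff]
  constructor
  · rintro ⟨assoc, unit⟩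
    exact ⟨unit, hact.isCocycleMap_iff.mpr fun m h l => assoc _ _ _,
      (hact.isTwistedModuleMap_iff fun x => (unit x).2).mpr fun a h l => assoc _ _ _⟩
  · rintro ⟨unit, cocycle, twisted⟩
    exact ⟨hact.crossedMul_assoc cocycle twisted, unit⟩

end CrossedProduct

section SweedlerRepresentations

variable {C : Type} [AddCommGroup C] [Module k C] [Coalgebra k C]

lemma sRep_one_iff {c : C} {N : ℕ} {u : Fin N → Fin 2 → C} :
    SRep k 1 c N u ↔ comul (R := k) c = ∑ i, u i 0 ⊗ₜ[k] u i 1 := by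
  let e := TensorProduct.congr (LinearEquiv.refl k C) (TensorProduct.rid k C).symm
  have tp_eq : ∑ i, tp k (u i) = e (∑ i, u i 0 ⊗ₜ[k] u i 1) := by
    rw [map_sum]
    rfl
  rw [SRep, tp_eq]
  exact e.injective.eq_iff

lemma sRep_two_iff {c : C} {N : ℕ} {u : Fin N → Fin 3 → C} :
    SRep k 2 c N u ↔
      comul.lTensor C (comul (R := k) c) = ∑ i, u i 0 ⊗ₜ[k] (u i 1 ⊗ₜ[k] u i 2) := by
  let e := TensorProduct.congr (LinearEquiv.refl k C)
    (TensorProduct.congr (LinearEquiv.refl k C) (TensorProduct.rid k C).symm)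
  have itComul_eq : itComul k 2 c = e (comul.lTensor C (comul (R := k) c)) :=
    LinearMap.lTensor_comp_apply C
      (TensorProduct.congr (LinearEquiv.refl k C) (TensorProduct.rid k C).symm).toLinearMap comul
      (comul (R := k) c)
  have tp_eq : ∑ i, tp k (u i) = e (∑ i, u i 0 ⊗ₜ[k] (u i 1 ⊗ₜ[k] u i 2)) := by
    rw [map_sum]
    rfl
  rw [SRep, itComul_eq, tp_eq]
  exact e.injective.eq_iff

lemma exists_sRep_one (c : C) : ∃ N u, SRep k 1 c N u := by
  obtain ⟨N, x, y, hc⟩ := TensorProduct.exists_sum_tmul_eq (comul (R := k) c)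
  exact ⟨N, fun i => ![x i, y i], sRep_one_iff.mpr hc⟩

lemma exists_sRep_two (c : C) : ∃ N u, SRep k 2 c N u := by
  obtain ⟨N, x, y, hxy⟩ := TensorProduct.exists_sum_tmul_eq (comul.lTensor C (comul (R := k) c))
  choose M p q hpq using fun i => TensorProduct.exists_sum_tmul_eq (y i)
  let e : Fin _ ≃ Σ i, Fin (M i) := finSigmaFinEquiv.symm
  refine ⟨_, fun j => ![x (e j).1, p _ (e j).2, q _ (e j).2], sRep_two_iff.mpr ?_⟩
  calc comul.lTensor C (comul (R := k) c)
      = ∑ i, x i ⊗ₜ[k] ∑ j, p i j ⊗ₜ[k] q i j := by simp only [hxy, ← hpq]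
    _ = ∑ s : Σ i, Fin (M i), x s.1 ⊗ₜ[k] (p s.1 s.2 ⊗ₜ[k] q s.1 s.2) := by
      simp only [TensorProduct.tmul_sum, Fintype.sum_sigma]
    _ = _ := (e.sum_comp _).symm

/-- The Sweedler representation `u` of `c` as a `Coalgebra.Repr`. -/
def SRep.repr {c : C} {N : ℕ} {u : Fin N → Fin 2 → C} (hu : SRep k 1 c N u) :
    Repr k c (Fin N) where
  index := Finset.univ
  left i := u i 0
  right i := u i 1
  eq := (sRep_one_iff.mp hu).symm

end SweedlerRepresentations

variable {W : WeakAction k A H} {f : H →ₗ[k] H →ₗ[k] A}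

lemma WeakAction.isWeakAction (W : WeakAction k A H) : IsWeakAction W.act where
  flip_mul a b := by
    ext h
    obtain ⟨N, u, hu⟩ := exists_sRep_one (k := k) h
    rw [convSMul_apply _ _ hu.repr]
    exact W.act_mul h a b N u hu
  flip_one := by
    ext h
    exact (W.act_one h).trans (Algebra.algebraMap_eq_smul_one _).symm
  one_act := W.one_act

lemma isNormal_iff : IsNormal f ↔ IsNormalMap (TensorProduct.lift f) := by
  simp [IsNormal, IsNormalMap, convUnit, Algebra.algebraMap_eq_smul_one]

lemma isCocycle_iff : IsCocycle W f ↔ IsCocycleMap W.act (TensorProduct.lift f) := by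
  constructor
  · refine fun cocycle => TensorProduct.ext_threefold fun h l m => ?_
    obtain ⟨N₁, u, hu⟩ := exists_sRep_one (k := k) h
    obtain ⟨N₂, v, hv⟩ := exists_sRep_one (k := k) l
    obtain ⟨N₃, w, hw⟩ := exists_sRep_one (k := k) m
    change cocycleLeft W.act _ (h ⊗ₜ (l ⊗ₜ m)) = _
    rw [cocycleLeft_tmul hu.repr hv.repr hw.repr, cocycleRight_tmul hu.repr hv.repr]
    exact cocycle h l m N₁ N₂ N₃ u v w hu hv hw
  · intro cocycle h l m N₁ N₂ N₃ u v w hu hv hw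
    have eval := LinearMap.congr_fun cocycle ((h ⊗ₜ l) ⊗ₜ m)
    change cocycleLeft W.act _ (h ⊗ₜ (l ⊗ₜ m)) = _ at eval
    rwa [cocycleLeft_tmul hu.repr hv.repr hw.repr, cocycleRight_tmul hu.repr hv.repr] at eval

lemma isTwistedModule_iff :
    IsTwistedModule W f ↔ IsTwistedModuleMap W.act (TensorProduct.lift f) := by
  constructor
  · refine fun twisted a => TensorProduct.ext' fun h l => ?_
    obtain ⟨N₁, u, hu⟩ := exists_sRep_one (k := k) h
    obtain ⟨N₂, v, hv⟩ := exists_sRep_one (k := k) l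
    rw [convSMul_tmul_apply _ _ hu.repr hv.repr, convSMul_tmul_apply _ _ hu.repr hv.repr]
    exact twisted h l a N₁ N₂ u v hu hv
  · intro twisted h l a N₁ N₂ u v hu hv
    have eval := LinearMap.congr_fun (twisted a) (h ⊗ₜ l)
    rwa [convSMul_tmul_apply _ _ hu.repr hv.repr, convSMul_tmul_apply _ _ hu.repr hv.repr] at eval

lemma IsCrossedMul.mul_tmul_tmul {mul : (A ⊗[k] H) →ₗ[k] (A ⊗[k] H) →ₗ[k] (A ⊗[k] H)}
    (hmul : IsCrossedMul W f mul) (a b : A) (h l : H) :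
    mul (a ⊗ₜ h) (b ⊗ₜ l) = crossedMul W.act (TensorProduct.lift f) (a ⊗ₜ h) (b ⊗ₜ l) := by
  obtain ⟨N, u, hu⟩ := exists_sRep_two (k := k) h
  obtain ⟨M, v, hv⟩ := exists_sRep_one (k := k) l
  exact (hmul a b h l N M u v hu hv).trans (crossedMul_tmul_tmul (act := W.act)
    (σ := TensorProduct.lift f) a b (sRep_two_iff.mp hu) hv.repr).symm

lemma IsCrossedMul.mul_apply {mul : (A ⊗[k] H) →ₗ[k] (A ⊗[k] H) →ₗ[k] (A ⊗[k] H)}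
    (hmul : IsCrossedMul W f mul) (x y : A ⊗[k] H) :
    mul x y = crossedMul W.act (TensorProduct.lift f) x y := by
  induction x with
  | zero => simp only [map_zero, LinearMap.zero_apply]
  | add x x' hx hx' => simp only [map_add, LinearMap.add_apply, hx, hx']
  | tmul a h =>
    induction y with
    | zero => simp only [map_zero]
    | add y y' hy hy' => simp only [map_add, hy, hy']
    | tmul b l => exact hmul.mul_tmul_tmul a b h l

/-- **Crossed products: associativity criterion.**
Let `H` be a Hopf algebra with a weak action on a `k`-algebra `A`, let
`f : H ⊗ H → A` be a `k`-bilinear map, and endow `A ⊗ H` with the product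
`(a ⊗ h)(b ⊗ l) = a b^{h⁽¹⁾} f(h⁽²⁾, l⁽¹⁾) ⊗ h⁽³⁾ l⁽²⁾`.  This product is associative
with `1 ⊗ 1` as a two-sided identity if and only if `f` is normal, `f` satisfies the
cocycle condition, and the twisted module condition holds. -/
theorem crossed_product_assoc_iff
    {k A H : Type} [CommRing k] [Ring A] [Algebra k A] [Ring H] [HopfAlgebra k H]
    (W : WeakAction k A H) (f : H →ₗ[k] H →ₗ[k] A)
    (mul : (A ⊗[k] H) →ₗ[k] (A ⊗[k] H) →ₗ[k] (A ⊗[k] H))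
    (hmul : IsCrossedMul W f mul) :
    ((∀ x y z : A ⊗[k] H, mul (mul x y) z = mul x (mul y z)) ∧
        (∀ x : A ⊗[k] H, mul ((1 : A) ⊗ₜ[k] (1 : H)) x = x ∧
          mul x ((1 : A) ⊗ₜ[k] (1 : H)) = x)) ↔
      (IsNormal f ∧ IsCocycle W f ∧ IsTwistedModule W f) := by
  simp only [hmul.mul_apply, isNormal_iff, isCocycle_iff, isTwistedModule_iff]
  exact crossed_product_assoc_iff_general W.isWeakAction

end HopfCrossed
end
end

section
/- With X_n = ⊕_{r+s=n} X_{rs} and d_n = Σ_{r+s=n} Σ_{l=0, r+l>0}^{s} d^l_{rs}, the augmented sequence E ←(−μ)− X_0 ←(d_1)− X_1 ←(d_2)− X_2 ← ⋯, where μ : X_0 = E⊗E → E is the multiplication map, is a relative projective resolution of E as an E-bimodule: it is a complex of E-bimodules (d_n ∘ d_{n+1} = 0 and μ ∘ d_1 = 0), each X_n is a relatively projective E-bimodule (a direct summand of a module of the form E⊗V⊗E), and the augmented complex is contractible as a complex of left E-modules. -/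
open TensorProduct DirectSum

set_option maxHeartbeats 1000000
set_option maxSynthPendingDepth 3
set_option synthInstance.maxHeartbeats 400000

noncomputable section

namespace HopfCrossed

variable (k : Type) [CommRing k]

variable {A H : Type} [Ring A] [Algebra k A] [Ring H] [HopfAlgebra k H]
variable {k}

variable (k A H) in
/-- A crossed product `E = A #_f H` of `A` by `H`:  a ring `E` identified with `A ⊗ H`
as a `k`-module, whose multiplication is given by the crossed product formula
`(a # h)(b # l) = a b^{h⁽¹⁾} f(h⁽²⁾,l⁽¹⁾) # h⁽³⁾ l⁽²⁾`. -/
structure CrossedProduct (E : Type) [Ring E] [Algebra k E] extends WeakAction k A H where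
  f : H →ₗ[k] H →ₗ[k] A
  ι : (A ⊗[k] H) ≃ₗ[k] E
  ι_one : ι (1 ⊗ₜ[k] 1) = 1
  ι_mul : ∀ (a b : A) (h l : H) (N M : ℕ) (u : Fin N → Fin 3 → H) (v : Fin M → Fin 2 → H),
    SRep k 2 h N u → SRep k 1 l M v →
    ι (a ⊗ₜ[k] h) * ι (b ⊗ₜ[k] l) =
      ∑ i, ∑ j, ι ((a * act (u i 0) b * f (u i 1) (v j 0)) ⊗ₜ[k] (u i 2 * v j 1))
  f_normal : IsNormal f
  f_cocycle : IsCocycle toWeakAction f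
  f_twisted : IsTwistedModule toWeakAction f

namespace CrossedProduct

variable {E : Type} [Ring E] [Algebra k E] (S : CrossedProduct k A H E)

/-- The canonical map `A → E`, `a ↦ a # 1`. -/
def aE : A →ₗ[k] E := S.ι.toLinearMap ∘ₗ (TensorProduct.mk k A H).flip 1

/-- The canonical map `H → E`, `h ↦ 1 # h`. -/
def hE : H →ₗ[k] E := S.ι.toLinearMap ∘ₗ (TensorProduct.mk k A H) 1

end CrossedProduct


section Hochschild

variable (k) in
/-- For a `k`-algebra `B`, the submodule `k·1 ⊆ B`. -/
abbrev unitSub (B : Type) [Ring B] [Algebra k B] : Submodule k B :=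
  LinearMap.range (Algebra.linearMap k B)

variable (k) in
/-- `B̄ = B/k`. -/
abbrev Qbar (B : Type) [Ring B] [Algebra k B] : Type := B ⧸ unitSub k B

variable (k) in
/-- The canonical projection `B → B̄`. -/
abbrev qbar (B : Type) [Ring B] [Algebra k B] : B →ₗ[k] Qbar k B :=
  (unitSub k B).mkQ

/-- A `B`-bimodule structure (with commuting `k`-linear left and right actions)
on a `k`-module `M`. -/
structure Bimod (k B M : Type) [CommRing k] [Ring B] [Algebra k B]
    [AddCommGroup M] [Module k M] : Type where
  l : B →ₗ[k] M →ₗ[k] M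
  r : B →ₗ[k] M →ₗ[k] M
  l_one : l 1 = LinearMap.id
  r_one : r 1 = LinearMap.id
  l_mul : ∀ x y : B, l (x * y) = l x ∘ₗ l y
  r_mul : ∀ x y : B, r (x * y) = r y ∘ₗ r x
  lr_comm : ∀ x y : B, l x ∘ₗ r y = r y ∘ₗ l x

/-- Replace the `r`-tuple `a` by the `(r-1)`-tuple obtained by multiplying the
`i`-th and `(i+1)`-st entries. -/
def mulAt {A : Type} [Mul A] {r : ℕ} (a : Fin (r + 1) → A) (i : Fin r) (j : Fin r) : A :=
  if (j : ℕ) < (i : ℕ) then a j.castSucc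
  else if (j : ℕ) = (i : ℕ) then a j.castSucc * a j.succ else a j.succ

variable (k) in
/-- The degree-`n` part `M ⊗ B̄^{⊗n}` of the normalized Hochschild chain complex. -/
abbrev HCh (B M : Type) [Ring B] [Algebra k B] [AddCommGroup M] [Module k M]
    (n : ℕ) : Type :=
  M ⊗[k] Tpow k (Qbar k B) n

variable (k) in
/-- `IsHochschildD l r bd` says that `bd` is the differential of the normalized
Hochschild chain complex of `B` with coefficients in the bimodule `M` (with left
action `l` and right action `r`):
`b(m ⊗ x₁ ⊗ ⋯ ⊗ xₙ) = m x₁ ⊗ x₂ ⊗ ⋯ + ∑ (-1)^i m ⊗ ⋯ ⊗ xᵢxᵢ₊₁ ⊗ ⋯ + (-1)^n xₙ m ⊗ x₁ ⊗ ⋯ ⊗ xₙ₋₁`. -/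
def IsHochschildD {B M : Type} [Ring B] [Algebra k B] [AddCommGroup M] [Module k M]
    (l r : B →ₗ[k] M →ₗ[k] M)
    (bd : ∀ n : ℕ, HCh k B M (n + 1) →ₗ[k] HCh k B M n) : Prop :=
  ∀ (n : ℕ) (m : M) (x : Fin (n + 1) → B),
    bd n (m ⊗ₜ[k] tp k (fun i => qbar k B (x i))) =
      r (x 0) m ⊗ₜ[k] tp k (fun i : Fin n => qbar k B (x i.succ))
      + (∑ i : Fin n, ((-1 : ℤ) ^ ((i : ℕ) + 1)) •
          (m ⊗ₜ[k] tp k (fun j => qbar k B (mulAt x i j))))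
      + ((-1 : ℤ) ^ (n + 1)) •
          (l (x (Fin.last n)) m ⊗ₜ[k] tp k (fun i : Fin n => qbar k B (x i.castSucc)))

variable (k) in
/-- The homology of a (not necessarily everywhere-defined) chain complex
`⋯ → C (n+1) → C n → ⋯ → C 0`; in degree `n+1` it is `ker (d n) / im (d (n+1))`, and in
degree `0` it is `C 0 / im (d 0)`. -/
def Hml {C : ℕ → Type} [∀ n, AddCommGroup (C n)] [∀ n, Module k (C n)]
    (d : ∀ n : ℕ, C (n + 1) →ₗ[k] C n) : ℕ → Type
  | 0 => C 0 ⧸ LinearMap.range (d 0)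
  | n + 1 => LinearMap.ker (d n) ⧸
      (LinearMap.range (d (n + 1))).comap (LinearMap.ker (d n)).subtype

instance {C : ℕ → Type} [∀ n, AddCommGroup (C n)] [∀ n, Module k (C n)]
    (d : ∀ n : ℕ, C (n + 1) →ₗ[k] C n) : ∀ n, AddCommGroup (Hml k d n)
  | 0 => inferInstanceAs (AddCommGroup (C 0 ⧸ LinearMap.range (d 0)))
  | n + 1 => inferInstanceAs (AddCommGroup (LinearMap.ker (d n) ⧸
      (LinearMap.range (d (n + 1))).comap (LinearMap.ker (d n)).subtype))

instance {C : ℕ → Type} [∀ n, AddCommGroup (C n)] [∀ n, Module k (C n)]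
    (d : ∀ n : ℕ, C (n + 1) →ₗ[k] C n) : ∀ n, Module k (Hml k d n)
  | 0 => inferInstanceAs (Module k (C 0 ⧸ LinearMap.range (d 0)))
  | n + 1 => inferInstanceAs (Module k (LinearMap.ker (d n) ⧸
      (LinearMap.range (d (n + 1))).comap (LinearMap.ker (d n)).subtype))

end Hochschild

section Conv

variable {A H : Type} [Ring A] [Algebra k A] [Ring H] [HopfAlgebra k H]

/-- `IsConvInverse f g` : `g` is the convolution inverse of `f` in the convolution
algebra `Hom_k(H ⊗ H, A)`, i.e. `f * g = g * f = ε ⊗ ε · 1_A`. -/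
def IsConvInverse (f g : H →ₗ[k] H →ₗ[k] A) : Prop :=
  ∀ (h l : H) (N M' : ℕ) (u : Fin N → Fin 2 → H) (v : Fin M' → Fin 2 → H),
    SRep k 1 h N u → SRep k 1 l M' v →
    (∑ i, ∑ j, f (u i 0) (v j 0) * g (u i 1) (v j 1)) =
        (Coalgebra.counit (R := k) h * Coalgebra.counit (R := k) l) • (1 : A) ∧
    (∑ i, ∑ j, g (u i 0) (v j 0) * f (u i 1) (v j 1)) =
        (Coalgebra.counit (R := k) h * Coalgebra.counit (R := k) l) • (1 : A)

variable {E : Type} [Ring E] [Algebra k E]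

/-- The elementary term `f⁻¹(S(y), z) # S(x)` appearing in the formula for the
convolution inverse `(1 # h)⁻¹ = f⁻¹(S(h⁽²⁾), h⁽³⁾) # S(h⁽¹⁾)`. -/
def ginv (S : CrossedProduct k A H E) (finv : H →ₗ[k] H →ₗ[k] A) (x y z : H) : E :=
  S.ι ((finv (HopfAlgebra.antipode (R := k) y) z) ⊗ₜ[k] HopfAlgebra.antipode (R := k) x)

end Conv

section Bar

variable {H : Type} [Ring H] [HopfAlgebra k H]

variable (k) in
/-- The degree-`s` part `H̄^{⊗s} ⊗ N` of the normalized bar complex computing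
`H_*(H, N) = Tor_*^H(k, N)`, i.e. `(H̄^* ⊗ H, d_*) ⊗_H N`. -/
abbrev BarCh (N : Type) [AddCommGroup N] [Module k N] (s : ℕ) : Type :=
  Tpow k (Qbar k H) s ⊗[k] N

variable (k) in
/-- `IsBarD act d` : `d` is the differential of the normalized bar complex computing the
homology `H_*(H, N)` of `H` with coefficients in the left `H`-module `N` (action `act`). -/
def IsBarD {N : Type} [AddCommGroup N] [Module k N] (act : H →ₗ[k] N →ₗ[k] N)
    (d : ∀ s : ℕ, BarCh k (H := H) N (s + 1) →ₗ[k] BarCh k (H := H) N s) : Prop :=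
  ∀ (s : ℕ) (h : Fin (s + 1) → H) (n : N),
    d s (tp k (fun i => qbar k H (h i)) ⊗ₜ[k] n) =
      Coalgebra.counit (R := k) (h 0) •
          (tp k (fun i : Fin s => qbar k H (h i.succ)) ⊗ₜ[k] n)
      + (∑ i : Fin s, ((-1 : ℤ) ^ ((i : ℕ) + 1)) •
          (tp k (fun j => qbar k H (mulAt h i j)) ⊗ₜ[k] n))
      + ((-1 : ℤ) ^ (s + 1)) •
          (tp k (fun i : Fin s => qbar k H (h i.castSucc)) ⊗ₜ[k] act (h (Fin.last s)) n)

end Bar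

section Sep

variable {A : Type} [Ring A] [Algebra k A]

variable (k A) in
/-- `A` is a separable `k`-algebra: the multiplication map `A ⊗ A → A` admits an
`A`-bimodule splitting (equivalently, `A` is projective as an `A ⊗ Aᵒᵖ`-module). -/
def IsSeparableAlg : Prop :=
  ∃ s : A →ₗ[k] A ⊗[k] A,
    (LinearMap.mul' k A) ∘ₗ s = LinearMap.id ∧
    ∀ (a b x : A), s (a * x * b) =
      TensorProduct.map (LinearMap.mulLeft k a) (LinearMap.mulRight k b) (s x)

end Sep


section Resolution

variable (k A H E : Type) [CommRing k] [Ring A] [Algebra k A] [Ring H] [HopfAlgebra k H]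
  [Ring E] [Algebra k E]

/-- The `E`-bimodule `X_{rs} = E ⊗ H̄^{⊗s} ⊗ Ā^{⊗r} ⊗ E`. -/
abbrev Xc (r s : ℕ) : Type :=
  E ⊗[k] (Tpow k (Qbar k H) s ⊗[k] (Tpow k (Qbar k A) r ⊗[k] E))

/-- The `E`-bimodule `Y_s = E ⊗ H̄^{⊗s} ⊗ H`. -/
abbrev Yc (s : ℕ) : Type := E ⊗[k] (Tpow k (Qbar k H) s ⊗[k] H)

variable {k A H E}

/-- The generator `e ⊗ h̄₁ ⊗ ⋯ ⊗ h̄ₛ ⊗ ā₁ ⊗ ⋯ ⊗ āᵣ ⊗ e'` of `X_{rs}`. -/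
def xgen (e : E) {s r : ℕ} (hs : Fin s → H) (as : Fin r → A) (e' : E) : Xc k A H E r s :=
  e ⊗ₜ[k] (tp k (fun i => qbar k H (hs i)) ⊗ₜ[k] (tp k (fun i => qbar k A (as i)) ⊗ₜ[k] e'))

/-- The generator `e ⊗ h̄₁ ⊗ ⋯ ⊗ h̄ₛ ⊗ h` of `Y_s`. -/
def ygen (e : E) {s : ℕ} (hs : Fin s → H) (h : H) : Yc k H E s :=
  e ⊗ₜ[k] (tp k (fun i => qbar k H (hs i)) ⊗ₜ[k] h)

/-- Left multiplication by `e ∈ E` on `X_{rs}`. -/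
def lX (e : E) {r s : ℕ} : Xc k A H E r s →ₗ[k] Xc k A H E r s :=
  TensorProduct.map (LinearMap.mulLeft k e) LinearMap.id

/-- Right multiplication by `e ∈ E` on `X_{rs}`. -/
def rX (e : E) {r s : ℕ} : Xc k A H E r s →ₗ[k] Xc k A H E r s :=
  TensorProduct.map LinearMap.id (TensorProduct.map LinearMap.id
    (TensorProduct.map LinearMap.id (LinearMap.mulRight k e)))

/-- Transport along equalities of indices. -/
def xcast {r r' s s' : ℕ} (hr : r = r') (hs : s = s') :
    Xc k A H E r s →ₗ[k] Xc k A H E r' s' := by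
  subst hr; subst hs; exact LinearMap.id

end Resolution

section ResData

variable {k A H E : Type} [CommRing k] [Ring A] [Algebra k A] [Ring H] [HopfAlgebra k H]
  [Ring E] [Algebra k E]

variable (k A H E) in
/-- The resolution `(X_*, d_*)` of the crossed product `E = A #_f H` of Section 1 of
the paper: the maps `μ_s`, `∂_s`, `σ⁰`, and the (higher) differentials `d^l_{rs}`
(`d⁰ = dl 0`), together with all of their defining equations.  Here
`dl l r s : X_{rs} → X_{r+l-1, s-l}`. -/
structure ResData (S : CrossedProduct k A H E) : Type where
  mu : ∀ s : ℕ, Xc k A H E 0 s →ₗ[k] Yc k H E s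
  del : ∀ s : ℕ, Yc k H E (s + 1) →ₗ[k] Yc k H E s
  sig0 : ∀ s : ℕ, Yc k H E s →ₗ[k] Xc k A H E 0 s
  sig : ∀ r s : ℕ, Xc k A H E r s →ₗ[k] Xc k A H E (r + 1) s
  dl : ∀ l r s : ℕ, Xc k A H E r s →ₗ[k] Xc k A H E (r + l - 1) (s - l)
  /-- `μ_s(a₀ ⊗ 𝐡_{0s} ⊗ a₁ ⊗ h_{s+1}) = a₀ a₁^{𝐡_{0s}⁽¹⁾} ⊗ 𝐡_{0s}⁽²⁾ ⊗ h_{s+1}`. -/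
  mu_eq : ∀ (s : ℕ) (a₀ : A) (h₀ : H) (hs : Fin s → H) (b : A) (h' : H)
    (Nv : Fin (s + 1) → ℕ) (v : ∀ i, Fin (Nv i) → Fin 2 → H),
    (∀ i, SRep k 1 ((Fin.cons h₀ hs : Fin (s + 1) → H) i) (Nv i) (v i)) →
    mu s (xgen (S.ι (a₀ ⊗ₜ[k] h₀)) hs (fun i : Fin 0 => i.elim0) (S.ι (b ⊗ₜ[k] h'))) =
      ∑ c : (∀ i, Fin (Nv i)),
        ygen (S.ι ((a₀ * iterAct k S.act (fun i => v i (c i) 0) b) ⊗ₜ[k] (v 0 (c 0) 1)))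
          (fun i : Fin s => v i.succ (c i.succ) 1) h'
  /-- `d⁰_{rs}` is the Hochschild-type boundary in the `A`-direction. -/
  d0_eq : ∀ (r s : ℕ) (a₀ : A) (h₀ : H) (hs : Fin s → H) (as : Fin (r + 1) → A)
    (b : A) (h' : H) (Nv : Fin (s + 1) → ℕ) (v : ∀ i, Fin (Nv i) → Fin 2 → H),
    (∀ i, SRep k 1 ((Fin.cons h₀ hs : Fin (s + 1) → H) i) (Nv i) (v i)) →
    dl 0 (r + 1) s (xgen (S.ι (a₀ ⊗ₜ[k] h₀)) hs as (S.ι (b ⊗ₜ[k] h'))) =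
      (∑ c : (∀ i, Fin (Nv i)),
        xgen (S.ι ((a₀ * iterAct k S.act (fun i => v i (c i) 0) (as 0)) ⊗ₜ[k] (v 0 (c 0) 1)))
          (fun i : Fin s => v i.succ (c i.succ) 1)
          (fun i : Fin r => as i.succ) (S.ι (b ⊗ₜ[k] h')))
      + (∑ i : Fin r, ((-1 : ℤ) ^ ((i : ℕ) + 1)) •
          xgen (S.ι (a₀ ⊗ₜ[k] h₀)) hs (mulAt as i) (S.ι (b ⊗ₜ[k] h')))
      + ((-1 : ℤ) ^ (r + 1)) •
          xgen (S.ι (a₀ ⊗ₜ[k] h₀)) hs (fun i : Fin r => as i.castSucc)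
            (S.ι ((as (Fin.last r) * b) ⊗ₜ[k] h'))
  /-- `∂_s(a ⊗ 𝐡) = ∑ᵢ (-1)^{i+1} a f(hᵢ⁽¹⁾, hᵢ₊₁⁽¹⁾)^{𝐡_{0,i-1}⁽¹⁾} ⊗ 𝐡_{0,i-1}⁽²⁾ ⊗
  hᵢ⁽²⁾hᵢ₊₁⁽²⁾ ⊗ 𝐡_{i+2,s+1}`. -/
  del_eq : ∀ (s : ℕ) (a : A) (h₀ : H) (hs : Fin (s + 1) → H) (h' : H)
    (Nv : Fin (s + 3) → ℕ) (v : ∀ i, Fin (Nv i) → Fin 2 → H),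
    (∀ i, SRep k 1 ((Fin.cons h₀ (Fin.snoc hs h') : Fin (s + 3) → H) i) (Nv i) (v i)) →
    del s (ygen (S.ι (a ⊗ₜ[k] h₀)) hs h') =
      ∑ i : Fin (s + 2), ((-1 : ℤ) ^ ((i : ℕ) + 1)) •
        (∑ c : (∀ j : Fin ((i : ℕ) + 2),
            Fin (Nv ⟨(j : ℕ), by have := j.isLt; have := i.isLt; omega⟩)),
          ygen
            (S.ι ((a * iterAct k S.act
                (fun j : Fin (i : ℕ) =>
                  v ⟨(j : ℕ), by have := j.isLt; have := i.isLt; omega⟩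
                    (c ⟨(j : ℕ), by have := j.isLt; have := i.isLt; omega⟩) 0)
                (S.f (v ⟨(i : ℕ), by have := i.isLt; omega⟩
                        (c ⟨(i : ℕ), by omega⟩) 0)
                     (v ⟨(i : ℕ) + 1, by have := i.isLt; omega⟩
                        (c ⟨(i : ℕ) + 1, by omega⟩) 0))) ⊗ₜ[k]
              (if (i : ℕ) = 0 then
                  (v ⟨0, by omega⟩ (c ⟨0, by omega⟩) 1) * (v ⟨1, by omega⟩ (c ⟨1, by omega⟩) 1)
                else v ⟨0, by omega⟩ (c ⟨0, by omega⟩) 1)))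
            (fun p : Fin s =>
              if hp : (p : ℕ) + 1 < (i : ℕ) then
                v ⟨(p : ℕ) + 1, by have := p.isLt; have := i.isLt; omega⟩
                  (c ⟨(p : ℕ) + 1, by omega⟩) 1
              else if hp' : (p : ℕ) + 1 = (i : ℕ) then
                (v ⟨(p : ℕ) + 1, by have := p.isLt; omega⟩ (c ⟨(p : ℕ) + 1, by omega⟩) 1) *
                  (v ⟨(p : ℕ) + 2, by have := p.isLt; have := i.isLt; omega⟩
                    (c ⟨(p : ℕ) + 2, by omega⟩) 1)
              else (Fin.cons h₀ (Fin.snoc hs h') : Fin (s + 3) → H) ⟨(p : ℕ) + 2, by have := p.isLt; omega⟩)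
            (if hi : (i : ℕ) = s + 1 then
                (v ⟨s + 1, by omega⟩ (c ⟨s + 1, by omega⟩) 1) *
                  (v ⟨s + 2, by omega⟩ (c ⟨s + 2, by omega⟩) 1)
              else (Fin.cons h₀ (Fin.snoc hs h') : Fin (s + 3) → H) ⟨s + 2, by omega⟩))
  /-- `σ⁰_{0,s}(a₀ ⊗ 𝐡 ⊗ h_{s+1}) = a₀ ⊗ 𝐡 ⊗ 1 # h_{s+1}`. -/
  sig0_eq : ∀ (s : ℕ) (e : E) (hs : Fin s → H) (h : H),
    sig0 s (ygen e hs h) = xgen e hs (fun i : Fin 0 => i.elim0) (S.hE h)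
  /-- `σ⁰_{r+1,s}(a₀ ⊗ 𝐡 ⊗ 𝐚 ⊗ a # h) = (-1)^{r+1} a₀ ⊗ 𝐡 ⊗ 𝐚 ⊗ ā ⊗ 1 # h`. -/
  sig_eq : ∀ (r s : ℕ) (e : E) (hs : Fin s → H) (as : Fin r → A) (b : A) (h' : H),
    sig r s (xgen e hs as (S.ι (b ⊗ₜ[k] h'))) =
      ((-1 : ℤ) ^ (r + 1)) • xgen e hs (Fin.snoc as b) (S.hE h')
  /-- `d¹_{0s} = -σ⁰ ∘ ∂ ∘ μ` on `k ⊗ H̄^s ⊗ k`. -/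
  dl_one_zero : ∀ (s : ℕ) (hs : Fin (s + 1) → H),
    dl 1 0 (s + 1) (xgen (1 : E) hs (fun i : Fin 0 => i.elim0) (1 : E)) =
      - sig0 s (del s (mu (s + 1) (xgen (1 : E) hs (fun i : Fin 0 => i.elim0) (1 : E))))
  /-- `d^l_{0s} = -∑_{j=1}^{l-1} σ⁰ ∘ d^{l-j} ∘ d^j` on `k ⊗ H̄^s ⊗ k`, for `1 < l ≤ s`. -/
  dl_zero : ∀ (l s : ℕ) (hl : 2 ≤ l) (hls : l ≤ s) (hs : Fin s → H),
    dl l 0 s (xgen (1 : E) hs (fun i : Fin 0 => i.elim0) (1 : E)) =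
      - ∑ j : Fin (l - 1),
        xcast (show (l - 2) + 1 = 0 + l - 1 by omega) rfl
          (sig (l - 2) (s - l)
            (xcast
              (show (j : ℕ) + (l - ((j : ℕ) + 1)) - 1 = l - 2 by
                have := j.isLt; omega)
              (show (s - ((j : ℕ) + 1)) - (l - ((j : ℕ) + 1)) = s - l by
                have := j.isLt; omega)
              (dl (l - ((j : ℕ) + 1)) ((j : ℕ)) (s - ((j : ℕ) + 1))
                (xcast (show 0 + ((j : ℕ) + 1) - 1 = (j : ℕ) by omega) rfl
                  (dl ((j : ℕ) + 1) 0 s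
                    (xgen (1 : E) hs (fun i : Fin 0 => i.elim0) (1 : E)))))))
  /-- `d^l_{rs} = -∑_{j=0}^{l-1} σ⁰ ∘ d^{l-j} ∘ d^j` on `k ⊗ H̄^s ⊗ Ā^r ⊗ k`, for `r > 0`,
  `1 ≤ l ≤ s`. -/
  dl_succ : ∀ (l r s : ℕ) (hl : 1 ≤ l) (hls : l ≤ s) (hs : Fin s → H) (as : Fin (r + 1) → A),
    dl l (r + 1) s (xgen (1 : E) hs as (1 : E)) =
      - ∑ j : Fin l,
        xcast (show (r + l - 1) + 1 = (r + 1) + l - 1 by omega) rfl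
          (sig (r + l - 1) (s - l)
            (xcast
              (show (r + (j : ℕ)) + (l - (j : ℕ)) - 1 = r + l - 1 by
                have := j.isLt; omega)
              (show (s - (j : ℕ)) - (l - (j : ℕ)) = s - l by
                have := j.isLt; omega)
              (dl (l - (j : ℕ)) (r + (j : ℕ)) (s - (j : ℕ))
                (xcast (show (r + 1) + (j : ℕ) - 1 = r + (j : ℕ) by omega) rfl
                  (dl (j : ℕ) (r + 1) s (xgen (1 : E) hs as (1 : E)))))))
  /-- Each `d^l_{rs}` is a map of `E`-bimodules. -/
  dl_lmul : ∀ (l r s : ℕ) (e : E), dl l r s ∘ₗ lX e = lX e ∘ₗ dl l r s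
  dl_rmul : ∀ (l r s : ℕ) (e : E), dl l r s ∘ₗ rX e = rX e ∘ₗ dl l r s

end ResData

section Xtot

variable {k A H E : Type} [CommRing k] [Ring A] [Algebra k A] [Ring H] [HopfAlgebra k H]
  [Ring E] [Algebra k E]

variable (k A H E) in
/-- The total module `X_n = ⊕_{r+s=n} X_{rs}`. -/
abbrev XT (n : ℕ) : Type :=
  ⨁ (s : Fin (n + 1)), Xc k A H E (n - (s : ℕ)) (s : ℕ)

/-- The total differential `d_n = ∑_{r+s=n, r+l>0} ∑_{l=0}^{s} d^l_{rs}`. -/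
noncomputable def dT {S : CrossedProduct k A H E} (R : ResData k A H E S) (n : ℕ) :
    XT k A H E (n + 1) →ₗ[k] XT k A H E n :=
  DirectSum.toModule k (Fin (n + 2)) (XT k A H E n) (fun s =>
    ∑ l : Fin ((s : ℕ) + 1),
      if h : 0 < (n + 1 - (s : ℕ)) + (l : ℕ) then
        (DirectSum.lof k (Fin (n + 1)) (fun s' : Fin (n + 1) => Xc k A H E (n - (s' : ℕ)) (s' : ℕ))
            ⟨(s : ℕ) - (l : ℕ), by have := s.isLt; have := l.isLt; omega⟩) ∘ₗ
          xcast
            (show (n + 1 - (s : ℕ)) + (l : ℕ) - 1 = n - ((s : ℕ) - (l : ℕ)) by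
              have := s.isLt; have := l.isLt; omega)
            rfl ∘ₗ
          R.dl (l : ℕ) (n + 1 - (s : ℕ)) (s : ℕ)
      else 0)

/-- Left multiplication by `e ∈ E` on `X_n`. -/
noncomputable def lT (e : E) (n : ℕ) : XT k A H E n →ₗ[k] XT k A H E n :=
  DirectSum.toModule k (Fin (n + 1)) (XT k A H E n) (fun s =>
    (DirectSum.lof k (Fin (n + 1)) (fun s' : Fin (n + 1) => Xc k A H E (n - (s' : ℕ)) (s' : ℕ)) s)
      ∘ₗ lX e)

/-- Right multiplication by `e ∈ E` on `X_n`. -/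
noncomputable def rT (e : E) (n : ℕ) : XT k A H E n →ₗ[k] XT k A H E n :=
  DirectSum.toModule k (Fin (n + 1)) (XT k A H E n) (fun s =>
    (DirectSum.lof k (Fin (n + 1)) (fun s' : Fin (n + 1) => Xc k A H E (n - (s' : ℕ)) (s' : ℕ)) s)
      ∘ₗ rX e)

/-- The augmentation `X_0 → E` induced by a map `μ : X_{00} → E`. -/
noncomputable def multT (mult : Xc k A H E 0 0 →ₗ[k] E) : XT k A H E 0 →ₗ[k] E :=
  DirectSum.toModule k (Fin 1) E (fun s =>
    mult ∘ₗ xcast (show 0 - (s : ℕ) = 0 by have := s.isLt; omega)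
      (show (s : ℕ) = 0 by have := s.isLt; omega))

end Xtot

/-!
On the direct sum of all the `X_{rs}`, write `D = d⁰ + P`, where `P` is the sum of the `d^l` with
`l ≥ 1`. This perturbs the contracted rows, and `P` lowers the filtration by `s`. On a bimodule
generator `g` the recursion for the `d^l` reads `P g = -σ₀ ∂ μ g - σ P D g`. If `D D` is already
known to vanish on elements of the total degree of `D g`, then the rows being contracted gives
`D D g = -σ P (D D g)`; as `σ P` lowers the filtration, `D D g = 0`.

The recursion also shows that `P` covers `-∂` on `Y_*`, because `∂` is right `E`-linear, and `Y_*`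
has an evident left `E`-linear contraction onto `E`. A cycle of `D` is therefore first corrected by
a boundary so that `μ` kills it, and is then a boundary by a geometric series in `σ` and `D`, which
is finite because of the filtration. Both corrections are `E`-linear in the cycle, so they assemble
to a contracting homotopy.

The identities for `μ` and `∂` go by induction on `s`: the left factor is moved out by
`e ⊗ h₁ ⊗ ⋯ = e • shift ((1 # h₁) ⊗ ⋯)`, which absorbs all the cocycle and comultiplication
bookkeeping into the multiplication of `E`.
-/

namespace Tpow

variable {V M : Type} [AddCommGroup V] [Module k V] [AddCommGroup M] [Module k M]

/-- The unit of `V^{⊗0} = k`. -/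
def nil : Tpow k V 0 := (1 : k)

/-- The identification `V ⊗ V^{⊗n} = V^{⊗(n+1)}`, curried. -/
def cons {n : ℕ} : V →ₗ[k] Tpow k V n →ₗ[k] Tpow k V (n + 1) :=
  TensorProduct.mk k V (Tpow k V n)

lemma eq_smul_nil (t : Tpow k V 0) : ∃ c : k, t = c • nil :=
  ⟨t, (mul_one (M := k) t).symm⟩

lemma tp_zero (v : Fin 0 → V) : tp k v = nil := rfl

lemma tp_succ {n : ℕ} (v : Fin (n + 1) → V) : tp k v = cons (v 0) (tp k fun i ↦ v i.succ) := rfl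

lemma cons_induction {n : ℕ} {P : Tpow k V (n + 1) → Prop} (t : Tpow k V (n + 1)) (zero : P 0)
    (cons : ∀ v t, P (cons v t)) (add : ∀ t t', P t → P t' → P (t + t')) : P t :=
  TensorProduct.induction_on (M := V) (N := Tpow k V n) (motive := P) t zero cons add

lemma hom_ext {n : ℕ} {f g : Tpow k V n →ₗ[k] M} (h : ∀ v, f (tp k v) = g (tp k v)) : f = g := by
  induction n with
  | zero =>
    refine LinearMap.ext fun t ↦ ?_
    obtain ⟨c, rfl⟩ := eq_smul_nil t
    rw [map_smul, map_smul, ← tp_zero Fin.elim0, h]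
  | succ n ih =>
    refine TensorProduct.ext' (M := V) (N := Tpow k V n) fun v t ↦ ?_
    exact LinearMap.congr_fun (ih (f := f ∘ₗ cons v) (g := g ∘ₗ cons v)
      fun w ↦ h (Fin.cons v w)) t

lemma exists_eq_sum_tp {n : ℕ} (t : Tpow k V (n + 1)) :
    ∃ (N : ℕ) (u : Fin N → Fin (n + 1) → V), t = ∑ i, tp k (u i) := by
  induction t using cons_induction with
  | zero => exact ⟨0, Fin.elim0, rfl⟩
  | add _ _ ht ht' =>
    obtain ⟨N, u, rfl⟩ := ht
    obtain ⟨N', u', rfl⟩ := ht'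
    exact ⟨N + N', Fin.append u u', by simp [Fin.sum_univ_add]⟩
  | cons v t =>
    cases n with
    | zero =>
      obtain ⟨c, rfl⟩ := eq_smul_nil t
      exact ⟨1, fun _ _ ↦ c • v, by simp [tp_succ, tp_zero]⟩
    | succ n =>
      obtain ⟨N, u, rfl⟩ := exists_eq_sum_tp t
      exact ⟨N, fun i ↦ Fin.cons v (u i), map_sum (cons v) _ _⟩

/-- Appending a tensor factor `V^{⊗n} ⊗ V → V^{⊗(n+1)}`, curried. -/
def snoc : ∀ {n : ℕ}, Tpow k V n →ₗ[k] V →ₗ[k] Tpow k V (n + 1)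
  | 0 => (LinearMap.lsmul k (V →ₗ[k] Tpow k V 1)).flip ((cons (n := 0)).flip nil)
  | n + 1 => TensorProduct.lift (M := V) (N := Tpow k V n)
      (LinearMap.mk₂ k (fun v t ↦ cons v ∘ₗ snoc t)
        (by intros; ext; simp) (by intros; ext; simp) (by intros; ext; simp) (by intros; ext; simp))

lemma snoc_nil (v : V) : snoc (k := k) nil v = cons v nil :=
  LinearMap.congr_fun (one_smul k ((cons (n := 0)).flip nil)) v

lemma snoc_cons {n : ℕ} (x : V) (t : Tpow k V n) (v : V) :
    snoc (cons x t) v = cons x (snoc t v) := rfl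

variable (k V) in
/-- `V^{⊗2} = V ⊗ V`; the two sides differ by the factor `V^{⊗0} = k`. -/
def twoEquiv : Tpow k V 2 ≃ₗ[k] V ⊗[k] V := (TensorProduct.rid k V).lTensor V

variable (k V) in
/-- `V^{⊗3} = V ⊗ (V ⊗ V)`. -/
def threeEquiv : Tpow k V 3 ≃ₗ[k] V ⊗[k] (V ⊗[k] V) := (twoEquiv k V).lTensor V

lemma twoEquiv_tp (v : Fin 2 → V) : twoEquiv k V (tp k v) = v 0 ⊗ₜ v 1 :=
  congrArg (v 0 ⊗ₜ[k] ·) (one_smul k (v 1))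

lemma threeEquiv_tp (v : Fin 3 → V) : threeEquiv k V (tp k v) = v 0 ⊗ₜ (v 1 ⊗ₜ v 2) :=
  congrArg (v 0 ⊗ₜ[k] ·) (twoEquiv_tp fun i ↦ v i.succ)

end Tpow

namespace SRep

open Coalgebra

variable {C : Type} [AddCommGroup C] [Module k C] [Coalgebra k C]

lemma twoEquiv_itComul (h : C) : Tpow.twoEquiv k C (itComul k 1 h) = comul h := by
  have : (Tpow.twoEquiv k C).toLinearMap ∘ₗ LinearMap.lTensor C (itComul k 0) = LinearMap.id :=
    TensorProduct.ext' fun x y ↦ congrArg (x ⊗ₜ[k] ·) (one_smul k y)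
  exact LinearMap.congr_fun this (comul h)

lemma threeEquiv_itComul (h : C) :
    Tpow.threeEquiv k C (itComul k 2 h) = comul.lTensor C (comul h) := by
  have : (Tpow.threeEquiv k C).toLinearMap ∘ₗ LinearMap.lTensor C (itComul k 1) =
      comul.lTensor C :=
    TensorProduct.ext' fun x y ↦ congrArg (x ⊗ₜ[k] ·) (twoEquiv_itComul y)
  exact LinearMap.congr_fun this (comul h)

lemma comul_eq {h : C} {N : ℕ} {v : Fin N → Fin 2 → C} (hv : SRep k 1 h N v) :
    comul h = ∑ i, v i 0 ⊗ₜ[k] v i 1 := by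
  rw [← twoEquiv_itComul, hv, map_sum]
  simp only [Tpow.twoEquiv_tp]

lemma lTensor_comul_eq {h : C} {N : ℕ} {u : Fin N → Fin 3 → C} (hu : SRep k 2 h N u) :
    comul.lTensor C (comul h) = ∑ i, u i 0 ⊗ₜ[k] (u i 1 ⊗ₜ[k] u i 2) := by
  rw [← threeEquiv_itComul, hu, map_sum]
  simp only [Tpow.threeEquiv_tp]

lemma sum_counit_smul {h : C} {N : ℕ} {v : Fin N → Fin 2 → C} (hv : SRep k 1 h N v) :
    ∑ i, counit (R := k) (v i 0) • v i 1 = h := by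
  have := congrArg (TensorProduct.lid k C) (rTensor_counit_comul (R := k) h)
  simpa [hv.comul_eq] using this

lemma sum_counit_mid {h : C} {N : ℕ} {u : Fin N → Fin 3 → C} (hu : SRep k 2 h N u) :
    ∑ i, counit (R := k) (u i 1) • (u i 0 ⊗ₜ[k] u i 2) = comul h := by
  have := congrArg (LinearMap.lTensor C ((TensorProduct.lid k C).toLinearMap ∘ₗ counit.rTensor C))
    hu.lTensor_comul_eq
  rw [← LinearMap.lTensor_comp_apply, LinearMap.comp_assoc, rTensor_counit_comp_comul] at this
  have hid : (TensorProduct.lid k C).toLinearMap ∘ₗ TensorProduct.mk k k C 1 = LinearMap.id := by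
    ext; simp
  rw [hid, LinearMap.lTensor_id_apply] at this
  simp [this, tmul_smul]

lemma sum_counit_left {h : C} {N : ℕ} {u : Fin N → Fin 3 → C} (hu : SRep k 2 h N u) :
    ∑ i, counit (R := k) (u i 0) • (u i 1 ⊗ₜ[k] u i 2) = comul h := by
  have := congrArg ((TensorProduct.lid k (C ⊗[k] C)).toLinearMap ∘ₗ counit.rTensor _)
    hu.lTensor_comul_eq
  have hcomm :
      ((TensorProduct.lid k (C ⊗[k] C)).toLinearMap ∘ₗ counit.rTensor _) ∘ₗ comul.lTensor C =
      comul ∘ₗ ((TensorProduct.lid k C).toLinearMap ∘ₗ counit.rTensor C) := by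
    ext; simp
  rw [← LinearMap.comp_apply, hcomm] at this
  simpa using this.symm

lemma exists_sRep (n : ℕ) (h : C) : ∃ (N : ℕ) (u : Fin N → Fin (n + 1) → C), SRep k n h N u :=
  Tpow.exists_eq_sum_tp _

lemma one : SRep k 1 (1 : H) 1 fun _ _ ↦ 1 := by
  refine (Tpow.twoEquiv k H).injective ?_
  rw [twoEquiv_itComul, Bialgebra.comul_one, map_sum]
  simp [Tpow.twoEquiv_tp, Algebra.TensorProduct.one_def]

end SRep

namespace CrossedProduct

variable {E M : Type} [Ring E] [Algebra k E] [AddCommGroup M] [Module k M]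
  (S : CrossedProduct k A H E)

lemma aE_one : S.aE 1 = 1 := S.ι_one

lemma hE_one : S.hE 1 = 1 := S.ι_one

lemma hom_ext {f g : E →ₗ[k] M} (h : ∀ a x, f (S.ι (a ⊗ₜ[k] x)) = g (S.ι (a ⊗ₜ[k] x))) :
    f = g := by
  have : f ∘ₗ S.ι.toLinearMap = g ∘ₗ S.ι.toLinearMap := TensorProduct.ext' h
  exact (LinearMap.cancel_right S.ι.surjective).mp this

lemma ι_mul_aE (a b : A) {h : H} {N : ℕ} {v : Fin N → Fin 2 → H} (hv : SRep k 1 h N v) :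
    S.ι (a ⊗ₜ[k] h) * S.aE b = ∑ i, S.ι ((a * S.act (v i 0) b) ⊗ₜ[k] v i 1) := by
  obtain ⟨M, u, hu⟩ := SRep.exists_sRep (k := k) 2 h
  have hcounit := congrArg (S.ι.toLinearMap ∘ₗ (LinearMap.mulLeft k a ∘ₗ S.act.flip b).rTensor H)
    (hu.sum_counit_mid.trans hv.comul_eq)
  refine (S.ι_mul a b h 1 M 1 u _ hu SRep.one).trans ?_
  simpa [(S.f_normal _).1, ← TensorProduct.smul_tmul'] using hcounit

lemma aE_mul_ι (a b : A) (l : H) : S.aE a * S.ι (b ⊗ₜ[k] l) = S.ι ((a * b) ⊗ₜ[k] l) := by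
  obtain ⟨M, w, hw⟩ := SRep.exists_sRep (k := k) 1 l
  have hone : SRep k 2 (1 : H) 1 fun _ _ ↦ 1 := by
    refine (Tpow.threeEquiv k H).injective ?_
    rw [SRep.threeEquiv_itComul, map_sum]
    simp [Tpow.threeEquiv_tp, Algebra.TensorProduct.one_def]
  refine (S.ι_mul a b 1 l 1 M _ w hone hw).trans ?_
  have hcounit := congrArg (fun x ↦ S.ι ((a * b) ⊗ₜ[k] x)) hw.sum_counit_smul
  simpa [S.one_act, (S.f_normal _).2, ← TensorProduct.smul_tmul', TensorProduct.tmul_sum]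
    using hcounit

lemma aE_mul_aE (a b : A) : S.aE a * S.aE b = S.aE (a * b) := S.aE_mul_ι a b 1

lemma aE_mul_hE (a : A) (h : H) : S.aE a * S.hE h = S.ι (a ⊗ₜ[k] h) :=
  (S.aE_mul_ι a 1 h).trans (by rw [mul_one])

lemma hE_mul_hE {h l : H} {N M : ℕ} {v : Fin N → Fin 2 → H} {w : Fin M → Fin 2 → H}
    (hv : SRep k 1 h N v) (hw : SRep k 1 l M w) :
    S.hE h * S.hE l = ∑ i, ∑ j, S.ι (S.f (v i 0) (w j 0) ⊗ₜ[k] (v i 1 * w j 1)) := by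
  obtain ⟨K, u, hu⟩ := SRep.exists_sRep (k := k) 2 h
  refine (S.ι_mul 1 1 h l K M u w hu hw).trans ?_
  rw [Finset.sum_comm, Finset.sum_comm (γ := Fin N)]
  refine Finset.sum_congr rfl fun j _ ↦ ?_
  have hcounit := congrArg (S.ι.toLinearMap ∘ₗ
    TensorProduct.map (S.f.flip (w j 0)) (LinearMap.mulRight k (w j 1)))
    (hu.sum_counit_left.trans hv.comul_eq)
  simpa [S.act_one, ← TensorProduct.smul_tmul'] using hcounit

lemma ι_mul_hE (a : A) {h l : H} {N M : ℕ} {v : Fin N → Fin 2 → H} {w : Fin M → Fin 2 → H}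
    (hv : SRep k 1 h N v) (hw : SRep k 1 l M w) :
    S.ι (a ⊗ₜ[k] h) * S.hE l =
      ∑ i, ∑ j, S.ι ((a * S.f (v i 0) (w j 0)) ⊗ₜ[k] (v i 1 * w j 1)) := by
  rw [← aE_mul_hE, mul_assoc, S.hE_mul_hE hv hw, Finset.mul_sum]
  simp only [Finset.mul_sum, aE_mul_ι]

end CrossedProduct

section HopfBarModule

variable {E W W' N : Type} [Ring E] [Algebra k E] [AddCommGroup W] [Module k W]
  [AddCommGroup W'] [Module k W'] [AddCommGroup N] [Module k N] [Module E N] [IsScalarTower k E N]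

variable (k H E W) in
/-- `E ⊗ H̄^{⊗s} ⊗ W`, the common shape of `X_{rs}` (`W = Ā^{⊗r} ⊗ E`) and of `Y_s` (`W = H`). -/
abbrev HopfBar (s : ℕ) : Type := E ⊗[k] (Tpow k (Qbar k H) s ⊗[k] W)

namespace HopfBar

/-- The map `E ⊗ H̄^{⊗s} ⊗ W → E ⊗ H̄^{⊗s} ⊗ W'` induced by a map `W → W'`. -/
def map {s : ℕ} (F : W →ₗ[k] W') : HopfBar k H E W s →ₗ[E] HopfBar k H E W' s :=
  AlgebraTensorModule.lTensor E E (F.lTensor (Tpow k (Qbar k H) s))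

/-- The extension of a `k`-linear map `H̄^{⊗s} ⊗ W → N` to an `E`-linear map. -/
def lift {s : ℕ} (G : Tpow k (Qbar k H) s ⊗[k] W →ₗ[k] N) : HopfBar k H E W s →ₗ[E] N :=
  AlgebraTensorModule.lift (LinearMap.toSpanSingleton E _ G)

lemma map_tmul {s : ℕ} (F : W →ₗ[k] W') (e : E) (t : Tpow k (Qbar k H) s) (w : W) :
    map F (e ⊗ₜ[k] (t ⊗ₜ[k] w)) = e ⊗ₜ (t ⊗ₜ F w) := rfl

lemma hom_ext {s : ℕ} {f g : HopfBar k H E W s →ₗ[E] N}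
    (h : ∀ t w, f (1 ⊗ₜ (t ⊗ₜ w)) = g (1 ⊗ₜ (t ⊗ₜ w))) : f = g := by
  ext t w
  exact h t w

lemma hom_ext_zero {f g : HopfBar k H E W 0 →ₗ[E] N}
    (h : ∀ w, f (1 ⊗ₜ (Tpow.nil ⊗ₜ w)) = g (1 ⊗ₜ (Tpow.nil ⊗ₜ w))) : f = g := by
  refine hom_ext fun t w ↦ ?_
  obtain ⟨c, rfl⟩ := Tpow.eq_smul_nil t
  rw [← TensorProduct.smul_tmul', TensorProduct.tmul_smul, ← algebraMap_smul E, map_smul,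
    map_smul, h]

lemma hom_ext_cons {s : ℕ} {M : Type} [AddCommGroup M] [Module k M]
    {f g : HopfBar k H E W (s + 1) →ₗ[k] M}
    (h : ∀ e x t w, f (e ⊗ₜ (Tpow.cons (qbar k H x) t ⊗ₜ w)) =
      g (e ⊗ₜ (Tpow.cons (qbar k H x) t ⊗ₜ w))) : f = g := by
  ext e t w
  simp only [TensorProduct.AlgebraTensorModule.curry_apply, TensorProduct.curry_apply,
    LinearMap.restrictScalars_apply]
  induction t using Tpow.cons_induction with
  | zero => simp
  | cons v t =>
    obtain ⟨x, rfl⟩ := (unitSub k H).mkQ_surjective v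
    exact h e x t w
  | add t t' ht ht' => simp only [TensorProduct.add_tmul, TensorProduct.tmul_add, map_add, ht, ht']

lemma hom_ext_succ {s : ℕ} {f g : HopfBar k H E W (s + 1) →ₗ[E] N}
    (h : ∀ x t w, f (1 ⊗ₜ (Tpow.cons (qbar k H x) t ⊗ₜ w)) =
      g (1 ⊗ₜ (Tpow.cons (qbar k H x) t ⊗ₜ w))) : f = g := by
  refine LinearMap.restrictScalars_injective k (hom_ext_cons fun e x t w ↦ ?_)
  rw [← mul_one e, ← smul_eq_mul, ← TensorProduct.smul_tmul', LinearMap.restrictScalars_apply,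
    LinearMap.restrictScalars_apply, map_smul, map_smul, h]

end HopfBar

namespace CrossedProduct

variable (S : CrossedProduct k A H E)

lemma hopfBar_hom_ext {s : ℕ} {M : Type} [AddCommGroup M] [Module k M]
    {f g : HopfBar k H E W s →ₗ[k] M}
    (h : ∀ a x t w, f (S.ι (a ⊗ₜ x) ⊗ₜ (t ⊗ₜ w)) = g (S.ι (a ⊗ₜ x) ⊗ₜ (t ⊗ₜ w))) : f = g := by
  refine TensorProduct.ext (S.hom_ext fun a x ↦ ?_)
  ext t w
  exact h a x t w

/-- The `k`-linear map `a # h ⊗ 𝐡 ⊗ w ↦ a ⊗ h ⊗ 𝐡 ⊗ w`, which turns the `H`-part of the left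
factor into a bar variable. -/
def shift {s : ℕ} : HopfBar k H E W s →ₗ[k] HopfBar k H E W (s + 1) :=
  TensorProduct.map S.aE (TensorProduct.lift (LinearMap.rTensorHom W ∘ₗ Tpow.cons ∘ₗ qbar k H)) ∘ₗ
    (TensorProduct.assoc k A H _).toLinearMap ∘ₗ S.ι.symm.toLinearMap.rTensor _

/-- The map `shift` in degree `-1`: `a # h ↦ a ⊗ h`. -/
def shiftE : E →ₗ[k] Yc k H E 0 :=
  TensorProduct.map S.aE (TensorProduct.mk k _ H Tpow.nil) ∘ₗ S.ι.symm.toLinearMap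

lemma shift_tmul {s : ℕ} (a : A) (h : H) (t : Tpow k (Qbar k H) s) (w : W) :
    S.shift (S.ι (a ⊗ₜ h) ⊗ₜ (t ⊗ₜ w)) = S.aE a ⊗ₜ (Tpow.cons (qbar k H h) t ⊗ₜ w) := by
  simp [shift]

lemma shift_hE_tmul {s : ℕ} (h : H) (t : Tpow k (Qbar k H) s) (w : W) :
    S.shift (S.hE h ⊗ₜ (t ⊗ₜ w)) = 1 ⊗ₜ (Tpow.cons (qbar k H h) t ⊗ₜ w) := by
  rw [← S.aE_one]
  exact S.shift_tmul 1 h t w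

lemma shift_aE_smul {s : ℕ} (a : A) (x : HopfBar k H E W s) :
    S.shift (S.aE a • x) = S.aE a • S.shift x := by
  have : S.shift ∘ₗ Algebra.lsmul k k (HopfBar k H E W s) (S.aE a) =
      Algebra.lsmul k k (HopfBar k H E W (s + 1)) (S.aE a) ∘ₗ S.shift := by
    refine S.hopfBar_hom_ext fun b h t w ↦ ?_
    simp only [LinearMap.comp_apply, Algebra.lsmul_coe, shift_tmul, TensorProduct.smul_tmul',
      smul_eq_mul, aE_mul_ι, aE_mul_aE]
  exact LinearMap.congr_fun this x

lemma shift_map {s : ℕ} (F : W →ₗ[k] W') (x : HopfBar k H E W s) :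
    S.shift (HopfBar.map F x) = HopfBar.map F (S.shift x) := by
  have : S.shift ∘ₗ (HopfBar.map F).restrictScalars k =
      (HopfBar.map F).restrictScalars k ∘ₗ S.shift (s := s) :=
    S.hopfBar_hom_ext fun a h t w ↦ by
      simp only [LinearMap.comp_apply, LinearMap.restrictScalars_apply, HopfBar.map_tmul,
        shift_tmul]
  exact LinearMap.congr_fun this x

lemma shiftE_ι (a : A) (h : H) : S.shiftE (S.ι (a ⊗ₜ h)) = S.aE a ⊗ₜ (Tpow.nil ⊗ₜ h) := by
  simp [shiftE]

lemma shiftE_hE (h : H) : S.shiftE (S.hE h) = 1 ⊗ₜ (Tpow.nil ⊗ₜ h) := by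
  rw [← S.aE_one]
  exact S.shiftE_ι 1 h

lemma shiftE_aE_mul (a : A) (e : E) : S.shiftE (S.aE a * e) = S.aE a • S.shiftE e := by
  have : S.shiftE ∘ₗ LinearMap.mulLeft k (S.aE a) =
      Algebra.lsmul k k (Yc k H E 0) (S.aE a) ∘ₗ S.shiftE := by
    refine S.hom_ext fun b h ↦ ?_
    simp only [LinearMap.comp_apply, LinearMap.mulLeft_apply, Algebra.lsmul_coe, shiftE_ι,
      TensorProduct.smul_tmul', smul_eq_mul, aE_mul_ι, aE_mul_aE]
  exact LinearMap.congr_fun this e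

/-- The augmentation `∂_{-1} : Y_0 → E`, `e ⊗ h ↦ -e(1 # h)`. -/
def augY : Yc k H E 0 →ₗ[E] E :=
  -HopfBar.lift
    (TensorProduct.lift (M := Tpow k (Qbar k H) 0) ((LinearMap.lsmul k (H →ₗ[k] E)).flip S.hE))

lemma augY_tmul (e : E) (h : H) : S.augY (e ⊗ₜ (Tpow.nil ⊗ₜ h)) = -(e * S.hE h) :=
  congrArg (fun x ↦ -(e * x)) (one_smul k (S.hE h))

lemma augY_shiftE (e : E) : S.augY (S.shiftE e) = -e := by
  have : S.augY.restrictScalars k ∘ₗ S.shiftE = -LinearMap.id := S.hom_ext fun a h ↦ by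
    simp only [LinearMap.comp_apply, shiftE_ι, LinearMap.restrictScalars_apply, augY_tmul,
      aE_mul_hE, LinearMap.neg_apply, LinearMap.id_apply]
  exact LinearMap.congr_fun this e

end CrossedProduct

namespace HopfBar

variable (S : CrossedProduct k A H E)

lemma hom_ext_shift {s : ℕ} {f g : HopfBar k H E W (s + 1) →ₗ[E] N}
    (h : ∀ x, f (S.shift x) = g (S.shift x)) : f = g :=
  hom_ext_succ fun x t w ↦ by simpa only [S.shift_hE_tmul] using h (S.hE x ⊗ₜ (t ⊗ₜ w))

lemma hom_ext_shiftE {f g : Yc k H E 0 →ₗ[E] N}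
    (h : ∀ e, f (S.shiftE e) = g (S.shiftE e)) : f = g :=
  hom_ext_zero fun x ↦ by simpa only [S.shiftE_hE] using h (S.hE x)

end HopfBar

end HopfBarModule

lemma Tpow.hom_ext_qbar {B M : Type} [Ring B] [Algebra k B] [AddCommGroup M] [Module k M] {n : ℕ}
    {f g : Tpow k (Qbar k B) n →ₗ[k] M}
    (h : ∀ b : Fin n → B, f (tp k fun i ↦ qbar k B (b i)) = g (tp k fun i ↦ qbar k B (b i))) :
    f = g := by
  refine hom_ext fun v ↦ ?_
  choose b hb using fun i ↦ (unitSub k B).mkQ_surjective (v i)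
  rw [← funext hb]
  exact h b

lemma Tpow.hom_ext_nil_tmul {V W M : Type} [AddCommGroup V] [Module k V] [AddCommGroup W]
    [Module k W] [AddCommGroup M] [Module k M] {f g : Tpow k V 0 ⊗[k] W →ₗ[k] M}
    (h : f ∘ₗ TensorProduct.mk k _ W nil = g ∘ₗ TensorProduct.mk k _ W nil) : f = g := by
  refine TensorProduct.ext' fun t w ↦ ?_
  obtain ⟨c, rfl⟩ := eq_smul_nil t
  rw [← TensorProduct.smul_tmul', map_smul, map_smul]
  exact congrArg (c • ·) (LinearMap.congr_fun h w)

lemma sum_fin_pi_zero {N : Type} [AddCommMonoid N] {α : Fin 0 → Type} [∀ i, Fintype (α i)]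
    (F : (∀ i, α i) → N) : ∑ c, F c = F fun i ↦ i.elim0 :=
  (Fintype.sum_unique F).trans (congrArg F (funext fun i ↦ i.elim0))

lemma sum_fin_pi_succ {N : Type} [AddCommMonoid N] {n : ℕ} {α : Fin (n + 1) → Type}
    [∀ i, Fintype (α i)] (F : (∀ i, α i) → N) : ∑ c, F c = ∑ x, ∑ c, F (Fin.cons x c) := by
  rw [← (Fin.consEquiv α).sum_comp, Fintype.sum_prod_type]
  rfl

section Recursion

variable {E W N : Type} [Ring E] [Algebra k E] [AddCommGroup W] [Module k W] [AddCommGroup N]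
  [Module k N] [Module E N] [IsScalarTower k E N] (S : CrossedProduct k A H E)

namespace HopfBar

variable {S} {s : ℕ} {F : HopfBar k H E W (s + 1) →ₗ[k] N} {K : HopfBar k H E W s →ₗ[k] N}
  (hFK : ∀ (a : A) (h₀ h₁ : H) (hs : Fin s → H) (w : W),
    F (S.ι (a ⊗ₜ h₀) ⊗ₜ (Tpow.cons (qbar k H h₁) (tp k fun i ↦ qbar k H (hs i)) ⊗ₜ w)) =
      S.ι (a ⊗ₜ h₀) • K (S.hE h₁ ⊗ₜ (tp k (fun i ↦ qbar k H (hs i)) ⊗ₜ w)))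
include hFK

lemma apply_cons_of_recursion (e : E) (h : H) (t : Tpow k (Qbar k H) s) (w : W) :
    F (e ⊗ₜ (Tpow.cons (qbar k H h) t ⊗ₜ w)) = e • K (S.hE h ⊗ₜ (t ⊗ₜ w)) := by
  let L (e : E) : Tpow k (Qbar k H) s →ₗ[k] N :=
    F ∘ₗ TensorProduct.mk k E _ e ∘ₗ (TensorProduct.mk k _ W).flip w ∘ₗ Tpow.cons (qbar k H h)
  let L' (e : E) : Tpow k (Qbar k H) s →ₗ[k] N :=
    Algebra.lsmul k k N e ∘ₗ K ∘ₗ TensorProduct.mk k E _ (S.hE h) ∘ₗ (TensorProduct.mk k _ W).flip w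
  have hL (a : A) (h₀ : H) : L (S.ι (a ⊗ₜ h₀)) = L' (S.ι (a ⊗ₜ h₀)) :=
    Tpow.hom_ext_qbar fun hs ↦ hFK a h₀ h hs w
  have : (F ∘ₗ (TensorProduct.mk k E _).flip (Tpow.cons (qbar k H h) t ⊗ₜ w)) =
      (Algebra.lsmul k k N).toLinearMap.flip (K (S.hE h ⊗ₜ (t ⊗ₜ w))) :=
    S.hom_ext fun a h₀ ↦ LinearMap.congr_fun (hL a h₀) t
  exact LinearMap.congr_fun this e

lemma map_smul_of_recursion (e : E) (x : HopfBar k H E W (s + 1)) : F (e • x) = e • F x := by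
  have : F ∘ₗ Algebra.lsmul k k _ e = Algebra.lsmul k k N e ∘ₗ F :=
    hom_ext_cons fun e' h t w ↦ by
      simp only [LinearMap.comp_apply, Algebra.lsmul_coe, TensorProduct.smul_tmul', smul_eq_mul,
        apply_cons_of_recursion hFK, mul_smul]
  exact LinearMap.congr_fun this x

lemma apply_shift_of_recursion (hK : ∀ a x, K (S.aE a • x) = S.aE a • K x)
    (x : HopfBar k H E W s) : F (S.shift x) = K x := by
  have : F ∘ₗ S.shift = K := S.hopfBar_hom_ext fun a h t w ↦ by
    rw [LinearMap.comp_apply, S.shift_tmul, apply_cons_of_recursion hFK, ← hK,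
      TensorProduct.smul_tmul', smul_eq_mul, S.aE_mul_hE]
  exact LinearMap.congr_fun this x

end HopfBar

namespace CrossedProduct

lemma shift_ygen {s : ℕ} (b : A) (x : H) (hs : Fin s → H) (h : H) :
    S.shift (ygen (S.ι (b ⊗ₜ[k] x)) hs h) = ygen (S.aE b) (Fin.cons x hs : Fin (s + 1) → H) h :=
  S.shift_tmul b x _ h

end CrossedProduct

lemma smul_ygen {s : ℕ} (e e' : E) (hs : Fin s → H) (h : H) :
    e • (ygen e' hs h : Yc k H E s) = ygen (e * e') hs h := rfl

lemma sum_ygen {s : ℕ} {I : Type} (J : Finset I) (e : I → E) (hs : Fin s → H) (h : H) :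
    (ygen (∑ i ∈ J, e i) hs h : Yc k H E s) = ∑ i ∈ J, ygen (e i) hs h :=
  TensorProduct.sum_tmul ..

namespace ResData

variable {S} (R : ResData k A H E S)

lemma mu_xgen_cons (s : ℕ) (a : A) (h₀ h₁ : H) (hs : Fin s → H) (b : A) (h' : H) :
    R.mu (s + 1) (xgen (S.ι (a ⊗ₜ h₀)) (Fin.cons h₁ hs : Fin (s + 1) → H)
      (fun i : Fin 0 ↦ i.elim0) (S.ι (b ⊗ₜ h'))) =
    S.ι (a ⊗ₜ h₀) • S.shift (R.mu s
      (xgen (S.hE h₁) hs (fun i : Fin 0 ↦ i.elim0) (S.ι (b ⊗ₜ h')))) := by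
  choose Nv v hv using fun i ↦ SRep.exists_sRep (k := k) 1
    ((Fin.cons h₀ (Fin.cons h₁ hs) : Fin (s + 2) → H) i)
  have hs' := R.mu_eq s 1 h₁ hs b h' (fun i ↦ Nv i.succ) (fun i ↦ v i.succ) fun i ↦ hv i.succ
  refine (R.mu_eq (s + 1) a h₀ (Fin.cons h₁ hs) b h' Nv v hv).trans
    (.trans ?_ (congrArg (S.ι (a ⊗ₜ h₀) • S.shift ·) hs').symm)
  rw [map_sum, Finset.smul_sum, sum_fin_pi_succ, Finset.sum_comm]
  refine Finset.sum_congr rfl fun c _ ↦ ?_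
  rw [S.shift_ygen, smul_ygen, one_mul, S.ι_mul_aE a _ (h := h₀) (hv 0), sum_ygen]
  rfl

lemma mu_xgen_elim0 (a : A) (h₀ : H) (b : A) (h' : H) :
    R.mu 0 (xgen (S.ι (a ⊗ₜ h₀)) (fun i : Fin 0 ↦ i.elim0) (fun i : Fin 0 ↦ i.elim0)
      (S.ι (b ⊗ₜ h'))) = S.ι (a ⊗ₜ h₀) • S.shiftE (S.ι (b ⊗ₜ h')) := by
  choose Nv v hv using fun i ↦ SRep.exists_sRep (k := k) 1
    ((Fin.cons h₀ (fun i : Fin 0 ↦ i.elim0) : Fin 1 → H) i)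
  refine (R.mu_eq 0 a h₀ (fun i : Fin 0 ↦ i.elim0) b h' Nv v hv).trans ?_
  rw [S.shiftE_ι, TensorProduct.smul_tmul', smul_eq_mul, S.ι_mul_aE a b (h := h₀) (hv 0),
    TensorProduct.sum_tmul, sum_fin_pi_succ]
  exact Finset.sum_congr rfl fun x _ ↦ Fintype.sum_unique _

lemma mu_cons (s : ℕ) (a : A) (h₀ h₁ : H) (hs : Fin s → H) (w : Tpow k (Qbar k A) 0 ⊗[k] E) :
    R.mu (s + 1) (S.ι (a ⊗ₜ h₀) ⊗ₜ (Tpow.cons (qbar k H h₁) (tp k fun i ↦ qbar k H (hs i)) ⊗ₜ w)) =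
      S.ι (a ⊗ₜ h₀) • S.shift (R.mu s (S.hE h₁ ⊗ₜ (tp k (fun i ↦ qbar k H (hs i)) ⊗ₜ w))) := by
  let t : Tpow k (Qbar k H) s := tp k fun i ↦ qbar k H (hs i)
  have : R.mu (s + 1) ∘ₗ TensorProduct.mk k E _ (S.ι (a ⊗ₜ h₀)) ∘ₗ
        TensorProduct.mk k _ _ (Tpow.cons (qbar k H h₁) t) =
      Algebra.lsmul k k _ (S.ι (a ⊗ₜ h₀)) ∘ₗ S.shift ∘ₗ R.mu s ∘ₗ
        TensorProduct.mk k E _ (S.hE h₁) ∘ₗ TensorProduct.mk k _ _ t :=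
    Tpow.hom_ext_nil_tmul (S.hom_ext fun b h' ↦ R.mu_xgen_cons s a h₀ h₁ hs b h')
  exact LinearMap.congr_fun this w

lemma mu_zero_tmul (e e' : E) :
    R.mu 0 (e ⊗ₜ (Tpow.nil ⊗ₜ (Tpow.nil ⊗ₜ e'))) = e • S.shiftE e' := by
  have : (TensorProduct.mk k E E).compr₂
        (R.mu 0 ∘ₗ (TensorProduct.map LinearMap.id
          (TensorProduct.mk k (Tpow k (Qbar k H) 0) _ Tpow.nil ∘ₗ
            TensorProduct.mk k (Tpow k (Qbar k A) 0) E Tpow.nil))) =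
      (Algebra.lsmul k k (Yc k H E 0)).toLinearMap.compl₂ S.shiftE :=
    S.hom_ext fun a h₀ ↦ S.hom_ext fun b h' ↦ R.mu_xgen_elim0 a h₀ b h'
  exact LinearMap.congr_fun₂ this e e'

lemma mu_smul (s : ℕ) (e : E) (x : Xc k A H E 0 s) : R.mu s (e • x) = e • R.mu s x := by
  cases s with
  | succ s => exact HopfBar.map_smul_of_recursion (K := S.shift ∘ₗ R.mu s) (R.mu_cons s) e x
  | zero =>
    have : R.mu 0 ∘ₗ Algebra.lsmul k k _ e = Algebra.lsmul k k _ e ∘ₗ R.mu 0 :=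
      TensorProduct.ext (LinearMap.ext fun e' ↦ Tpow.hom_ext_nil_tmul
        (Tpow.hom_ext_nil_tmul (LinearMap.ext fun e'' ↦ by
          have := R.mu_zero_tmul (e * e') e''
          rwa [mul_smul, ← mu_zero_tmul] at this)))
    exact LinearMap.congr_fun this x

/-- `μ_s` as an `E`-linear map. -/
def muE (s : ℕ) : Xc k A H E 0 s →ₗ[E] Yc k H E s where
  __ := R.mu s
  map_smul' := R.mu_smul s

lemma muE_zero_tmul (e e' : E) :
    R.muE 0 (e ⊗ₜ (Tpow.nil ⊗ₜ (Tpow.nil ⊗ₜ e'))) = e • S.shiftE e' :=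
  R.mu_zero_tmul e e'

lemma muE_shift (s : ℕ) (x : Xc k A H E 0 s) : R.muE (s + 1) (S.shift x) = S.shift (R.muE s x) :=
  HopfBar.apply_shift_of_recursion (K := S.shift ∘ₗ R.mu s) (R.mu_cons s)
    (fun a x ↦ (congrArg S.shift (R.mu_smul s _ x)).trans (S.shift_aE_smul a _)) x

end ResData

end Recursion

section DelRecursion

variable {E : Type} [Ring E] [Algebra k E]

/-- The `i`-th face `a f(zᵢ⁽¹⁾, zᵢ₊₁⁽¹⁾)^{⋯} ⊗ ⋯ ⊗ zᵢ⁽²⁾zᵢ₊₁⁽²⁾ ⊗ ⋯` of `a ⊗ z₀ ⊗ ⋯ ⊗ zₛ₊₂`,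
computed from representatives `v j` of the comultiplications of the `z j`. -/
def CrossedProduct.delFace (S : CrossedProduct k A H E) {s : ℕ} (a : A) (z : Fin (s + 3) → H)
    {Nv : Fin (s + 3) → ℕ} (v : ∀ i, Fin (Nv i) → Fin 2 → H) (i : Fin (s + 2)) : Yc k H E s :=
  ∑ c : (∀ j : Fin ((i : ℕ) + 2), Fin (Nv ⟨j, by omega⟩)),
    ygen
      (S.ι ((a * iterAct k S.act (fun j : Fin (i : ℕ) ↦ v ⟨j, by omega⟩ (c ⟨j, by omega⟩) 0)
          (S.f (v ⟨i, by omega⟩ (c ⟨i, by omega⟩) 0)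
            (v ⟨i + 1, by omega⟩ (c ⟨i + 1, by omega⟩) 0))) ⊗ₜ[k]
        (if (i : ℕ) = 0 then
            v ⟨0, by omega⟩ (c ⟨0, by omega⟩) 1 * v ⟨1, by omega⟩ (c ⟨1, by omega⟩) 1
          else v ⟨0, by omega⟩ (c ⟨0, by omega⟩) 1)))
      (fun p : Fin s ↦
        if hp : (p : ℕ) + 1 < (i : ℕ) then v ⟨p + 1, by omega⟩ (c ⟨p + 1, by omega⟩) 1
        else if hp' : (p : ℕ) + 1 = (i : ℕ) then
          v ⟨p + 1, by omega⟩ (c ⟨p + 1, by omega⟩) 1 *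
            v ⟨p + 2, by omega⟩ (c ⟨p + 2, by omega⟩) 1
        else z ⟨p + 2, by omega⟩)
      (if hi : (i : ℕ) = s + 1 then
          v ⟨s + 1, by omega⟩ (c ⟨s + 1, by omega⟩) 1 * v ⟨s + 2, by omega⟩ (c ⟨s + 2, by omega⟩) 1
        else z ⟨s + 2, by omega⟩)

lemma ygen_congr {s : ℕ} {e e' : E} {hs hs' : Fin s → H} {h h' : H} (he : e = e')
    (hhs : ∀ p, hs p = hs' p) (hh : h = h') : (ygen e hs h : Yc k H E s) = ygen e' hs' h' := by
  rw [he, funext hhs, hh]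

namespace CrossedProduct

variable (S : CrossedProduct k A H E)

lemma delFace_zero {s : ℕ} (a : A) (z : Fin (s + 3) → H) {Nv : Fin (s + 3) → ℕ}
    {v : ∀ i, Fin (Nv i) → Fin 2 → H} (hv : ∀ i, SRep k 1 (z i) (Nv i) (v i)) :
    S.delFace a z v 0 =
      ygen (S.ι (a ⊗ₜ z 0) * S.hE (z 1)) (fun p ↦ z p.castSucc.succ.succ) (z (Fin.last _)) := by
  rw [S.ι_mul_hE a (hv 0) (hv 1), sum_ygen]
  refine (sum_fin_pi_succ _).trans (Finset.sum_congr rfl fun x _ ↦ ?_)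
  rw [sum_ygen]
  refine (sum_fin_pi_succ _).trans (Finset.sum_congr rfl fun y _ ↦ ?_)
  exact (sum_fin_pi_zero _).trans (ygen_congr rfl (fun p ↦ rfl) rfl)

lemma delFace_one (a : A) (z : Fin 3 → H) {Nv : Fin 3 → ℕ}
    {v : ∀ i, Fin (Nv i) → Fin 2 → H} (hv : ∀ i, SRep k 1 (z i) (Nv i) (v i)) :
    S.delFace a z v 1 = S.ι (a ⊗ₜ z 0) • S.shiftE (S.hE (z 1) * S.hE (z 2)) := by
  rw [S.hE_mul_hE (hv 1) (hv 2), map_sum, Finset.smul_sum]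
  refine (sum_fin_pi_succ _).trans ?_
  rw [Finset.sum_comm]
  refine (sum_fin_pi_succ _).trans (Finset.sum_congr rfl fun y _ ↦ ?_)
  rw [map_sum, Finset.smul_sum]
  refine (sum_fin_pi_succ _).trans (Finset.sum_congr rfl fun x _ ↦ ?_)
  refine (sum_fin_pi_zero _).trans ?_
  rw [S.shiftE_ι, TensorProduct.smul_tmul', smul_eq_mul, S.ι_mul_aE a _ (hv 0),
    TensorProduct.sum_tmul]
  rfl

lemma delFace_succ {s : ℕ} (a : A) (h₀ : H) (z : Fin (s + 3) → H) {Nv : Fin (s + 4) → ℕ}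
    {v : ∀ i, Fin (Nv i) → Fin 2 → H} (hv : SRep k 1 h₀ (Nv 0) (v 0))
    (i : Fin (s + 2)) :
    S.delFace a (Fin.cons h₀ z : Fin (s + 4) → H) v i.succ =
      S.ι (a ⊗ₜ h₀) • S.shift (S.delFace 1 z (fun i ↦ v i.succ) i) := by
  rw [delFace, delFace, map_sum, Finset.smul_sum]
  refine (sum_fin_pi_succ _).trans ?_
  rw [Finset.sum_comm]
  refine Finset.sum_congr rfl fun c _ ↦ ?_
  rw [shift_ygen, smul_ygen, one_mul, S.ι_mul_aE a _ hv, sum_ygen]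
  refine Finset.sum_congr rfl fun x _ ↦ ygen_congr rfl (fun p ↦ ?_) ?_
  · refine Fin.cases ?_ (fun q ↦ ?_) p
    · rw [Fin.cons_zero]
      rcases Nat.eq_zero_or_pos (i : ℕ) with hi | hi
      · rw [dif_neg (by simp [hi]), dif_pos (by simp [hi]), if_pos hi]
        rfl
      · rw [dif_pos (by simpa using hi), if_neg hi.ne']
        rfl
    · simp only [Fin.cons_succ, Fin.val_succ, add_lt_add_iff_right, add_left_inj]
      rfl
  · simp only [Fin.val_succ, add_left_inj]
    rfl

end CrossedProduct

namespace ResData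

variable {S : CrossedProduct k A H E} (R : ResData k A H E S)

lemma del_eq_sum_delFace {s : ℕ} (a : A) (h₀ : H) (hs : Fin (s + 1) → H) (h' : H)
    {z : Fin (s + 2) → H} (hz : Fin.snoc hs h' = z) {Nv : Fin (s + 3) → ℕ}
    {v : ∀ i, Fin (Nv i) → Fin 2 → H}
    (hv : ∀ i, SRep k 1 ((Fin.cons h₀ z : Fin (s + 3) → H) i) (Nv i) (v i)) :
    R.del s (ygen (S.ι (a ⊗ₜ h₀)) hs h') =
      ∑ i : Fin (s + 2), ((-1 : ℤ) ^ ((i : ℕ) + 1)) •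
        S.delFace a (Fin.cons h₀ z : Fin (s + 3) → H) v i := by
  subst hz
  exact R.del_eq s a h₀ hs h' Nv v hv

lemma del_ygen_succ (s : ℕ) (a : A) (h₀ h₁ : H) (hs : Fin (s + 1) → H) (h' : H) :
    R.del (s + 1) (ygen (S.ι (a ⊗ₜ h₀)) (Fin.cons h₁ hs : Fin (s + 2) → H) h') =
      S.ι (a ⊗ₜ h₀) •
        (-ygen (S.hE h₁) hs h' - S.shift (R.del s (ygen (S.hE h₁) hs h'))) := by
  let z : Fin (s + 3) → H := Fin.cons h₁ (Fin.snoc hs h' : Fin (s + 2) → H)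
  choose Nv v hv using fun i ↦ SRep.exists_sRep (k := k) 1 ((Fin.cons h₀ z : Fin (s + 4) → H) i)
  have hz : (Fin.snoc (Fin.cons h₁ hs : Fin (s + 2) → H) h' : Fin (s + 3) → H) = z :=
    (Fin.cons_snoc_eq_snoc_cons (β := H) h₁ hs h').symm
  have first : S.delFace a (Fin.cons h₀ z : Fin (s + 4) → H) v 0 =
      S.ι (a ⊗ₜ h₀) • ygen (S.hE h₁) hs h' :=
    (S.delFace_zero a _ hv).trans
      (ygen_congr rfl (Fin.snoc_castSucc (α := fun _ ↦ H) h' hs)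
        (Fin.snoc_last (α := fun _ ↦ H) h' hs))
  rw [R.del_eq_sum_delFace a h₀ _ h' hz hv, CrossedProduct.hE,
    LinearMap.comp_apply, TensorProduct.mk_apply, LinearEquiv.coe_coe,
    R.del_eq_sum_delFace 1 h₁ hs h' rfl (v := fun i ↦ v i.succ) fun i ↦ hv i.succ,
    Fin.sum_univ_succ, first, smul_sub, smul_neg, sub_eq_add_neg, map_sum, Finset.smul_sum,
    ← Finset.sum_neg_distrib]
  congr 1
  · exact neg_one_zsmul _
  · refine Finset.sum_congr rfl fun i _ ↦ ?_
    rw [S.delFace_succ a h₀ z (hv 0), Fin.val_succ, pow_succ, mul_neg_one, neg_smul, map_zsmul,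
      smul_comm (S.ι _)]

lemma del_ygen_zero (a : A) (h₀ h₁ h' : H) :
    R.del 0 (ygen (S.ι (a ⊗ₜ h₀)) (Fin.cons h₁ (fun i : Fin 0 ↦ i.elim0) : Fin 1 → H) h') =
      S.ι (a ⊗ₜ h₀) •
        (-ygen (S.hE h₁) (fun i : Fin 0 ↦ i.elim0) h' -
          S.shiftE (S.augY (S.hE h₁ ⊗ₜ (Tpow.nil ⊗ₜ h')))) := by
  let z : Fin 3 → H := Fin.cons h₀ ![h₁, h']
  choose Nv v hv using fun i ↦ SRep.exists_sRep (k := k) 1 (z i)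
  have hz : (Fin.snoc (Fin.cons h₁ (fun i : Fin 0 ↦ i.elim0) : Fin 1 → H) h' : Fin 2 → H) =
      ![h₁, h'] := by
    ext i
    fin_cases i <;> rfl
  have first : S.delFace a z v 0 =
      S.ι (a ⊗ₜ h₀) • ygen (S.hE h₁) (fun i : Fin 0 ↦ i.elim0) h' :=
    (S.delFace_zero a _ hv).trans (ygen_congr rfl (fun i ↦ i.elim0) rfl)
  have last : S.delFace a z v 1 = S.ι (a ⊗ₜ h₀) • S.shiftE (S.hE h₁ * S.hE h') :=
    S.delFace_one a _ hv
  rw [R.del_eq_sum_delFace a h₀ _ h' hz hv, Fin.sum_univ_two, first, last, S.augY_tmul, map_neg,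
    sub_neg_eq_add, smul_add, smul_neg]
  simp

lemma del_cons (s : ℕ) (a : A) (h₀ h₁ : H) (hs : Fin (s + 1) → H) (h' : H) :
    R.del (s + 1)
        (S.ι (a ⊗ₜ h₀) ⊗ₜ (Tpow.cons (qbar k H h₁) (tp k fun i ↦ qbar k H (hs i)) ⊗ₜ h')) =
      S.ι (a ⊗ₜ h₀) • (-LinearMap.id - S.shift ∘ₗ R.del s : Yc k H E (s + 1) →ₗ[k] Yc k H E (s + 1))
        (S.hE h₁ ⊗ₜ (tp k (fun i ↦ qbar k H (hs i)) ⊗ₜ h')) :=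
  R.del_ygen_succ s a h₀ h₁ hs h'

lemma del_zero_cons (a : A) (h₀ h₁ : H) (hs : Fin 0 → H) (h' : H) :
    R.del 0
        (S.ι (a ⊗ₜ h₀) ⊗ₜ (Tpow.cons (qbar k H h₁) (tp k fun i ↦ qbar k H (hs i)) ⊗ₜ h')) =
      S.ι (a ⊗ₜ h₀) •
        (-LinearMap.id - S.shiftE ∘ₗ S.augY.restrictScalars k : Yc k H E 0 →ₗ[k] Yc k H E 0)
        (S.hE h₁ ⊗ₜ (tp k (fun i ↦ qbar k H (hs i)) ⊗ₜ h')) :=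
  R.del_ygen_zero a h₀ h₁ h'

lemma del_smul (s : ℕ) (e : E) (x : Yc k H E (s + 1)) : R.del s (e • x) = e • R.del s x := by
  cases s with
  | zero => exact HopfBar.map_smul_of_recursion R.del_zero_cons e x
  | succ s => exact HopfBar.map_smul_of_recursion (R.del_cons s) e x

/-- `∂_s` as an `E`-linear map. -/
def delE (s : ℕ) : Yc k H E (s + 1) →ₗ[E] Yc k H E s where
  __ := R.del s
  map_smul' := R.del_smul s

lemma delE_zero_shift (x : Yc k H E 0) : R.delE 0 (S.shift x) = -x - S.shiftE (S.augY x) := by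
  refine HopfBar.apply_shift_of_recursion R.del_zero_cons (fun a x ↦ ?_) x
  simp only [LinearMap.sub_apply, LinearMap.neg_apply, LinearMap.id_apply, LinearMap.comp_apply,
    LinearMap.restrictScalars_apply, map_smul, smul_sub, smul_neg]
  rw [smul_eq_mul, S.shiftE_aE_mul]

lemma delE_succ_shift (s : ℕ) (x : Yc k H E (s + 1)) :
    R.delE (s + 1) (S.shift x) = -x - S.shift (R.delE s x) := by
  refine HopfBar.apply_shift_of_recursion (R.del_cons s) (fun a x ↦ ?_) x
  simp only [LinearMap.sub_apply, LinearMap.neg_apply, LinearMap.id_apply, LinearMap.comp_apply,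
    R.del_smul, S.shift_aE_smul, smul_sub, smul_neg]

lemma augY_delE_zero (x : Yc k H E 1) : S.augY (R.delE 0 x) = 0 := by
  have : S.augY ∘ₗ R.delE 0 = 0 := HopfBar.hom_ext_shift S fun x ↦ by
    rw [LinearMap.comp_apply, delE_zero_shift, map_sub, map_neg, S.augY_shiftE, sub_self,
      LinearMap.zero_apply]
  exact LinearMap.congr_fun this x

lemma delE_comp_delE (s : ℕ) : R.delE s ∘ₗ R.delE (s + 1) = 0 := by
  induction s with
  | zero =>
    refine HopfBar.hom_ext_shift S fun x ↦ ?_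
    rw [LinearMap.comp_apply, delE_succ_shift, map_sub, map_neg, delE_zero_shift, augY_delE_zero,
      map_zero, sub_zero, sub_self, LinearMap.zero_apply]
  | succ s ih =>
    refine HopfBar.hom_ext_shift S fun x ↦ ?_
    rw [LinearMap.comp_apply, delE_succ_shift, map_sub, map_neg, delE_succ_shift,
      ← LinearMap.comp_apply (R.delE s), ih, LinearMap.zero_apply, map_zero, sub_zero, sub_self,
      LinearMap.zero_apply]

end ResData

end DelRecursion

section RightAction

variable {E : Type} [Ring E] [Algebra k E]

/-- Right multiplication by `z` on `X_{rs}`, as an `E`-linear map. -/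
def rightX (z : E) {r s : ℕ} : Xc k A H E r s →ₗ[E] Xc k A H E r s :=
  HopfBar.map ((LinearMap.mulRight k z).lTensor (Tpow k (Qbar k A) r))

/-- `σ⁰_{0,s} : Y_s → X_{0s}` as an `E`-linear map. -/
def CrossedProduct.sectionX (S : CrossedProduct k A H E) {s : ℕ} :
    Yc k H E s →ₗ[E] Xc k A H E 0 s :=
  HopfBar.map (TensorProduct.mk k (Tpow k (Qbar k A) 0) E Tpow.nil ∘ₗ S.hE)

namespace ResData

variable {S : CrossedProduct k A H E} (R : ResData k A H E S)

lemma sig0_apply {s : ℕ} (y : Yc k H E s) : R.sig0 s y = S.sectionX y := by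
  have : R.sig0 s = S.sectionX.restrictScalars k := TensorProduct.ext' fun e t ↦ by
    induction t using TensorProduct.induction_on with
    | zero => simp
    | tmul t h =>
      have : R.sig0 s ∘ₗ TensorProduct.mk k E _ e ∘ₗ (TensorProduct.mk k _ H).flip h =
          S.sectionX.restrictScalars k ∘ₗ TensorProduct.mk k E _ e ∘ₗ
            (TensorProduct.mk k _ H).flip h :=
        Tpow.hom_ext_qbar fun hs ↦ R.sig0_eq s e hs h
      exact LinearMap.congr_fun this t
    | add t t' ht ht' => rw [TensorProduct.tmul_add, map_add, map_add, ht, ht']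
  exact LinearMap.congr_fun this y

lemma muE_sectionX {s : ℕ} (y : Yc k H E s) : R.muE s (S.sectionX y) = y := by
  suffices h : R.muE s ∘ₗ S.sectionX = LinearMap.id from LinearMap.congr_fun h y
  clear y
  induction s with
  | zero =>
    refine HopfBar.hom_ext_zero fun h ↦ (R.muE_zero_tmul 1 (S.hE h)).trans ?_
    rw [one_smul, S.shiftE_hE, LinearMap.id_apply]
  | succ s ih =>
    refine HopfBar.hom_ext_shift S fun y ↦ ?_
    rw [LinearMap.comp_apply, CrossedProduct.sectionX, ← S.shift_map, muE_shift]
    exact congrArg S.shift (LinearMap.congr_fun ih y)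

/-- The right action of `E` on `Y_s`, transported from `X_{0s}` along `μ_s` and its section. -/
def rightY (z : E) {s : ℕ} : Yc k H E s →ₗ[E] Yc k H E s :=
  R.muE s ∘ₗ rightX z ∘ₗ S.sectionX

lemma rightY_shift (z : E) {s : ℕ} (y : Yc k H E s) :
    R.rightY z (S.shift y) = S.shift (R.rightY z y) := by
  simp only [rightY, LinearMap.comp_apply, CrossedProduct.sectionX, rightX, ← S.shift_map,
    R.muE_shift]

lemma rightY_shiftE (z e : E) : R.rightY z (S.shiftE e) = S.shiftE (e * z) := by
  have : (R.rightY z).restrictScalars k ∘ₗ S.shiftE = S.shiftE ∘ₗ LinearMap.mulRight k z := by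
    refine S.hom_ext fun a h ↦ ?_
    have := R.muE_zero_tmul (S.aE a) (S.hE h * z)
    rw [← S.shiftE_aE_mul, ← mul_assoc, S.aE_mul_hE] at this
    rw [LinearMap.comp_apply, S.shiftE_ι]
    exact this
  exact LinearMap.congr_fun this e

lemma muE_rightX (z : E) {s : ℕ} (x : Xc k A H E 0 s) :
    R.muE s (rightX z x) = R.rightY z (R.muE s x) := by
  suffices h : R.muE s ∘ₗ rightX z = R.rightY z ∘ₗ R.muE s from LinearMap.congr_fun h x
  clear x
  induction s with
  | zero =>
    refine HopfBar.hom_ext_zero fun w ↦ ?_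
    have : (R.muE 0 ∘ₗ rightX z).restrictScalars k ∘ₗ TensorProduct.mk k E _ 1 ∘ₗ
          TensorProduct.mk k _ _ Tpow.nil =
        (R.rightY z ∘ₗ R.muE 0).restrictScalars k ∘ₗ TensorProduct.mk k E _ 1 ∘ₗ
          TensorProduct.mk k _ _ Tpow.nil :=
      Tpow.hom_ext_nil_tmul (LinearMap.ext fun e ↦ ?_)
    · exact LinearMap.congr_fun this w
    refine (R.muE_zero_tmul 1 (e * z)).trans ?_
    exact ((congrArg (R.rightY z) (R.muE_zero_tmul 1 e)).trans
      (by rw [map_smul, rightY_shiftE])).symm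
  | succ s ih =>
    refine HopfBar.hom_ext_shift S fun x ↦ ?_
    simp only [LinearMap.comp_apply, muE_shift, rightY_shift]
    rw [rightX, ← S.shift_map, muE_shift]
    exact congrArg S.shift (LinearMap.congr_fun ih x)

lemma augY_rightY (z : E) (y : Yc k H E 0) : S.augY (R.rightY z y) = S.augY y * z := by
  have : S.augY ∘ₗ R.rightY z = LinearMap.toSpanSingleton E E z ∘ₗ S.augY :=
    HopfBar.hom_ext_shiftE S fun e ↦ by
      rw [LinearMap.comp_apply, rightY_shiftE, S.augY_shiftE, LinearMap.comp_apply, S.augY_shiftE,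
        LinearMap.toSpanSingleton_apply, smul_eq_mul, neg_mul]
  exact LinearMap.congr_fun this y

lemma delE_rightY (z : E) {s : ℕ} (y : Yc k H E (s + 1)) :
    R.delE s (R.rightY z y) = R.rightY z (R.delE s y) := by
  suffices h : R.delE s ∘ₗ R.rightY z = R.rightY z ∘ₗ R.delE s from LinearMap.congr_fun h y
  clear y
  induction s with
  | zero =>
    refine HopfBar.hom_ext_shift S fun y ↦ ?_
    simp only [LinearMap.comp_apply, rightY_shift, delE_zero_shift, map_sub, map_neg,
      rightY_shiftE, augY_rightY]
  | succ s ih =>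
    refine HopfBar.hom_ext_shift S fun y ↦ ?_
    simp only [LinearMap.comp_apply, rightY_shift, delE_succ_shift, map_sub, map_neg]
    exact congrArg (- R.rightY z y - S.shift ·) (LinearMap.congr_fun ih y)

end ResData

end RightAction

section BarContraction

variable {E : Type} [Ring E] [Algebra k E]

namespace HopfBar

variable (k H E) in
/-- The contracting homotopy `e ⊗ 𝐡 ⊗ h ↦ (-1)^s e ⊗ 𝐡 ⊗ h̄ ⊗ 1` of `Y_*`. -/
def homotopyY (s : ℕ) : Yc k H E s →ₗ[E] Yc k H E (s + 1) :=
  (-1 : ℤ) ^ s • AlgebraTensorModule.lTensor E E ((TensorProduct.mk k _ H).flip 1 ∘ₗ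
    TensorProduct.lift (LinearMap.lcomp k _ (qbar k H) ∘ₗ Tpow.snoc))

variable (k H E) in
/-- The contracting homotopy `homotopyY` in degree `-1`: `e ↦ -e ⊗ 1`. -/
def sectionY : E →ₗ[E] Yc k H E 0 := -LinearMap.toSpanSingleton E _ (1 ⊗ₜ (Tpow.nil ⊗ₜ 1))

lemma homotopyY_tmul (s : ℕ) (e : E) (t : Tpow k (Qbar k H) s) (h : H) :
    homotopyY k H E s (e ⊗ₜ (t ⊗ₜ h)) =
      (-1 : ℤ) ^ s • (e ⊗ₜ (Tpow.snoc t (qbar k H h) ⊗ₜ 1)) := rfl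

lemma sectionY_apply (e : E) : sectionY k H E e = -(e ⊗ₜ (Tpow.nil ⊗ₜ 1)) := by
  rw [sectionY, LinearMap.neg_apply, LinearMap.toSpanSingleton_apply, TensorProduct.smul_tmul',
    smul_eq_mul, mul_one]

end HopfBar

open HopfBar

namespace CrossedProduct

variable (S : CrossedProduct k A H E)

lemma augY_sectionY (e : E) : S.augY (sectionY k H E e) = e := by
  rw [sectionY_apply, map_neg, augY_tmul, hE_one, mul_one, neg_neg]

lemma homotopyY_shift {s : ℕ} (y : Yc k H E s) :
    homotopyY k H E (s + 1) (S.shift y) = -S.shift (homotopyY k H E s y) := by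
  have : (homotopyY k H E (s + 1)).restrictScalars k ∘ₗ S.shift =
      -(S.shift ∘ₗ (homotopyY k H E s).restrictScalars k) :=
    S.hopfBar_hom_ext fun a h t w ↦ by
      simp only [LinearMap.neg_apply, LinearMap.comp_apply, LinearMap.restrictScalars_apply,
        shift_tmul, homotopyY_tmul, map_zsmul, Tpow.snoc_cons, pow_succ, mul_neg_one, neg_smul]
  exact LinearMap.congr_fun this y

lemma homotopyY_shiftE (e : E) :
    homotopyY k H E 0 (S.shiftE e) = -S.shift (sectionY k H E e) := by
  have : (homotopyY k H E 0).restrictScalars k ∘ₗ S.shiftE =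
      -(S.shift ∘ₗ (sectionY k H E).restrictScalars k) :=
    S.hom_ext fun a h ↦ by
      simp only [LinearMap.neg_apply, LinearMap.comp_apply, LinearMap.restrictScalars_apply,
        shiftE_ι, homotopyY_tmul, sectionY_apply, map_neg, shift_tmul, Tpow.snoc_nil, pow_zero,
        one_smul, neg_neg]
  exact LinearMap.congr_fun this e

end CrossedProduct

namespace ResData

variable {S : CrossedProduct k A H E} (R : ResData k A H E S)

lemma delE_homotopyY_zero :
    R.delE 0 ∘ₗ homotopyY k H E 0 + sectionY k H E ∘ₗ S.augY = LinearMap.id :=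
  HopfBar.hom_ext_shiftE S fun e ↦ by
    simp only [LinearMap.add_apply, LinearMap.comp_apply, LinearMap.id_apply, S.homotopyY_shiftE,
      map_neg, delE_zero_shift, S.augY_sectionY, S.augY_shiftE]
    abel

lemma delE_homotopyY_succ (s : ℕ) :
    R.delE (s + 1) ∘ₗ homotopyY k H E (s + 1) + homotopyY k H E s ∘ₗ R.delE s =
      LinearMap.id := by
  induction s with
  | zero =>
    refine HopfBar.hom_ext_shift S fun y ↦ ?_
    conv_rhs => rw [LinearMap.id_apply, ← LinearMap.id_apply (R := E) y, ← R.delE_homotopyY_zero]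
    simp only [LinearMap.add_apply, LinearMap.comp_apply, S.homotopyY_shift, map_neg, map_sub,
      map_add, delE_succ_shift, delE_zero_shift, S.homotopyY_shiftE]
    abel
  | succ s ih =>
    refine HopfBar.hom_ext_shift S fun y ↦ ?_
    conv_rhs => rw [LinearMap.id_apply, ← LinearMap.id_apply (R := E) y, ← ih]
    simp only [LinearMap.add_apply, LinearMap.comp_apply, S.homotopyY_shift, map_neg, map_sub,
      map_add, delE_succ_shift]
    abel

end ResData

end BarContraction

section Rows

variable {E : Type} [Ring E] [Algebra k E]

lemma CrossedProduct.xgen_hom_ext (S : CrossedProduct k A H E) {r s : ℕ} {M : Type}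
    [AddCommGroup M] [Module k M] {f g : Xc k A H E r s →ₗ[k] M}
    (h : ∀ a h₀ hs as b h', f (xgen (S.ι (a ⊗ₜ h₀)) hs as (S.ι (b ⊗ₜ h'))) =
      g (xgen (S.ι (a ⊗ₜ h₀)) hs as (S.ι (b ⊗ₜ h')))) : f = g :=
  TensorProduct.ext (S.hom_ext fun a h₀ ↦ TensorProduct.ext (Tpow.hom_ext_qbar fun hs ↦
    TensorProduct.ext (Tpow.hom_ext_qbar fun as ↦ S.hom_ext fun b h' ↦ h a h₀ hs as b h')))

lemma smul_xgen {r s : ℕ} (e e' z : E) (hs : Fin s → H) (as : Fin r → A) :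
    e • (xgen e' hs as z : Xc k A H E r s) = xgen (e * e') hs as z := rfl

lemma rightX_xgen {r s : ℕ} (e z z' : E) (hs : Fin s → H) (as : Fin r → A) :
    rightX z' (xgen e hs as z : Xc k A H E r s) = xgen e hs as (z * z') := rfl

lemma mulAt_snoc_castSucc {r : ℕ} (as : Fin (r + 1) → A) (b : A) (i : Fin r) :
    mulAt (Fin.snoc as b : Fin (r + 2) → A) i.castSucc =
      (Fin.snoc (mulAt as i) b : Fin (r + 1) → A) := by
  funext j
  refine Fin.lastCases ?_ (fun q ↦ ?_) j
  · rw [Fin.snoc_last, mulAt, if_neg (by simp), if_neg (by simp; omega), Fin.succ_last,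
      Fin.snoc_last]
  · rw [Fin.snoc_castSucc, mulAt, Fin.snoc_castSucc, Fin.succ_castSucc, Fin.snoc_castSucc]
    rfl

lemma mulAt_snoc_last {r : ℕ} (as : Fin (r + 1) → A) (b : A) :
    mulAt (Fin.snoc as b : Fin (r + 2) → A) (Fin.last r) =
      (Fin.snoc (fun i ↦ as i.castSucc) (as (Fin.last r) * b) : Fin (r + 1) → A) := by
  funext j
  refine Fin.lastCases ?_ (fun q ↦ ?_) j
  · rw [Fin.snoc_last, mulAt, if_neg (by simp), if_pos (by simp), Fin.snoc_castSucc,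
      Fin.succ_last, Fin.snoc_last]
  · rw [Fin.snoc_castSucc, mulAt, if_pos (by simp), Fin.snoc_castSucc]

lemma snoc_comp_succ {α : Type} {r : ℕ} (as : Fin (r + 1) → α) (b : α) :
    (fun i : Fin (r + 1) ↦ (Fin.snoc as b : Fin (r + 2) → α) i.succ) =
      (Fin.snoc (fun i : Fin r ↦ as i.succ) b : Fin (r + 1) → α) := by
  funext j
  refine Fin.lastCases ?_ (fun q ↦ ?_) j
  · rw [Fin.snoc_last, Fin.succ_last, Fin.snoc_last]
  · rw [Fin.snoc_castSucc, Fin.succ_castSucc, Fin.snoc_castSucc]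

namespace ResData

variable {S : CrossedProduct k A H E} (R : ResData k A H E S)

/-- `σ⁰_{r+1,s}` as an `E`-linear map. -/
def sigE (r s : ℕ) : Xc k A H E r s →ₗ[E] Xc k A H E (r + 1) s where
  __ := R.sig r s
  map_smul' e x := by
    have : R.sig r s ∘ₗ Algebra.lsmul k k _ e = Algebra.lsmul k k _ e ∘ₗ R.sig r s :=
      S.xgen_hom_ext fun a h₀ hs as b h' ↦ by
        simp only [LinearMap.comp_apply, Algebra.lsmul_coe, smul_xgen, R.sig_eq, smul_comm e]
    exact LinearMap.congr_fun this x

/-- `d^l_{rs}` as an `E`-linear map. -/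
def dlE (l r s : ℕ) : Xc k A H E r s →ₗ[E] Xc k A H E (r + l - 1) (s - l) where
  __ := R.dl l r s
  map_smul' e := LinearMap.congr_fun (R.dl_lmul l r s e)

/-- The row differential `d⁰_{r+1,s}`. -/
def rowD (r s : ℕ) : Xc k A H E (r + 1) s →ₗ[E] Xc k A H E r s := R.dlE 0 (r + 1) s

/-- `d¹_{0,s+1}`. -/
def d1 (s : ℕ) : Xc k A H E 0 (s + 1) →ₗ[E] Xc k A H E 0 s := R.dlE 1 0 (s + 1)

lemma sigE_xgen {r s : ℕ} (e : E) (hs : Fin s → H) (as : Fin r → A) (b : A) (h' : H) :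
    R.sigE r s (xgen e hs as (S.ι (b ⊗ₜ h'))) =
      (-1 : ℤ) ^ (r + 1) • xgen e hs (Fin.snoc as b) (S.hE h') :=
  R.sig_eq r s e hs as b h'

lemma dlE_rightX (l r s : ℕ) (z : E) (x : Xc k A H E r s) :
    R.dlE l r s (rightX z x) = rightX z (R.dlE l r s x) :=
  LinearMap.congr_fun (R.dl_rmul l r s z) x

lemma rowD_rightX (r s : ℕ) (z : E) (x : Xc k A H E (r + 1) s) :
    R.rowD r s (rightX z x) = rightX z (R.rowD r s x) :=
  R.dlE_rightX 0 (r + 1) s z x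

lemma rowD_xgen (r s : ℕ) (a₀ : A) (h₀ : H) (hs : Fin s → H) (as : Fin (r + 1) → A)
    (b : A) (h' : H) {Nv : Fin (s + 1) → ℕ} {v : ∀ i, Fin (Nv i) → Fin 2 → H}
    (hv : ∀ i, SRep k 1 ((Fin.cons h₀ hs : Fin (s + 1) → H) i) (Nv i) (v i)) :
    R.rowD r s (xgen (S.ι (a₀ ⊗ₜ[k] h₀)) hs as (S.ι (b ⊗ₜ[k] h'))) =
      (∑ c : (∀ i, Fin (Nv i)),
        xgen (S.ι ((a₀ * iterAct k S.act (fun i ↦ v i (c i) 0) (as 0)) ⊗ₜ[k] (v 0 (c 0) 1)))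
          (fun i : Fin s ↦ v i.succ (c i.succ) 1)
          (fun i : Fin r ↦ as i.succ) (S.ι (b ⊗ₜ[k] h')))
      + (∑ i : Fin r, (-1 : ℤ) ^ ((i : ℕ) + 1) •
          xgen (S.ι (a₀ ⊗ₜ[k] h₀)) hs (mulAt as i) (S.ι (b ⊗ₜ[k] h')))
      + (-1 : ℤ) ^ (r + 1) •
          xgen (S.ι (a₀ ⊗ₜ[k] h₀)) hs (fun i : Fin r ↦ as i.castSucc)
            (S.ι ((as (Fin.last r) * b) ⊗ₜ[k] h')) :=
  R.d0_eq r s a₀ h₀ hs as b h' Nv v hv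

lemma rowD_sigE_zero {s : ℕ} (x : Xc k A H E 0 s) :
    R.rowD 0 s (R.sigE 0 s x) + S.sectionX (R.muE s x) = x := by
  suffices h : R.rowD 0 s ∘ₗ R.sigE 0 s + S.sectionX ∘ₗ R.muE s = LinearMap.id from
    LinearMap.congr_fun h x
  refine LinearMap.restrictScalars_injective k (S.xgen_hom_ext fun a h₀ hs as b h' ↦ ?_)
  obtain rfl : as = fun i : Fin 0 ↦ i.elim0 := funext fun i ↦ i.elim0
  choose Nv v hv using fun i ↦
    SRep.exists_sRep (k := k) 1 ((Fin.cons h₀ hs : Fin (s + 1) → H) i)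
  have hd : R.rowD 0 s (xgen (S.ι (a ⊗ₜ h₀)) hs (fun _ ↦ b) (S.hE h')) = _ :=
    R.rowD_xgen 0 s a h₀ hs (fun _ ↦ b) 1 h' hv
  have hmu : R.muE s (xgen (S.ι (a ⊗ₜ h₀)) hs (fun i : Fin 0 ↦ i.elim0) (S.ι (b ⊗ₜ h'))) = _ :=
    R.mu_eq s a h₀ hs b h' Nv v hv
  have hsec (e : E) (gs : Fin s → H) (g : H) : (S.sectionX (ygen e gs g) : Xc k A H E 0 s) =
      xgen e gs (fun i : Fin 0 ↦ i.elim0) (S.hE g) :=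
    (R.sig0_apply _).symm.trans (R.sig0_eq s e gs g)
  have hsnoc : (Fin.snoc (fun i : Fin 0 ↦ i.elim0) b : Fin 1 → A) = fun _ ↦ b := by
    funext i; fin_cases i; rfl
  have helim (u : A) : (fun _ : Fin 0 ↦ u) = fun i : Fin 0 ↦ i.elim0 := funext fun i ↦ i.elim0
  rw [LinearMap.restrictScalars_apply, LinearMap.add_apply, LinearMap.comp_apply,
    LinearMap.comp_apply, hmu, sigE_xgen, map_zsmul, hsnoc, hd]
  simp only [map_sum, hsec, helim, mul_one, zero_add, pow_one, Finset.univ_eq_empty,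
    Finset.sum_empty, add_zero, neg_smul, one_smul, neg_add, neg_neg]
  exact neg_add_cancel_comm _ _

lemma rowD_sigE_succ {r s : ℕ} (x : Xc k A H E (r + 1) s) :
    R.rowD (r + 1) s (R.sigE (r + 1) s x) + R.sigE r s (R.rowD r s x) = x := by
  suffices h : R.rowD (r + 1) s ∘ₗ R.sigE (r + 1) s + R.sigE r s ∘ₗ R.rowD r s = LinearMap.id from
    LinearMap.congr_fun h x
  refine LinearMap.restrictScalars_injective k (S.xgen_hom_ext fun a h₀ hs as b h' ↦ ?_)
  choose Nv v hv using fun i ↦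
    SRep.exists_sRep (k := k) 1 ((Fin.cons h₀ hs : Fin (s + 1) → H) i)
  have hd : R.rowD (r + 1) s (xgen (S.ι (a ⊗ₜ h₀)) hs (Fin.snoc as b) (S.hE h')) = _ :=
    R.rowD_xgen (r + 1) s a h₀ hs (Fin.snoc as b) 1 h' hv
  have h0 : (Fin.snoc as b : Fin (r + 2) → A) 0 = as 0 :=
    Fin.snoc_castSucc (α := fun _ ↦ A) b as 0
  have hι : S.ι (1 ⊗ₜ h') = S.hE h' := rfl
  have sq : (-1 : ℤ) ^ (r + 1) * (-1) ^ (r + 1) = 1 := by rw [← mul_pow]; simp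
  have comm (i : ℕ) : (-1 : ℤ) ^ (i + 1) * (-1) ^ (r + 1) = (-1) ^ (r + 1) * (-1) ^ (i + 1) :=
    mul_comm _ _
  rw [LinearMap.restrictScalars_apply, LinearMap.add_apply, LinearMap.comp_apply,
    LinearMap.comp_apply, sigE_xgen, map_zsmul, R.rowD_xgen r s a h₀ hs as b h' hv, hd]
  simp only [map_add, map_sum, map_zsmul, sigE_xgen, Fin.sum_univ_castSucc, mulAt_snoc_castSucc,
    mulAt_snoc_last, snoc_comp_succ, Fin.snoc_last, Fin.snoc_castSucc, mul_one, Fin.val_castSucc,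
    Fin.val_last, h0, smul_add, Finset.smul_sum, smul_smul, pow_succ _ (r + 1), mul_neg, neg_mul,
    sq, comm, neg_smul, smul_neg, neg_neg, Finset.sum_neg_distrib, one_smul, hι,
    LinearMap.restrictScalars_apply, LinearMap.id_apply]
  abel

lemma hom_ext_rightX_sigE {r s : ℕ} {N : Type} [AddCommGroup N] [Module E N] [Module k N]
    [IsScalarTower k E N] {f g : Xc k A H E (r + 1) s →ₗ[E] N}
    (h : ∀ z x, f (rightX z (R.sigE r s x)) = g (rightX z (R.sigE r s x))) : f = g := by
  refine LinearMap.restrictScalars_injective k (S.xgen_hom_ext fun a h₀ hs as b h' ↦ ?_)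
  have : xgen (S.ι (a ⊗ₜ h₀)) hs as (S.ι (b ⊗ₜ h')) =
      (-1 : ℤ) ^ (r + 1) • rightX (S.ι (b ⊗ₜ h')) (R.sigE r s
        (xgen (S.ι (a ⊗ₜ h₀)) hs (Fin.init as) (S.ι (as (Fin.last r) ⊗ₜ 1)))) := by
    rw [sigE_xgen, map_zsmul, smul_smul, ← mul_pow, Fin.snoc_init_self, rightX_xgen, S.hE_one]
    simp
  simp only [LinearMap.restrictScalars_apply, this, map_zsmul, h]

lemma muE_rowD {s : ℕ} (x : Xc k A H E 1 s) : R.muE s (R.rowD 0 s x) = 0 := by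
  suffices h : R.muE s ∘ₗ R.rowD 0 s = 0 from LinearMap.congr_fun h x
  refine R.hom_ext_rightX_sigE fun z x ↦ ?_
  have h := congrArg (R.muE s) (R.rowD_sigE_zero x)
  rw [map_add, muE_sectionX, add_eq_right] at h
  rw [LinearMap.comp_apply, rowD_rightX, muE_rightX, h, map_zero, LinearMap.zero_apply]

lemma rowD_rowD {r s : ℕ} (x : Xc k A H E (r + 2) s) :
    R.rowD r s (R.rowD (r + 1) s x) = 0 := by
  suffices h : R.rowD r s ∘ₗ R.rowD (r + 1) s = 0 from LinearMap.congr_fun h x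
  clear x
  induction r with
  | zero =>
    refine R.hom_ext_rightX_sigE fun z x ↦ ?_
    have h := congrArg (R.rowD 0 s) (R.rowD_sigE_succ x)
    have h' := R.rowD_sigE_zero (R.rowD 0 s x)
    rw [muE_rowD, map_zero, add_zero] at h'
    rw [map_add, h', add_eq_right] at h
    rw [LinearMap.comp_apply, rowD_rightX, rowD_rightX, h, map_zero, LinearMap.zero_apply]
  | succ r ih =>
    refine R.hom_ext_rightX_sigE fun z x ↦ ?_
    have h := congrArg (R.rowD (r + 1) s) (R.rowD_sigE_succ x)
    have h' := R.rowD_sigE_succ (R.rowD (r + 1) s x)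
    rw [← LinearMap.comp_apply (R.rowD r s), ih, LinearMap.zero_apply, map_zero, add_zero] at h'
    rw [map_add, h', add_eq_right] at h
    rw [LinearMap.comp_apply, rowD_rightX, rowD_rightX, h, map_zero, LinearMap.zero_apply]

lemma hom_ext_rightX_xgen {r s : ℕ} {N : Type} [AddCommGroup N] [Module E N]
    {f g : Xc k A H E r s →ₗ[E] N}
    (h : ∀ z hs as, f (rightX z (xgen 1 hs as 1)) = g (rightX z (xgen 1 hs as 1))) : f = g := by
  have key (e : E) (hs : Fin s → H) (as : Fin r → A) (z : E) :
      f (xgen e hs as z) = g (xgen e hs as z) := by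
    have : (xgen e hs as z : Xc k A H E r s) = e • rightX z (xgen 1 hs as 1) := by
      rw [rightX_xgen, smul_xgen, mul_one, one_mul]
    rw [this, map_smul, map_smul, h]
  let := Module.compHom N (algebraMap k E)
  have : IsScalarTower k E N := .of_algebraMap_smul fun _ _ ↦ rfl
  refine LinearMap.restrictScalars_injective k (TensorProduct.ext <| LinearMap.ext fun e ↦
    TensorProduct.ext (Tpow.hom_ext_qbar fun hs ↦ TensorProduct.ext (Tpow.hom_ext_qbar fun as ↦
      LinearMap.ext fun z ↦ key e hs as z)))

lemma d1_rightX (s : ℕ) (z : E) (x : Xc k A H E 0 (s + 1)) :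
    R.d1 s (rightX z x) = rightX z (R.d1 s x) :=
  R.dlE_rightX 1 0 (s + 1) z x

lemma d1_xgen {s : ℕ} (hs : Fin (s + 1) → H) :
    R.d1 s (xgen 1 hs (fun i : Fin 0 ↦ i.elim0) 1) =
      -S.sectionX (R.delE s (R.muE (s + 1) (xgen 1 hs (fun i : Fin 0 ↦ i.elim0) 1))) :=
  (R.dl_one_zero s hs).trans (congrArg Neg.neg (R.sig0_apply _))

lemma muE_d1 {s : ℕ} (x : Xc k A H E 0 (s + 1)) :
    R.muE s (R.d1 s x) = -R.delE s (R.muE (s + 1) x) := by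
  suffices h : R.muE s ∘ₗ R.d1 s = -(R.delE s ∘ₗ R.muE (s + 1)) from LinearMap.congr_fun h x
  refine hom_ext_rightX_xgen fun z hs as ↦ ?_
  obtain rfl : as = fun i : Fin 0 ↦ i.elim0 := funext fun i ↦ i.elim0
  rw [LinearMap.neg_apply, LinearMap.comp_apply, LinearMap.comp_apply, d1_rightX, muE_rightX,
    muE_rightX, delE_rightY, d1_xgen, map_neg, map_neg, muE_sectionX]

end ResData

end Rows

section Perturbation

/-- A contraction of the augmented complex `Y ←μ- (X, d)`, with the gradings of `X` and `Y`
forgotten: `σ₀` and `σ` are the components of the contracting homotopy on `Y` and on `X`. -/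
structure RowContraction (R X Y : Type*) [Ring R] [AddCommGroup X] [Module R X]
    [AddCommGroup Y] [Module R Y] where
  d : X →ₗ[R] X
  σ : X →ₗ[R] X
  μ : X →ₗ[R] Y
  σ₀ : Y →ₗ[R] X
  d_d x : d (d x) = 0
  μ_d x : μ (d x) = 0
  μ_σ x : μ (σ x) = 0
  μ_σ₀ y : μ (σ₀ y) = y
  d_σ₀ y : d (σ₀ y) = 0
  d_σ_add x : d (σ x) + σ (d x) + σ₀ (μ x) = x

variable {R X Y : Type*} [Ring R] [AddCommGroup X] [Module R X] [AddCommGroup Y] [Module R Y]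

/-- A perturbation `p` of the differential of a contracted complex that lowers an exhaustive
filtration `F` and covers, up to sign, a differential `∂` on the augmentation module. -/
structure RowContraction.Perturbation (C : RowContraction R X Y) where
  p : X →ₗ[R] X
  del : Y →ₗ[R] Y
  F : ℕ → Submodule R X
  F_mono : Monotone F
  F_zero : F 0 = ⊥
  exists_mem_F x : ∃ m, x ∈ F m
  p_mem {m x} (hx : x ∈ F (m + 1)) : p x ∈ F m
  d_mem {m x} (hx : x ∈ F m) : C.d x ∈ F m
  σ_mem {m x} (hx : x ∈ F m) : C.σ x ∈ F m
  μ_p x : C.μ (p x) = -del (C.μ x)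
  del_del y : del (del y) = 0

namespace RowContraction.Perturbation

variable {C : RowContraction R X Y} (P : C.Perturbation)

/-- The perturbed differential `d + p`. -/
def D : X →ₗ[R] X := C.d + P.p

lemma D_apply (x : X) : P.D x = C.d x + P.p x := rfl

lemma p_mem_self {m : ℕ} {x : X} (hx : x ∈ P.F m) : P.p x ∈ P.F m :=
  P.p_mem (P.F_mono m.le_succ hx)

lemma D_mem {m : ℕ} {x : X} (hx : x ∈ P.F m) : P.D x ∈ P.F m :=
  add_mem (P.d_mem hx) (P.p_mem_self hx)

lemma μ_D (x : X) : C.μ (P.D x) = -P.del (C.μ x) := by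
  rw [D_apply, map_add, C.μ_d, P.μ_p, zero_add]

lemma eq_zero_of_eq_neg_σ_p {z : X} (hz : z = -C.σ (P.p z)) : z = 0 := by
  obtain ⟨m, hm⟩ := P.exists_mem_F z
  induction m with
  | zero => simpa [P.F_zero] using hm
  | succ m ih => exact ih (hz ▸ neg_mem (P.σ_mem (P.p_mem hm)))

/-- With `z = D (D g)`, the recursion and `D z = 0` give `z = -σ (p z)`. -/
lemma D_D_eq_zero_of_recursion {g : X}
    (hg : P.p g = -C.σ₀ (P.del (C.μ g)) - C.σ (P.p (P.D g))) (hD : P.D (P.D (P.D g)) = 0) :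
    P.D (P.D g) = 0 := by
  refine P.eq_zero_of_eq_neg_σ_p ?_
  have hμ : C.μ (P.p (P.D g)) = 0 := by rw [P.μ_p, P.μ_D, map_neg, P.del_del, neg_zero, neg_zero]
  have hd : C.d (P.p (P.D g)) = -P.p (P.D (P.D g)) := by
    rw [P.D_apply (P.D _)] at hD
    rw [← eq_neg_of_add_eq_zero_left hD, P.D_apply (P.D g), map_add, C.d_d, zero_add]
  have hdD : C.d (P.D g) = -C.d (C.σ (P.p (P.D g))) := by
    conv_lhs => rw [D_apply, map_add, C.d_d, zero_add, hg]
    rw [map_sub, map_neg, C.d_σ₀, neg_zero, zero_sub]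
  calc
    P.D (P.D g) = C.d (P.D g) + P.p (P.D g) := rfl
    _ = -C.d (C.σ (P.p (P.D g))) + (C.d (C.σ (P.p (P.D g))) + C.σ (C.d (P.p (P.D g))) +
          C.σ₀ (C.μ (P.p (P.D g)))) := by rw [C.d_σ_add, hdD]
    _ = -C.σ (P.p (P.D (P.D g))) := by rw [hμ, hd, map_zero, map_neg]; abel

/-- Replacing a cycle `x` by `x - D (σ x)` lowers its filtration, so `∑ i, σ (1 - D σ) ^ i` is a
finite sum that does the job. -/
lemma exists_section_of_μ_eq_zero (hDD : ∀ x, P.D (P.D x) = 0) (m : ℕ) :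
    ∃ t : X →ₗ[R] X, ∀ x ∈ P.F m, P.D x = 0 → C.μ x = 0 → P.D (t x) = x := by
  induction m with
  | zero =>
    refine ⟨0, fun x hx _ _ ↦ ?_⟩
    rw [P.F_zero, Submodule.mem_bot] at hx
    simp [hx]
  | succ m ih =>
    obtain ⟨t, ht⟩ := ih
    refine ⟨C.σ + t ∘ₗ (LinearMap.id - P.D ∘ₗ C.σ), fun x hx hD hμ ↦ ?_⟩
    have hxσ : x - P.D (C.σ x) = -C.σ (P.p x) - P.p (C.σ x) := by
      have hσ := C.d_σ_add x
      rw [eq_neg_of_add_eq_zero_left hD, hμ, map_zero, add_zero, map_neg] at hσ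
      nth_rw 1 [← hσ]
      rw [D_apply]
      abel
    have hmem : x - P.D (C.σ x) ∈ P.F m :=
      hxσ ▸ sub_mem (neg_mem (P.σ_mem (P.p_mem hx))) (P.p_mem (P.σ_mem hx))
    have ht' := ht _ hmem (by rw [map_sub, hD, hDD, sub_zero])
      (by rw [map_sub, hμ, μ_D, C.μ_σ, map_zero, neg_zero, sub_zero])
    rw [LinearMap.add_apply, map_add, LinearMap.comp_apply, LinearMap.sub_apply,
      LinearMap.id_apply, LinearMap.comp_apply, ht', add_sub_cancel]

lemma exists_section (hDD : ∀ x, P.D (P.D x) = 0) {η : Y →ₗ[R] Y}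
    (hη : ∀ {m x}, x ∈ P.F m → C.σ₀ (η (C.μ x)) ∈ P.F (m + 1)) (m : ℕ) :
    ∃ t : X →ₗ[R] X, ∀ x ∈ P.F m, P.D x = 0 → P.del (η (C.μ x)) = C.μ x → P.D (t x) = x := by
  obtain ⟨t, ht⟩ := P.exists_section_of_μ_eq_zero hDD (m + 1)
  let ρ : X →ₗ[R] X := C.σ₀ ∘ₗ η ∘ₗ C.μ
  refine ⟨t ∘ₗ (LinearMap.id + P.D ∘ₗ ρ) - ρ, fun x hx hD hμ ↦ ?_⟩
  have hρ : C.μ (ρ x) = η (C.μ x) := C.μ_σ₀ _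
  have ht' := ht (x + P.D (ρ x)) (add_mem (P.F_mono m.le_succ hx) (P.D_mem (hη hx)))
    (by rw [map_add, hD, hDD, add_zero]) (by rw [map_add, μ_D, hρ, hμ, add_neg_cancel])
  rw [LinearMap.sub_apply, map_sub, LinearMap.comp_apply, LinearMap.add_apply,
    LinearMap.id_apply, LinearMap.comp_apply, ht', add_sub_cancel_right]

end RowContraction.Perturbation

/-- An augmented complex of `R`-modules whose cycles lift `R`-linearly along the differentials
is contractible: `σ 0 = t 0 ∘ (1 - s₀ ∘ ε)` and `σ (n + 1) = t (n + 1) ∘ (1 - σ n ∘ d n)`. -/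
lemma exists_contractingHomotopy {M : Type*} [AddCommGroup M] [Module R M] {X : ℕ → Type*}
    [∀ n, AddCommGroup (X n)] [∀ n, Module R (X n)] {ε : X 0 →ₗ[R] M}
    {d : ∀ n, X (n + 1) →ₗ[R] X n} {s₀ : M →ₗ[R] X 0} (hε : ε ∘ₗ d 0 = 0)
    (hd : ∀ n, d n ∘ₗ d (n + 1) = 0) (hs₀ : ε ∘ₗ s₀ = LinearMap.id)
    (h₀ : ∃ t : X 0 →ₗ[R] X 1, ∀ x, ε x = 0 → d 0 (t x) = x)
    (h : ∀ n, ∃ t : X (n + 1) →ₗ[R] X (n + 2), ∀ x, d n x = 0 → d (n + 1) (t x) = x) :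
    ∃ σ : ∀ n, X n →ₗ[R] X (n + 1), s₀ ∘ₗ ε + d 0 ∘ₗ σ 0 = LinearMap.id ∧
      ∀ n, σ n ∘ₗ d n + d (n + 1) ∘ₗ σ (n + 1) = LinearMap.id := by
  obtain ⟨t₀, ht₀⟩ := h₀
  choose t ht using h
  let σ : ∀ n, X n →ₗ[R] X (n + 1) := fun n ↦
    Nat.rec (t₀ ∘ₗ (LinearMap.id - s₀ ∘ₗ ε)) (fun n σ ↦ t n ∘ₗ (LinearMap.id - σ ∘ₗ d n)) n
  have hσ₀ : s₀ ∘ₗ ε + d 0 ∘ₗ σ 0 = LinearMap.id := LinearMap.ext fun x ↦ by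
    have := ht₀ (x - s₀ (ε x)) (by
      rw [map_sub, ← LinearMap.comp_apply ε, hs₀, LinearMap.id_apply, sub_self])
    exact (congrArg (s₀ (ε x) + ·) this).trans (add_sub_cancel _ _)
  have hσ_succ (n : ℕ) (hdσ : d n ∘ₗ σ n ∘ₗ d n = d n) :
      σ n ∘ₗ d n + d (n + 1) ∘ₗ σ (n + 1) = LinearMap.id := LinearMap.ext fun x ↦ by
    have := ht n (x - σ n (d n x)) (by
      rw [map_sub, sub_eq_zero]; exact (LinearMap.congr_fun hdσ x).symm)
    exact (congrArg (σ n (d n x) + ·) this).trans (add_sub_cancel _ _)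
  have hσ (n : ℕ) : σ n ∘ₗ d n + d (n + 1) ∘ₗ σ (n + 1) = LinearMap.id := by
    induction n with
    | zero =>
      refine hσ_succ 0 ?_
      rw [← LinearMap.comp_assoc, eq_sub_of_add_eq' hσ₀, LinearMap.sub_comp, LinearMap.comp_assoc,
        hε, LinearMap.comp_zero, sub_zero, LinearMap.id_comp]
    | succ n ih =>
      refine hσ_succ (n + 1) ?_
      rw [← LinearMap.comp_assoc, eq_sub_of_add_eq' ih, LinearMap.sub_comp, LinearMap.comp_assoc,
        hd, LinearMap.comp_zero, sub_zero, LinearMap.id_comp]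
  exact ⟨σ, hσ₀, hσ⟩

end Perturbation

section TotalRows

variable {E : Type} [Ring E] [Algebra k E]

variable (k A H E) in
/-- The sum of all the `X_{rs}`, on which the rows become a single `RowContraction`. -/
def XSum : Type := ⨁ p : ℕ × ℕ, Xc k A H E p.1 p.2

variable (k H E) in
/-- The sum of all the `Y_s`. -/
def YSum : Type := ⨁ s : ℕ, Yc k H E s

namespace XSum

instance : AddCommGroup (XSum k A H E) :=
  inferInstanceAs (AddCommGroup (⨁ p : ℕ × ℕ, Xc k A H E p.1 p.2))

instance : Module E (XSum k A H E) :=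
  inferInstanceAs (Module E (⨁ p : ℕ × ℕ, Xc k A H E p.1 p.2))

variable {N : Type} [AddCommGroup N] [Module E N]

/-- The inclusion of the summand `X_{rs}`. -/
def of (r s : ℕ) : Xc k A H E r s →ₗ[E] XSum k A H E :=
  DirectSum.lof E (ℕ × ℕ) (fun p ↦ Xc k A H E p.1 p.2) (r, s)

/-- The map out of the sum with components `f r s`. -/
def lift (f : ∀ r s, Xc k A H E r s →ₗ[E] N) : XSum k A H E →ₗ[E] N :=
  DirectSum.toModule E (ℕ × ℕ) N fun p ↦ f p.1 p.2

lemma lift_of (f : ∀ r s, Xc k A H E r s →ₗ[E] N) (r s : ℕ) (x : Xc k A H E r s) :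
    lift f (of r s x) = f r s x :=
  DirectSum.toModule_lof E (φ := fun p : ℕ × ℕ ↦ f p.1 p.2) (r, s) x

lemma hom_ext {f g : XSum k A H E →ₗ[E] N} (h : ∀ r s x, f (of r s x) = g (of r s x)) : f = g :=
  DirectSum.linearMap_ext E fun ⟨r, s⟩ ↦ LinearMap.ext (h r s)

lemma of_xcast {r r' s s' : ℕ} (hr : r = r') (hs : s = s') (x : Xc k A H E r s) :
    of r' s' (xcast hr hs x) = of r s x := by
  subst hr hs; rfl

variable (k A H E) in
/-- The filtration of the sum by columns: `X_{rs}` for `s < m`. -/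
def filtration (m : ℕ) : Submodule E (XSum k A H E) :=
  Submodule.span E {y | ∃ r s x, s < m ∧ of r s x = y}

lemma of_mem_filtration {r s m : ℕ} (h : s < m) (x : Xc k A H E r s) :
    of r s x ∈ filtration k A H E m :=
  Submodule.subset_span ⟨r, s, x, h, rfl⟩

lemma apply_mem_filtration {f : XSum k A H E →ₗ[E] XSum k A H E} {m n : ℕ}
    (hf : ∀ r s x, s < m → f (of r s x) ∈ filtration k A H E n) {x : XSum k A H E}
    (hx : x ∈ filtration k A H E m) : f x ∈ filtration k A H E n := by
  have : filtration k A H E m ≤ (filtration k A H E n).comap f :=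
    Submodule.span_le.2 fun _ ⟨r, s, y, hs, hy⟩ ↦ hy ▸ hf r s y hs
  exact this hx

lemma filtration_zero : filtration k A H E 0 = ⊥ :=
  Submodule.span_eq_bot.2 fun _ ⟨_, _, _, h, _⟩ ↦ (Nat.not_lt_zero _ h).elim

lemma filtration_mono : Monotone (filtration k A H E) := fun _ _ h ↦
  Submodule.span_mono fun _ ⟨r, s, x, hs, hx⟩ ↦ ⟨r, s, x, hs.trans_le h, hx⟩

lemma exists_mem_filtration (x : XSum k A H E) : ∃ m, x ∈ filtration k A H E m := by
  refine DirectSum.induction_on x ⟨0, zero_mem _⟩ (fun ⟨r, s⟩ y ↦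
    ⟨s + 1, of_mem_filtration s.lt_succ_self y⟩) fun y z ⟨m, hm⟩ ⟨n, hn⟩ ↦ ⟨max m n, ?_⟩
  exact add_mem (filtration_mono (le_max_left m n) hm) (filtration_mono (le_max_right m n) hn)

/-- The right action of `E` on the sum of the `X_{rs}`. -/
def right (z : E) : XSum k A H E →ₗ[E] XSum k A H E := lift fun r s ↦ of r s ∘ₗ rightX z

lemma right_of (z : E) {r s : ℕ} (x : Xc k A H E r s) : right z (of r s x) = of r s (rightX z x) :=
  lift_of _ r s x

end XSum

namespace YSum

instance : AddCommGroup (YSum k H E) := inferInstanceAs (AddCommGroup (⨁ s : ℕ, Yc k H E s))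

instance : Module E (YSum k H E) := inferInstanceAs (Module E (⨁ s : ℕ, Yc k H E s))

variable {N : Type} [AddCommGroup N] [Module E N]

/-- The inclusion of the summand `Y_s`. -/
def of (s : ℕ) : Yc k H E s →ₗ[E] YSum k H E := DirectSum.lof E ℕ (Yc k H E) s

/-- The map out of the sum with components `f s`. -/
def lift (f : ∀ s, Yc k H E s →ₗ[E] N) : YSum k H E →ₗ[E] N := DirectSum.toModule E ℕ N f

lemma lift_of (f : ∀ s, Yc k H E s →ₗ[E] N) (s : ℕ) (y : Yc k H E s) : lift f (of s y) = f s y :=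
  DirectSum.toModule_lof E (φ := f) s y

lemma hom_ext {f g : YSum k H E →ₗ[E] N} (h : ∀ s y, f (of s y) = g (of s y)) : f = g :=
  DirectSum.linearMap_ext E fun s ↦ LinearMap.ext (h s)

variable (k H E) in
/-- The contracting homotopy of the complex `(Y, ∂)`. -/
def homotopy : YSum k H E →ₗ[E] YSum k H E := lift fun s ↦ of (s + 1) ∘ₗ HopfBar.homotopyY k H E s

lemma homotopy_of {s : ℕ} (y : Yc k H E s) :
    homotopy k H E (of s y) = of (s + 1) (HopfBar.homotopyY k H E s y) := lift_of _ s y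

end YSum

namespace CrossedProduct

variable (S : CrossedProduct k A H E)

/-- The augmentation `Y_0 → E`, extended by zero. -/
def augSum : YSum k H E →ₗ[E] E :=
  YSum.lift fun
    | 0 => S.augY
    | _ + 1 => 0

lemma augSum_of_zero (y : Yc k H E 0) : S.augSum (YSum.of 0 y) = S.augY y := YSum.lift_of _ 0 y

lemma augSum_of_succ {s : ℕ} (y : Yc k H E (s + 1)) : S.augSum (YSum.of (s + 1) y) = 0 :=
  YSum.lift_of _ (s + 1) y

/-- The sections of the `μ_s`. -/
def sectionSum : YSum k H E →ₗ[E] XSum k A H E := YSum.lift fun s ↦ XSum.of 0 s ∘ₗ S.sectionX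

lemma sectionSum_of {s : ℕ} (y : Yc k H E s) :
    S.sectionSum (YSum.of s y) = XSum.of 0 s (S.sectionX y) := YSum.lift_of _ s y

end CrossedProduct

namespace ResData

variable {S : CrossedProduct k A H E} (R : ResData k A H E S)

/-- The sum of the `μ_s`, extended by zero. -/
def muSum : XSum k A H E →ₗ[E] YSum k H E :=
  XSum.lift fun
    | 0, s => YSum.of s ∘ₗ R.muE s
    | _ + 1, _ => 0

lemma muSum_of_zero {s : ℕ} (x : Xc k A H E 0 s) :
    R.muSum (XSum.of 0 s x) = YSum.of s (R.muE s x) := XSum.lift_of _ 0 s x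

lemma muSum_of_pos {r s : ℕ} (h : 0 < r) (x : Xc k A H E r s) : R.muSum (XSum.of r s x) = 0 := by
  obtain ⟨r, rfl⟩ := Nat.exists_eq_add_one_of_ne_zero h.ne'
  exact XSum.lift_of _ (r + 1) s x

/-- The sum of the `σ⁰_{r+1,s}`. -/
def sigSum : XSum k A H E →ₗ[E] XSum k A H E := XSum.lift fun r s ↦ XSum.of (r + 1) s ∘ₗ R.sigE r s

lemma sigSum_of {r s : ℕ} (x : Xc k A H E r s) :
    R.sigSum (XSum.of r s x) = XSum.of (r + 1) s (R.sigE r s x) := XSum.lift_of _ r s x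

/-- The sum of the row differentials. -/
def rowSum : XSum k A H E →ₗ[E] XSum k A H E :=
  XSum.lift fun
    | 0, _ => 0
    | r + 1, s => XSum.of r s ∘ₗ R.rowD r s

lemma rowSum_of_zero {s : ℕ} (x : Xc k A H E 0 s) : R.rowSum (XSum.of 0 s x) = 0 :=
  XSum.lift_of _ 0 s x

lemma rowSum_of_succ {r s : ℕ} (x : Xc k A H E (r + 1) s) :
    R.rowSum (XSum.of (r + 1) s x) = XSum.of r s (R.rowD r s x) := XSum.lift_of _ (r + 1) s x

/-- The sum of the `∂_s`. -/
def delSum : YSum k H E →ₗ[E] YSum k H E :=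
  YSum.lift fun
    | 0 => 0
    | s + 1 => YSum.of s ∘ₗ R.delE s

lemma delSum_of_zero (y : Yc k H E 0) : R.delSum (YSum.of 0 y) = 0 := YSum.lift_of _ 0 y

lemma delSum_of_succ {s : ℕ} (y : Yc k H E (s + 1)) :
    R.delSum (YSum.of (s + 1) y) = YSum.of s (R.delE s y) := YSum.lift_of _ (s + 1) y

lemma delSum_homotopy {y : YSum k H E} (hy : R.delSum y = 0) (hy' : S.augSum y = 0) :
    R.delSum (YSum.homotopy k H E y) = y := by
  suffices h : R.delSum ∘ₗ YSum.homotopy k H E + YSum.homotopy k H E ∘ₗ R.delSum +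
      YSum.of 0 ∘ₗ HopfBar.sectionY k H E ∘ₗ S.augSum = LinearMap.id by
    simpa [hy, hy'] using LinearMap.congr_fun h y
  refine YSum.hom_ext fun s y ↦ ?_
  simp only [LinearMap.add_apply, LinearMap.comp_apply, LinearMap.id_apply, YSum.homotopy_of,
    delSum_of_succ]
  rcases s with _ | s
  · rw [delSum_of_zero, map_zero, add_zero, S.augSum_of_zero, ← map_add]
    exact congrArg (YSum.of _) (LinearMap.congr_fun R.delE_homotopyY_zero y)
  · rw [delSum_of_succ, YSum.homotopy_of, S.augSum_of_succ, map_zero, map_zero, add_zero, ← map_add]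
    exact congrArg (YSum.of _) (LinearMap.congr_fun (R.delE_homotopyY_succ s) y)

/-- The rows `Y_s ← X_{0s} ← X_{1s} ← ⋯`, all together. -/
def rowContraction : RowContraction E (XSum k A H E) (YSum k H E) where
  d := R.rowSum
  σ := R.sigSum
  μ := R.muSum
  σ₀ := S.sectionSum
  d_d := LinearMap.congr_fun (f := R.rowSum ∘ₗ R.rowSum) (g := 0) <| XSum.hom_ext fun r s x ↦ by
    rcases r with _ | _ | r
    · rw [LinearMap.comp_apply, rowSum_of_zero, map_zero, LinearMap.zero_apply]
    · rw [LinearMap.comp_apply, rowSum_of_succ, rowSum_of_zero, LinearMap.zero_apply]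
    · rw [LinearMap.comp_apply, rowSum_of_succ, rowSum_of_succ, rowD_rowD, map_zero,
        LinearMap.zero_apply]
  μ_d := LinearMap.congr_fun (f := R.muSum ∘ₗ R.rowSum) (g := 0) <| XSum.hom_ext fun r s x ↦ by
    rcases r with _ | _ | r
    · rw [LinearMap.comp_apply, rowSum_of_zero, map_zero, LinearMap.zero_apply]
    · rw [LinearMap.comp_apply, rowSum_of_succ, muSum_of_zero, muE_rowD, map_zero,
        LinearMap.zero_apply]
    · rw [LinearMap.comp_apply, rowSum_of_succ, R.muSum_of_pos (Nat.succ_pos _),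
        LinearMap.zero_apply]
  μ_σ := LinearMap.congr_fun (f := R.muSum ∘ₗ R.sigSum) (g := 0) <| XSum.hom_ext fun r s x ↦ by
    rw [LinearMap.comp_apply, sigSum_of, R.muSum_of_pos (Nat.succ_pos _), LinearMap.zero_apply]
  μ_σ₀ := LinearMap.congr_fun (f := R.muSum ∘ₗ S.sectionSum) (g := LinearMap.id) <|
    YSum.hom_ext fun s y ↦ by
      rw [LinearMap.comp_apply, S.sectionSum_of, muSum_of_zero, muE_sectionX, LinearMap.id_apply]
  d_σ₀ := LinearMap.congr_fun (f := R.rowSum ∘ₗ S.sectionSum) (g := 0) <| YSum.hom_ext fun s y ↦ by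
    rw [LinearMap.comp_apply, S.sectionSum_of, rowSum_of_zero, LinearMap.zero_apply]
  d_σ_add := LinearMap.congr_fun (f := R.rowSum ∘ₗ R.sigSum + R.sigSum ∘ₗ R.rowSum +
      S.sectionSum ∘ₗ R.muSum) (g := LinearMap.id) <| XSum.hom_ext fun r s x ↦ by
    simp only [LinearMap.add_apply, LinearMap.comp_apply, LinearMap.id_apply, sigSum_of,
      rowSum_of_succ]
    rcases r with _ | r
    · rw [rowSum_of_zero, map_zero, add_zero, muSum_of_zero, S.sectionSum_of, ← map_add,
        rowD_sigE_zero]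
    · rw [rowSum_of_succ, R.muSum_of_pos (Nat.succ_pos _), map_zero, add_zero, sigSum_of,
        ← map_add, rowD_sigE_succ]

end ResData

end TotalRows

section TotalDifferential

variable {E : Type} [Ring E] [Algebra k E]

namespace ResData

variable {S : CrossedProduct k A H E} (R : ResData k A H E S)

/-- The sum of the `d^l_{rs}` with `l` fixed. -/
def dlSum (l : ℕ) : XSum k A H E →ₗ[E] XSum k A H E :=
  XSum.lift fun r s ↦ XSum.of (r + l - 1) (s - l) ∘ₗ R.dlE l r s

lemma dlSum_of (l : ℕ) {r s : ℕ} (x : Xc k A H E r s) :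
    R.dlSum l (XSum.of r s x) = XSum.of (r + l - 1) (s - l) (R.dlE l r s x) := XSum.lift_of _ r s x

lemma dlSum_zero_of_succ {r s : ℕ} (x : Xc k A H E (r + 1) s) :
    R.dlSum 0 (XSum.of (r + 1) s x) = R.rowSum (XSum.of (r + 1) s x) :=
  (R.dlSum_of 0 x).trans (R.rowSum_of_succ x).symm

lemma dlSum_one_of_zero {s : ℕ} (x : Xc k A H E 0 (s + 1)) :
    R.dlSum 1 (XSum.of 0 (s + 1) x) = XSum.of 0 s (R.d1 s x) := R.dlSum_of 1 x

/-- The sum of the `d^l_{rs}` with `1 ≤ l ≤ s`. -/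
def pSum : XSum k A H E →ₗ[E] XSum k A H E :=
  XSum.lift fun r s ↦ ∑ l ∈ Finset.range s, R.dlSum (l + 1) ∘ₗ XSum.of r s

lemma pSum_of {r s : ℕ} (x : Xc k A H E r s) :
    R.pSum (XSum.of r s x) = ∑ l ∈ Finset.range s, R.dlSum (l + 1) (XSum.of r s x) := by
  rw [pSum, XSum.lift_of, LinearMap.sum_apply]
  rfl

lemma pSum_pSum_of {r s : ℕ} (x : Xc k A H E r s) :
    R.pSum (R.pSum (XSum.of r s x)) = ∑ l ∈ Finset.range s, ∑ j ∈ Finset.range l,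
      R.dlSum (l - j) (R.dlSum (j + 1) (XSum.of r s x)) := by
  have hp (j : ℕ) : R.pSum (R.dlSum (j + 1) (XSum.of r s x)) =
      ∑ i ∈ Finset.range (s - (j + 1)), R.dlSum (i + 1) (R.dlSum (j + 1) (XSum.of r s x)) := by
    rw [R.dlSum_of (j + 1), pSum_of]
  rw [pSum_of, map_sum, Finset.sum_congr rfl fun j _ ↦ hp j]
  rcases s with _ | s
  · rfl
  rw [Finset.sum_range_succ, Nat.sub_self, Finset.range_zero, Finset.sum_empty, add_zero,
    Finset.sum_range_succ', Finset.range_zero, Finset.sum_empty, add_zero]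
  simp only [Nat.add_sub_add_right]
  rw [← Finset.sum_range_diag_flip s fun j i ↦
    R.dlSum (i + 1) (R.dlSum (j + 1) (XSum.of r (s + 1) x))]
  refine Finset.sum_congr rfl fun l _ ↦ Finset.sum_congr rfl fun j hj ↦ ?_
  rw [Nat.sub_add_comm (Finset.mem_range_succ_iff.1 hj)]

lemma dlSum_xgen_zero {l s : ℕ} (hl : l + 2 ≤ s) (hs : Fin s → H) :
    R.dlSum (l + 2) (XSum.of 0 s (xgen 1 hs (fun i : Fin 0 ↦ i.elim0) 1)) =
      -∑ j ∈ Finset.range (l + 1), R.sigSum (R.dlSum (l + 1 - j) (R.dlSum (j + 1)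
        (XSum.of 0 s (xgen 1 hs (fun i : Fin 0 ↦ i.elim0) 1)))) := by
  rw [dlSum_of, Finset.sum_range]
  refine (congrArg (XSum.of _ _) (R.dl_zero (l + 2) s (by omega) hl hs)).trans ?_
  rw [map_neg, map_sum]
  refine congrArg Neg.neg (Finset.sum_congr rfl fun j _ ↦ ?_)
  rw [XSum.of_xcast]
  refine (R.sigSum_of _).symm.trans (congrArg R.sigSum ?_)
  rw [XSum.of_xcast]
  refine (R.dlSum_of _ _).symm.trans ?_
  rw [XSum.of_xcast, R.dlSum_of (j + 1), ← Nat.add_sub_add_right (l + 1) 1]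
  rfl

lemma dlSum_xgen_succ {l r s : ℕ} (hl : l + 1 ≤ s) (hs : Fin s → H) (as : Fin (r + 1) → A) :
    R.dlSum (l + 1) (XSum.of (r + 1) s (xgen 1 hs as 1)) =
      -∑ j ∈ Finset.range (l + 1), R.sigSum (R.dlSum (l + 1 - j) (R.dlSum j
        (XSum.of (r + 1) s (xgen 1 hs as 1)))) := by
  rw [dlSum_of, Finset.sum_range]
  refine (congrArg (XSum.of _ _) (R.dl_succ (l + 1) r s (by omega) hl hs as)).trans ?_
  rw [map_neg, map_sum]
  refine congrArg Neg.neg (Finset.sum_congr rfl fun j _ ↦ ?_)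
  rw [XSum.of_xcast]
  refine (R.sigSum_of _).symm.trans (congrArg R.sigSum ?_)
  rw [XSum.of_xcast]
  refine (R.dlSum_of _ _).symm.trans ?_
  rw [XSum.of_xcast, R.dlSum_of j]
  rfl

lemma pSum_xgen_zero {s : ℕ} (hs : Fin s → H) {g : XSum k A H E}
    (hg : g = XSum.of 0 s (xgen 1 hs (fun i : Fin 0 ↦ i.elim0) 1)) :
    R.pSum g = -S.sectionSum (R.delSum (R.muSum g)) - R.sigSum (R.pSum (R.pSum g)) := by
  subst hg
  rw [pSum_pSum_of, pSum_of, muSum_of_zero]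
  rcases s with _ | s
  · simp [delSum_of_zero]
  have h₁ : R.dlSum 1 (XSum.of 0 (s + 1) (xgen 1 hs (fun i : Fin 0 ↦ i.elim0) 1)) =
      -XSum.of 0 s (S.sectionX (R.delE s (R.muE (s + 1)
        (xgen 1 hs (fun i : Fin 0 ↦ i.elim0) 1)))) := by
    rw [dlSum_one_of_zero, d1_xgen, map_neg]
  rw [delSum_of_succ, S.sectionSum_of, Finset.sum_range_succ', Finset.sum_range_succ', zero_add,
    h₁, Finset.range_zero, Finset.sum_empty, add_zero, neg_sub_left, map_sum, neg_add,
    ← Finset.sum_neg_distrib]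
  congr 1
  refine Finset.sum_congr rfl fun l hl ↦ ?_
  rw [R.dlSum_xgen_zero (Nat.succ_lt_succ (Finset.mem_range.1 hl)), map_sum]

lemma pSum_xgen_succ {r s : ℕ} (hs : Fin s → H) (as : Fin (r + 1) → A) {g : XSum k A H E}
    (hg : g = XSum.of (r + 1) s (xgen 1 hs as 1)) :
    R.pSum g = -R.sigSum (R.pSum (R.rowSum g + R.pSum g)) := by
  have hrow : R.pSum (R.rowSum g) = ∑ l ∈ Finset.range s, R.dlSum (l + 1) (R.dlSum 0 g) := by
    rw [hg, dlSum_zero_of_succ, rowSum_of_succ, pSum_of]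
  rw [map_add, hrow, hg, pSum_pSum_of, pSum_of, ← Finset.sum_add_distrib, map_sum,
    ← Finset.sum_neg_distrib]
  refine Finset.sum_congr rfl fun l hl ↦ ?_
  rw [R.dlSum_xgen_succ (Finset.mem_range.1 hl), Finset.sum_range_succ', map_add, map_sum,
    add_comm, Nat.sub_zero]
  simp only [Nat.add_sub_add_right]

lemma pSum_xgen {r s : ℕ} (hs : Fin s → H) (as : Fin r → A) {g : XSum k A H E}
    (hg : g = XSum.of r s (xgen 1 hs as 1)) :
    R.pSum g = -S.sectionSum (R.delSum (R.muSum g)) -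
      R.sigSum (R.pSum (R.rowSum g + R.pSum g)) := by
  rcases r with _ | r
  · obtain rfl : as = fun i : Fin 0 ↦ i.elim0 := funext fun i ↦ i.elim0
    have hrow : R.rowSum g = 0 := hg ▸ R.rowSum_of_zero _
    rw [hrow, zero_add, ← R.pSum_xgen_zero hs hg]
  · have hmu : R.muSum g = 0 := hg ▸ R.muSum_of_pos r.succ_pos _
    rw [hmu, map_zero, map_zero, neg_zero, zero_sub, ← R.pSum_xgen_succ hs as hg]

lemma muSum_pSum (x : XSum k A H E) : R.muSum (R.pSum x) = -R.delSum (R.muSum x) := by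
  suffices h : R.muSum ∘ₗ R.pSum = -(R.delSum ∘ₗ R.muSum) from LinearMap.congr_fun h x
  refine XSum.hom_ext fun r s x ↦ ?_
  have hpos {l : ℕ} (h : 0 < r + l) : R.muSum (R.dlSum (l + 1) (XSum.of r s x)) = 0 := by
    rw [dlSum_of, R.muSum_of_pos (show 0 < r + (l + 1) - 1 from h)]
  rw [LinearMap.neg_apply, LinearMap.comp_apply, LinearMap.comp_apply, pSum_of, map_sum]
  rcases r with _ | r
  · rw [muSum_of_zero]
    rcases s with _ | s
    · rw [delSum_of_zero, neg_zero, Finset.range_zero, Finset.sum_empty]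
    · rw [Finset.sum_range_succ', Finset.sum_eq_zero fun l _ ↦ hpos (by omega), zero_add,
        dlSum_one_of_zero, muSum_of_zero, muE_d1, delSum_of_succ, map_neg]
  · rw [R.muSum_of_pos r.succ_pos, map_zero, neg_zero, Finset.sum_eq_zero fun l _ ↦ hpos (by omega)]

lemma delSum_delSum (y : YSum k H E) : R.delSum (R.delSum y) = 0 := by
  suffices h : R.delSum ∘ₗ R.delSum = 0 from LinearMap.congr_fun h y
  refine YSum.hom_ext fun s y ↦ ?_
  rw [LinearMap.comp_apply, LinearMap.zero_apply]
  rcases s with _ | _ | s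
  · rw [delSum_of_zero, map_zero]
  · rw [delSum_of_succ, delSum_of_zero]
  · rw [delSum_of_succ, delSum_of_succ, ← LinearMap.comp_apply (R.delE s), delE_comp_delE,
      LinearMap.zero_apply, map_zero]

/-- The `d^l_{rs}` with `l ≥ 1` as a perturbation of the rows. -/
def perturbation : R.rowContraction.Perturbation where
  p := R.pSum
  del := R.delSum
  F := XSum.filtration k A H E
  F_mono := XSum.filtration_mono
  F_zero := XSum.filtration_zero
  exists_mem_F := XSum.exists_mem_filtration
  p_mem := XSum.apply_mem_filtration fun r s x hs ↦ by
    rw [pSum_of]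
    refine sum_mem fun l hl ↦ ?_
    rw [dlSum_of]
    exact XSum.of_mem_filtration (by have := Finset.mem_range.1 hl; omega) _
  d_mem := XSum.apply_mem_filtration fun r s x hs ↦ by
    rcases r with _ | r
    · exact (R.rowSum_of_zero x).symm ▸ zero_mem _
    · exact (R.rowSum_of_succ x).symm ▸ XSum.of_mem_filtration hs _
  σ_mem := XSum.apply_mem_filtration fun r s x hs ↦
    (R.sigSum_of x).symm ▸ XSum.of_mem_filtration hs _
  μ_p := R.muSum_pSum
  del_del := R.delSum_delSum

lemma D_of {r s : ℕ} (x : Xc k A H E r s) :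
    R.perturbation.D (XSum.of r s x) =
      R.rowSum (XSum.of r s x) + ∑ l ∈ Finset.range s, R.dlSum (l + 1) (XSum.of r s x) :=
  congrArg (R.rowSum _ + ·) (R.pSum_of x)

lemma D_of_eq_sum {r s : ℕ} (x : Xc k A H E r s) :
    R.perturbation.D (XSum.of r s x) =
      ∑ l ∈ Finset.range (s + 1), if 0 < r + l then R.dlSum l (XSum.of r s x) else 0 := by
  rw [D_of, Finset.sum_range_succ', add_comm, Finset.sum_congr rfl fun l _ ↦ if_pos (by omega)]
  congr 1
  rcases r with _ | r
  · exact R.rowSum_of_zero x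
  · exact (R.dlSum_zero_of_succ x).symm

lemma D_right (z : E) (x : XSum k A H E) :
    R.perturbation.D (XSum.right z x) = XSum.right z (R.perturbation.D x) := by
  suffices h : R.perturbation.D ∘ₗ XSum.right z = XSum.right z ∘ₗ R.perturbation.D from
    LinearMap.congr_fun h x
  refine XSum.hom_ext fun r s x ↦ ?_
  simp only [LinearMap.comp_apply, XSum.right_of, D_of_eq_sum, dlSum_of, dlE_rightX, map_sum,
    apply_ite (XSum.right z), map_zero]

lemma D_D_xgen {r s : ℕ} (hs : Fin s → H) (as : Fin r → A)
    (h : ∀ r' s', r' + s' < r + s →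
      ∀ x : Xc k A H E r' s', R.perturbation.D (R.perturbation.D (XSum.of r' s' x)) = 0) :
    R.perturbation.D (R.perturbation.D (XSum.of r s (xgen 1 hs as 1))) = 0 := by
  refine R.perturbation.D_D_eq_zero_of_recursion (R.pSum_xgen hs as rfl) ?_
  rw [D_of_eq_sum R (xgen 1 hs as 1), map_sum, map_sum]
  refine Finset.sum_eq_zero fun l hl ↦ ?_
  split_ifs with hrl
  · rw [dlSum_of, h _ _ (by have := Finset.mem_range.1 hl; omega)]
  · rw [map_zero, map_zero]

lemma D_D (x : XSum k A H E) : R.perturbation.D (R.perturbation.D x) = 0 := by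
  suffices h : ∀ n r s, r + s = n →
      R.perturbation.D ∘ₗ R.perturbation.D ∘ₗ XSum.of r s = 0 from
    LinearMap.congr_fun (f := R.perturbation.D ∘ₗ R.perturbation.D) (g := 0)
      (XSum.hom_ext fun r s ↦ LinearMap.congr_fun (h _ r s rfl)) x
  intro n
  induction n using Nat.strong_induction_on with
  | _ n ih =>
    rintro r s rfl
    refine hom_ext_rightX_xgen fun z hs as ↦ ?_
    have := R.D_D_xgen hs as fun r' s' h ↦ LinearMap.congr_fun (ih _ h r' s' rfl)
    rw [LinearMap.comp_apply, LinearMap.comp_apply, ← XSum.right_of, D_right, D_right, this,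
      map_zero, LinearMap.zero_apply]

end ResData

end TotalDifferential

section TotalComplex

variable {E : Type} [Ring E] [Algebra k E]

namespace XT

/-- The inclusion of the summand `X_{n-s,s}` of `X_n`. -/
def of (n : ℕ) (s : Fin (n + 1)) : Xc k A H E (n - s) s →ₗ[E] XT k A H E n :=
  DirectSum.lof E (Fin (n + 1)) (fun s ↦ Xc k A H E (n - s) s) s

variable {n : ℕ}

lemma hom_ext {K N : Type} [Semiring K] [AddCommMonoid N] [Module K N]
    [∀ s : Fin (n + 1), Module K (Xc k A H E (n - s) s)] {f g : XT k A H E n →ₗ[K] N}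
    (h : ∀ s x, f (of n s x) = g (of n s x)) : f = g :=
  DirectSum.linearMap_ext K fun s ↦ LinearMap.ext (h s)

lemma toModule_of {N : Type} [AddCommGroup N] [Module k N]
    (f : ∀ s : Fin (n + 1), Xc k A H E (n - s) s →ₗ[k] N) (s : Fin (n + 1))
    (x : Xc k A H E (n - s) s) : DirectSum.toModule k (Fin (n + 1)) N f (of n s x) = f s x :=
  DirectSum.toModule_lof k (φ := f) s x

lemma lT_apply (e : E) (x : XT k A H E n) : lT e n x = e • x := by
  induction x using DirectSum.induction_on with
  | zero => rw [map_zero, smul_zero]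
  | of s x => exact (toModule_of _ s x).trans ((of n s).map_smul e x)
  | add x y hx hy => rw [map_add, smul_add, hx, hy]

lemma rT_of (z : E) (s : Fin (n + 1)) (x : Xc k A H E (n - s) s) :
    rT z n (of n s x) = of n s (rightX z x) := toModule_of _ s x

/-- The inclusion of `X_n` into the sum of all the `X_{rs}`. -/
def inclusion (n : ℕ) : XT k A H E n →ₗ[E] XSum k A H E :=
  DirectSum.toModule E (Fin (n + 1)) _ fun s ↦ XSum.of (n - s) s

lemma inclusion_of (s : Fin (n + 1)) (x : Xc k A H E (n - s) s) :
    inclusion n (of n s x) = XSum.of (n - s) s x :=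
  DirectSum.toModule_lof E (φ := fun s : Fin (n + 1) ↦ XSum.of (n - s) s) s x

/-- The projection onto `X_n` of the sum of all the `X_{rs}`. -/
def projection (n : ℕ) : XSum k A H E →ₗ[E] XT k A H E n :=
  ∑ s : Fin (n + 1), of n s ∘ₗ
    DirectSum.component E (ℕ × ℕ) (fun p ↦ Xc k A H E p.1 p.2) (n - s, (s : ℕ))

lemma projection_apply (x : XSum k A H E) : projection n x = ∑ s : Fin (n + 1), of n s
    (DirectSum.component E (ℕ × ℕ) (fun p ↦ Xc k A H E p.1 p.2) (n - s, (s : ℕ)) x) :=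
  LinearMap.sum_apply _ _ x

lemma projection_of_of_ne {r s : ℕ} (h : r + s ≠ n) (x : Xc k A H E r s) :
    projection n (XSum.of r s x) = 0 := by
  rw [projection_apply]
  refine Finset.sum_eq_zero fun t _ ↦ (congrArg (of n t) ?_).trans (map_zero _)
  refine DirectSum.of_eq_of_ne (β := fun p : ℕ × ℕ ↦ Xc k A H E p.1 p.2) (r, s) _ x fun h' ↦ h ?_
  obtain ⟨rfl, rfl⟩ := Prod.mk.inj h'
  exact Nat.sub_add_cancel t.is_le

lemma projection_inclusion (x : XT k A H E n) : projection n (inclusion n x) = x := by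
  suffices h : projection n ∘ₗ inclusion n = LinearMap.id from LinearMap.congr_fun h x
  refine hom_ext fun s x ↦ ?_
  rw [LinearMap.comp_apply, inclusion_of, projection_apply, LinearMap.id_apply]
  refine (Finset.sum_eq_single s (fun t _ hts ↦ (congrArg (of n t) ?_).trans (map_zero _))
    fun h ↦ (h (Finset.mem_univ s)).elim).trans (congrArg (of n s) ?_)
  · exact DirectSum.of_eq_of_ne (β := fun p : ℕ × ℕ ↦ Xc k A H E p.1 p.2) (n - s, (s : ℕ)) _ x
      fun h ↦ hts (Fin.ext (congrArg Prod.snd h))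
  · exact DirectSum.component.lof_self E (M := fun p : ℕ × ℕ ↦ Xc k A H E p.1 p.2)
      (n - s, (s : ℕ)) x

lemma inclusion_injective : Function.Injective (inclusion (k := k) (A := A) (H := H) (E := E) n) :=
  Function.LeftInverse.injective projection_inclusion

lemma inclusion_projection_of {r s : ℕ} (h : r + s = n) (x : Xc k A H E r s) :
    inclusion n (projection n (XSum.of r s x)) = XSum.of r s x := by
  obtain rfl : r = n - s := by omega
  rw [← inclusion_of ⟨s, by omega⟩ x, projection_inclusion]

lemma inclusion_rT (z : E) (x : XT k A H E n) :
    inclusion n (rT z n x) = XSum.right z (inclusion n x) := by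
  induction x using DirectSum.induction_on with
  | zero => simp only [map_zero]
  | of s x =>
    refine (congrArg (inclusion n) (rT_of z s x)).trans ?_
    rw [inclusion_of, ← XSum.right_of, ← inclusion_of]
    rfl
  | add x y hx hy => simp only [map_add, hx, hy]

lemma inclusion_mem_filtration (x : XT k A H E n) :
    inclusion n x ∈ XSum.filtration k A H E (n + 1) := by
  induction x using DirectSum.induction_on with
  | zero => rw [map_zero]; exact zero_mem _
  | of s x => exact (inclusion_of s x).symm ▸ XSum.of_mem_filtration s.is_lt x
  | add x y hx hy => rw [map_add]; exact add_mem hx hy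

end XT

namespace ResData

variable {S : CrossedProduct k A H E} (R : ResData k A H E S)

open XT

lemma inclusion_dT {n : ℕ} (x : XT k A H E (n + 1)) :
    inclusion n (dT R n x) = R.perturbation.D (inclusion (n + 1) x) := by
  induction x using DirectSum.induction_on with
  | zero => simp only [map_zero]
  | of s x =>
    refine (congrArg (inclusion (A := A) (H := H) (E := E) n) (toModule_of _ s x)).trans ?_
    refine .trans ?_ (congrArg R.perturbation.D (inclusion_of s x)).symm
    rw [D_of_eq_sum, Finset.sum_range, LinearMap.sum_apply, map_sum]
    refine Finset.sum_congr rfl fun l _ ↦ ?_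
    split_ifs with h
    · rw [dlSum_of]
      exact (inclusion_of _ _).trans (XSum.of_xcast _ rfl _)
    · rw [LinearMap.zero_apply, map_zero]
  | add x y hx hy => simp only [map_add, hx, hy]

/-- The total differential as an `E`-linear map. -/
def dTE (n : ℕ) : XT k A H E (n + 1) →ₗ[E] XT k A H E n :=
  { dT R n with
    map_smul' e x := inclusion_injective <| by
      simp only [AddHom.toFun_eq_coe, LinearMap.coe_toAddHom, RingHom.id_apply, inclusion_dT,
        map_smul] }

lemma dTE_apply {n : ℕ} (x : XT k A H E (n + 1)) : R.dTE n x = dT R n x := rfl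

lemma projection_D {n : ℕ} (x : XSum k A H E) :
    projection n (R.perturbation.D x) = R.dTE n (projection (n + 1) x) := by
  suffices h : projection n ∘ₗ R.perturbation.D = R.dTE n ∘ₗ projection (n + 1) from
    LinearMap.congr_fun h x
  refine XSum.hom_ext fun r s x ↦ ?_
  rw [LinearMap.comp_apply, LinearMap.comp_apply]
  by_cases h : r + s = n + 1
  · rw [← projection_inclusion (R.dTE n _), dTE_apply, inclusion_dT, inclusion_projection_of h]
  · rw [projection_of_of_ne h, map_zero, D_of_eq_sum, map_sum]
    refine Finset.sum_eq_zero fun l hl ↦ ?_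
    have := Finset.mem_range_succ_iff.1 hl
    split_ifs with hrl
    · rw [dlSum_of, projection_of_of_ne (by omega)]
    · rw [map_zero]

lemma dTE_comp_dTE (n : ℕ) : R.dTE n ∘ₗ R.dTE (n + 1) = 0 := LinearMap.ext fun x ↦ by
  rw [LinearMap.comp_apply, LinearMap.zero_apply, ← projection_inclusion (R.dTE n _), dTE_apply,
    dTE_apply, inclusion_dT, inclusion_dT, D_D, map_zero]

lemma dT_rT (z : E) (n : ℕ) (x : XT k A H E (n + 1)) :
    dT R n (rT z (n + 1) x) = rT z n (dT R n x) :=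
  inclusion_injective <| by rw [inclusion_dT, inclusion_rT, D_right, inclusion_rT, inclusion_dT]

lemma augSum_delSum (y : YSum k H E) : S.augSum (R.delSum y) = 0 := by
  suffices h : S.augSum ∘ₗ R.delSum = 0 from LinearMap.congr_fun h y
  refine YSum.hom_ext fun s y ↦ ?_
  rw [LinearMap.comp_apply, LinearMap.zero_apply]
  rcases s with _ | _ | s
  · rw [delSum_of_zero, map_zero]
  · rw [delSum_of_succ, S.augSum_of_zero, augY_delE_zero]
  · rw [delSum_of_succ, S.augSum_of_succ]

/-- The augmentation `-μ : X_0 → E`. -/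
def aug : XT k A H E 0 →ₗ[E] E := S.augSum ∘ₗ R.muSum ∘ₗ inclusion 0

lemma aug_comp_dTE : R.aug ∘ₗ R.dTE 0 = 0 := LinearMap.ext fun x ↦ by
  have hμ : R.muSum (R.perturbation.D (inclusion 1 x)) = -R.delSum (R.muSum (inclusion 1 x)) :=
    R.perturbation.μ_D _
  rw [aug, LinearMap.comp_apply, LinearMap.comp_apply, LinearMap.comp_apply, dTE_apply,
    inclusion_dT, hμ, map_neg, augSum_delSum, neg_zero, LinearMap.zero_apply]

lemma augSum_muSum_of {r s : ℕ} (h : 0 < r + s) (x : Xc k A H E r s) :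
    S.augSum (R.muSum (XSum.of r s x)) = 0 := by
  rcases r with _ | r
  · obtain ⟨s, rfl⟩ := Nat.exists_eq_add_one.2 (h.trans_eq (zero_add s))
    rw [muSum_of_zero, S.augSum_of_succ]
  · rw [R.muSum_of_pos r.succ_pos, map_zero]

lemma augSum_muSum_inclusion_succ {n : ℕ} (x : XT k A H E (n + 1)) :
    S.augSum (R.muSum (inclusion (n + 1) x)) = 0 := by
  suffices h : S.augSum ∘ₗ R.muSum ∘ₗ inclusion (n + 1) = 0 from LinearMap.congr_fun h x
  refine hom_ext fun s x ↦ ?_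
  rw [LinearMap.comp_apply, LinearMap.comp_apply, inclusion_of, LinearMap.zero_apply,
    R.augSum_muSum_of (by omega)]

lemma D_inclusion_zero (x : XT k A H E 0) : R.perturbation.D (inclusion 0 x) = 0 := by
  suffices h : R.perturbation.D ∘ₗ inclusion 0 = 0 from LinearMap.congr_fun h x
  refine hom_ext fun s x ↦ ?_
  rw [LinearMap.comp_apply, inclusion_of, LinearMap.zero_apply, D_of_eq_sum]
  refine Finset.sum_eq_zero fun l hl ↦ if_neg ?_
  have := Finset.mem_range_succ_iff.1 hl
  omega

lemma exists_section_dTE (n : ℕ) : ∃ t : XT k A H E n →ₗ[E] XT k A H E (n + 1), ∀ x,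
    R.perturbation.D (inclusion n x) = 0 → S.augSum (R.muSum (inclusion n x)) = 0 →
      R.dTE n (t x) = x := by
  have hη {m : ℕ} {x : XSum k A H E} : x ∈ XSum.filtration k A H E m →
      S.sectionSum (YSum.homotopy k H E (R.muSum x)) ∈ XSum.filtration k A H E (m + 1) := by
    refine XSum.apply_mem_filtration (f := S.sectionSum ∘ₗ YSum.homotopy k H E ∘ₗ R.muSum)
      fun r s x hs ↦ ?_
    rw [LinearMap.comp_apply, LinearMap.comp_apply]
    rcases r with _ | r
    · rw [muSum_of_zero, YSum.homotopy_of, S.sectionSum_of]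
      exact XSum.of_mem_filtration (Nat.succ_lt_succ hs) _
    · rw [R.muSum_of_pos r.succ_pos, map_zero, map_zero]
      exact zero_mem _
  obtain ⟨t, ht⟩ := R.perturbation.exists_section R.D_D hη (n + 1)
  refine ⟨projection (n + 1) ∘ₗ t ∘ₗ inclusion n, fun x hD hε ↦ ?_⟩
  have hdel : R.delSum (R.muSum (inclusion n x)) = 0 := by
    have := R.perturbation.μ_D (inclusion n x)
    rw [hD, map_zero] at this
    exact neg_eq_zero.1 this.symm
  rw [LinearMap.comp_apply, ← projection_D, LinearMap.comp_apply,
    ht _ (inclusion_mem_filtration x) hD (R.delSum_homotopy hdel hε), projection_inclusion]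

/-- The contracting homotopy in degree `-1`. -/
def augSection (S : CrossedProduct k A H E) : E →ₗ[E] XT k A H E 0 :=
  projection 0 ∘ₗ S.sectionSum ∘ₗ YSum.of 0 ∘ₗ HopfBar.sectionY k H E

lemma aug_comp_augSection : R.aug ∘ₗ augSection S = LinearMap.id := LinearMap.ext fun e ↦ by
  simp only [aug, augSection, LinearMap.comp_apply, LinearMap.id_apply, S.sectionSum_of]
  rw [inclusion_projection_of (zero_add 0), muSum_of_zero, muE_sectionX, S.augSum_of_zero,
    S.augY_sectionY]

lemma exists_contractingHomotopy : ∃ σ : ∀ n, XT k A H E n →ₗ[E] XT k A H E (n + 1),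
    augSection S ∘ₗ R.aug + R.dTE 0 ∘ₗ σ 0 = LinearMap.id ∧
      ∀ n, σ n ∘ₗ R.dTE n + R.dTE (n + 1) ∘ₗ σ (n + 1) = LinearMap.id := by
  refine HopfCrossed.exists_contractingHomotopy R.aug_comp_dTE R.dTE_comp_dTE
    R.aug_comp_augSection ?_ fun n ↦ ?_
  · obtain ⟨t, ht⟩ := R.exists_section_dTE 0
    exact ⟨t, fun x ↦ ht x (R.D_inclusion_zero x)⟩
  · obtain ⟨t, ht⟩ := R.exists_section_dTE (n + 1)
    refine ⟨t, fun x hx ↦ ht x ?_ (R.augSum_muSum_inclusion_succ x)⟩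
    rw [← inclusion_dT, ← dTE_apply, hx, map_zero]

end ResData

end TotalComplex

section Resolution

variable {E : Type} [Ring E] [Algebra k E]

namespace XT

variable (k A H) in
/-- The summand `H̄^s ⊗ Ā^{n-s}` of the module `V` with `X_n ≅ E ⊗ V ⊗ E`. -/
abbrev Gen (n : ℕ) (s : Fin (n + 1)) : Type := Tpow k (Qbar k H) s ⊗[k] Tpow k (Qbar k A) (n - s)

/-- The isomorphism `E ⊗ V ⊗ E ≅ X_n`. -/
def genEquiv (n : ℕ) : E ⊗[k] ((⨁ s, Gen k A H n s) ⊗[k] E) ≃ₗ[E] XT k A H E n :=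
  TensorProduct.AlgebraTensorModule.congr (.refl E E)
      (TensorProduct.directSumLeft k k (Gen k A H n) E) ≪≫ₗ
    TensorProduct.directSumRight k E E (fun s ↦ Gen k A H n s ⊗[k] E) ≪≫ₗ
    DFinsupp.mapRange.linearEquiv fun _ ↦
      TensorProduct.AlgebraTensorModule.congr (.refl E E) (TensorProduct.assoc k _ _ _)

lemma genEquiv_tmul {n : ℕ} (s : Fin (n + 1)) (e z : E) (t : Tpow k (Qbar k H) s)
    (a : Tpow k (Qbar k A) (n - s)) :
    genEquiv n (e ⊗ₜ (DirectSum.lof k _ (Gen k A H n) s (t ⊗ₜ a) ⊗ₜ z)) =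
      of n s (e ⊗ₜ (t ⊗ₜ (a ⊗ₜ z))) := by
  rw [genEquiv, LinearEquiv.trans_apply, LinearEquiv.trans_apply,
    TensorProduct.AlgebraTensorModule.congr_tmul, TensorProduct.directSumLeft_tmul_lof,
    TensorProduct.directSumRight_tmul_lof]
  exact DFinsupp.mapRange_single (hf := fun _ ↦ map_zero _)

lemma genEquiv_smul (z : E) {n : ℕ} (x : E ⊗[k] ((⨁ s, Gen k A H n s) ⊗[k] E)) :
    genEquiv n (TensorProduct.map (LinearMap.mulLeft k z) LinearMap.id x) =
      lT z n (genEquiv n x) := by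
  rw [lT_apply, ← map_smul]
  rfl

lemma genEquiv_map_mulRight (z : E) {n : ℕ} (x : E ⊗[k] ((⨁ s, Gen k A H n s) ⊗[k] E)) :
    genEquiv n (TensorProduct.map LinearMap.id
        (TensorProduct.map LinearMap.id (LinearMap.mulRight k z)) x) =
      rT z n (genEquiv n x) := by
  suffices h : (genEquiv n).toLinearMap.restrictScalars k ∘ₗ TensorProduct.map LinearMap.id
      (TensorProduct.map LinearMap.id (LinearMap.mulRight k z)) =
        rT z n ∘ₗ (genEquiv n).toLinearMap.restrictScalars k from LinearMap.congr_fun h x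
  refine TensorProduct.ext <| LinearMap.ext fun e ↦ TensorProduct.ext <|
    DirectSum.linearMap_ext k fun s ↦ TensorProduct.ext <| LinearMap.ext fun t ↦
      LinearMap.ext fun a ↦ LinearMap.ext fun w ↦ ?_
  exact (genEquiv_tmul s e (w * z) t a).trans (.trans (rT_of z s (e ⊗ₜ (t ⊗ₜ (a ⊗ₜ w)))).symm
    (congrArg (rT z n) (genEquiv_tmul s e w t a).symm))

lemma comp_lT {m n : ℕ} (f : XT k A H E m →ₗ[E] XT k A H E n) (e : E) :
    f.restrictScalars k ∘ₗ lT e m = lT e n ∘ₗ f.restrictScalars k := LinearMap.ext fun x ↦ by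
  rw [LinearMap.comp_apply, LinearMap.comp_apply, lT_apply, lT_apply]
  exact map_smul f e x

end XT

namespace ResData

variable {S : CrossedProduct k A H E} (R : ResData k A H E S)

lemma aug_of_xgen (e z : E) (hs : Fin 0 → H) (as : Fin 0 → A) :
    R.aug (XT.of 0 0 (xgen e hs as z)) = -(e * z) := by
  rw [aug, LinearMap.comp_apply, LinearMap.comp_apply, XT.inclusion_of]
  refine (congrArg S.augSum (R.muSum_of_zero _)).trans ?_
  refine (congrArg (S.augSum ∘ₗ YSum.of 0) (R.muE_zero_tmul e z)).trans ?_
  rw [LinearMap.comp_apply, S.augSum_of_zero, map_smul, S.augY_shiftE, smul_neg, smul_eq_mul]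

lemma multT_of (mult : Xc k A H E 0 0 →ₗ[k] E) (x : Xc k A H E 0 0) :
    multT mult (XT.of 0 0 x) = mult x :=
  XT.toModule_of _ 0 x

lemma aug_eq_neg_multT {mult : Xc k A H E 0 0 →ₗ[k] E}
    (hmult : ∀ e e' : E,
      mult (xgen e (fun i : Fin 0 ↦ i.elim0) (fun i : Fin 0 ↦ i.elim0) e') = e * e') :
    R.aug.restrictScalars k = -multT mult := by
  have h : R.aug.restrictScalars k ∘ₗ (XT.of 0 0).restrictScalars k = -mult := by
    refine TensorProduct.ext <| LinearMap.ext fun e ↦ TensorProduct.ext <|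
      Tpow.hom_ext_qbar fun (hs : Fin 0 → H) ↦ TensorProduct.ext <|
        Tpow.hom_ext_qbar fun (as : Fin 0 → A) ↦ LinearMap.ext fun z ↦ ?_
    obtain rfl : hs = fun i : Fin 0 ↦ i.elim0 := Subsingleton.elim _ _
    obtain rfl : as = fun i : Fin 0 ↦ i.elim0 := Subsingleton.elim _ _
    exact (R.aug_of_xgen e z _ _).trans (congrArg Neg.neg (hmult e z).symm)
  refine XT.hom_ext fun s x ↦ ?_
  obtain rfl : s = 0 := Fin.fin_one_eq_zero s
  exact (LinearMap.congr_fun h x).trans (congrArg Neg.neg (multT_of mult x).symm)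

end ResData

end Resolution

section Statement1

variable {k A H E : Type} [CommRing k] [Ring A] [Algebra k A] [Ring H] [HopfAlgebra k H]
  [Ring E] [Algebra k E]

/-- **Theorem 1.1.1: the resolution `(X_*, d_*)` of a crossed product.**
Let `E = A #_f H` be a crossed product and let `(X_*, d_*)` be given by
`X_n = ⊕_{r+s=n} E ⊗ H̄^{⊗s} ⊗ Ā^{⊗r} ⊗ E` and `d_n = ∑_{r+s=n, r+l>0} ∑_{l=0}^s d^l_{rs}`,
with `μ : X_0 = E ⊗ E → E` the multiplication map.  Then
`E ←(-μ)− X_0 ← X_1 ← X_2 ← ⋯` is a relative projective resolution of `E` as an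
`E`-bimodule: it is a complex of `E`-bimodules, each `X_n` is a relatively projective
`E`-bimodule (isomorphic to a bimodule of the form `E ⊗ V ⊗ E`), and the augmented
complex is contractible as a complex of left `E`-modules. -/
theorem crossed_product_resolution
    (S : CrossedProduct k A H E) (R : ResData k A H E S)
    (mult : Xc k A H E 0 0 →ₗ[k] E)
    (hmult : ∀ e e' : E,
      mult (xgen e (fun i : Fin 0 => i.elim0) (fun i : Fin 0 => i.elim0) e') = e * e') :
    -- `(X_*, d_*)` is a complex and `μ ∘ d₁ = 0`
    (multT mult ∘ₗ dT R 0 = 0) ∧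
    (∀ n : ℕ, dT R n ∘ₗ dT R (n + 1) = 0) ∧
    -- the differentials are maps of `E`-bimodules
    (∀ (n : ℕ) (e : E), dT R n ∘ₗ lT e (n + 1) = lT e n ∘ₗ dT R n ∧
      dT R n ∘ₗ rT e (n + 1) = rT e n ∘ₗ dT R n) ∧
    -- each `X_n` is relatively projective: as an `E`-bimodule it has the form `E ⊗ V ⊗ E`
    (∀ n : ℕ, ∃ (V : Type) (_ : AddCommGroup V) (_ : Module k V)
      (φ : XT k A H E n ≃ₗ[k] E ⊗[k] (V ⊗[k] E)),
      (∀ (e : E) (x : XT k A H E n),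
        φ (lT e n x) = TensorProduct.map (LinearMap.mulLeft k e) LinearMap.id (φ x)) ∧
      (∀ (e : E) (x : XT k A H E n),
        φ (rT e n x) =
          TensorProduct.map LinearMap.id
            (TensorProduct.map LinearMap.id (LinearMap.mulRight k e)) (φ x))) ∧
    -- the augmented complex is contractible as a complex of left `E`-modules
    (∃ (σ₀ : E →ₗ[k] XT k A H E 0) (σ : ∀ n : ℕ, XT k A H E n →ₗ[k] XT k A H E (n + 1)),
      ((-(multT mult)) ∘ₗ σ₀ = LinearMap.id) ∧
      (σ₀ ∘ₗ (-(multT mult)) + dT R 0 ∘ₗ σ 0 = LinearMap.id) ∧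
      (∀ n : ℕ, σ n ∘ₗ dT R n + dT R (n + 1) ∘ₗ σ (n + 1) = LinearMap.id) ∧
      (∀ e : E, σ₀ ∘ₗ LinearMap.mulLeft k e = lT e 0 ∘ₗ σ₀) ∧
      (∀ (n : ℕ) (e : E), σ n ∘ₗ lT e n = lT e (n + 1) ∘ₗ σ n)) := by
  have haug := R.aug_eq_neg_multT hmult
  obtain ⟨σ, hσ₀, hσ⟩ := R.exists_contractingHomotopy
  refine ⟨?_, fun n ↦ congrArg (LinearMap.restrictScalars k) (R.dTE_comp_dTE n),
    fun n e ↦ ⟨XT.comp_lT (R.dTE n) e, LinearMap.ext (R.dT_rT e n)⟩,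
    fun n ↦ ⟨_, _, _, (XT.genEquiv n).symm.restrictScalars k, fun e x ↦ ?_, fun e x ↦ ?_⟩,
    (ResData.augSection S).restrictScalars k, fun n ↦ (σ n).restrictScalars k, ?_, ?_,
    fun n ↦ congrArg (LinearMap.restrictScalars k) (hσ n),
    fun e ↦ LinearMap.ext fun x ↦ ?_, fun n ↦ XT.comp_lT (σ n)⟩
  · rw [← neg_eq_zero, ← LinearMap.neg_comp, ← haug]
    exact congrArg (LinearMap.restrictScalars k) R.aug_comp_dTE
  · exact (XT.genEquiv n).symm_apply_eq.2 (by rw [XT.genEquiv_smul]; simp)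
  · exact (XT.genEquiv n).symm_apply_eq.2 (by rw [XT.genEquiv_map_mulRight]; simp)
  · rw [← haug]
    exact congrArg (LinearMap.restrictScalars k) R.aug_comp_augSection
  · rw [← haug]
    exact congrArg (LinearMap.restrictScalars k) hσ₀
  · exact (map_smul (ResData.augSection S) e x).trans (XT.lT_apply e _).symm

end Statement1

end HopfCrossed
end
end
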